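/- arXiv:1506.04359 — 7 statements merged into one kernel-verified Lean document; each statement's English description precedes it below -/
import Mathlib

section
/- Let X be a set, let n, c ≥ 1, let x_1,…,x_n ∈ X, and let H be a nonempty countable set of functions h = (h_1,…,h_c) : X → ℝ^c. Assume that the two suprema below are integrable with respect to the relevant Gaussian product measures. Then E[sup_{h∈H} Σ_{i=1}^n g_i · max{h_1(x_i),…,h_c(x_i)}] ≤ E[sup_{h∈H} Σ_{i=1}^n Σ_{j=1}^c g_{ij} · h_j(x_i)], where on the left g_1,…,g_n are i.i.d. standard Gaussian N(0,1) random variables and on the right g_{ij} (i = 1,…,n, j = 1,…,c) are i.i.d. standard Gaussian N(0,1) random variables. -/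
open MeasureTheory ProbabilityTheory

noncomputable abbrev gam : Measure ℝ := gaussianReal 0 1

lemma dominance {A B : Type*} [MeasurableSpace A] [MeasurableSpace B] (μ : Measure A) (ν : Measure B)
    (f : A → ℝ) (g : B → ℝ) (hf : Integrable f μ) (hg : Integrable g ν)
    (hf0 : ∀ a, 0 ≤ f a) (hg0 : ∀ b, 0 ≤ g b)
    (h : ∀ t : ℝ, μ {a | t < f a} ≤ ν {b | t < g b}) : ∫ a, f a ∂μ ≤ ∫ b, g b ∂ν := by
  have e1 := ofReal_integral_eq_lintegral_ofReal hf (ae_of_all _ hf0)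
  have e2 := ofReal_integral_eq_lintegral_ofReal hg (ae_of_all _ hg0)
  rw [lintegral_eq_lintegral_meas_lt _ (ae_of_all _ hf0) hf.aemeasurable] at e1
  rw [lintegral_eq_lintegral_meas_lt _ (ae_of_all _ hg0) hg.aemeasurable] at e2
  have : ENNReal.ofReal (∫ a, f a ∂μ) ≤ ENNReal.ofReal (∫ b, g b ∂ν) := by
    rw [e1, e2]; exact lintegral_mono fun t => h t
  exact (ENNReal.ofReal_le_ofReal_iff (integral_nonneg hg0)).1 this

lemma int_iSup {A K : Type*} [MeasurableSpace A] [Fintype K] [Nonempty K] (μ : Measure A)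
    (f : K → A → ℝ) (hf : ∀ k, Integrable (f k) μ) : Integrable (fun a => ⨆ k, f k a) μ := by
  have : Integrable (Finset.univ.sup' Finset.univ_nonempty f) μ := by
    apply Finset.sup'_induction (p := fun F : A → ℝ => Integrable F μ)
    · intro a ha b hb; exact ha.sup hb
    · intro k _; exact hf k
  convert this using 1
  ext a
  rw [Finset.sup'_apply, Finset.sup'_univ_eq_ciSup]

lemma int_id : Integrable (fun x : ℝ => x) gam :=
  (memLp_id_gaussianReal 1).integrable le_rfl

lemma int_eval {ι : Type*} [Fintype ι] (i : ι) :
    Integrable (fun g : ι → ℝ => g i) (Measure.pi fun _ : ι => gam) :=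
  (measurePreserving_eval (fun _ : ι => gam) i).integrable_comp_of_integrable int_id

lemma mp_neg : MeasurePreserving (fun x : ℝ => -x) gam gam :=
  ⟨measurable_neg, by simpa using gaussianReal_map_neg (μ := 0) (v := 1)⟩

lemma mp_sign {c : ℕ} (e : Fin c → ℤˣ) :
    MeasurePreserving (fun (g : Fin c → ℝ) j => ((e j : ℤ) : ℝ) * g j)
      (Measure.pi fun _ => gam) (Measure.pi fun _ => gam) := by
  refine measurePreserving_pi (fun _ => gam) (fun _ => gam) (f := fun j (x : ℝ) => ((e j : ℤ) : ℝ) * x) (fun j => ?_)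
  rcases Int.units_eq_one_or (e j) with h | h
  · simp only [h]; simpa using! MeasurePreserving.id gam
  · simp only [h]; simpa using mp_neg

noncomputable def Psi {K : Type*} {c : ℕ} (a : K → Fin c → ℝ) (r : K → ℝ) (G : Fin c → ℝ) : ℝ :=
  ⨆ k, ((∑ j, G j * a k j) + r k)

noncomputable def ff {K : Type*} {c : ℕ} (a : K → Fin c → ℝ) (r : K → ℝ) (j : Fin c) (u : ℝ) : ℝ :=
  ((⨆ k, (u * a k j + r k)) + ⨆ k, (-u * a k j + r k)) / 2

section
variable {K : Type*} [Fintype K] [Nonempty K] {c : ℕ} (a : K → Fin c → ℝ) (r : K → ℝ)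

lemma le_sup {K : Type*} [Finite K] (f : K → ℝ) (k : K) : f k ≤ ⨆ k, f k := le_ciSup (Set.finite_range f).bddAbove k

lemma ff_mono (j : Fin c) {u v : ℝ} (h : |u| ≤ |v|) : ff a r j u ≤ ff a r j v := by
  unfold ff
  obtain ⟨k, hk⟩ := exists_eq_ciSup_of_finite (f := fun k => u * a k j + r k)
  obtain ⟨l, hl⟩ := exists_eq_ciSup_of_finite (f := fun k => -u * a k j + r k)
  rw [← hk, ← hl]
  have h1 := le_sup (fun k => v * a k j + r k) k
  have h2 := le_sup (fun k => v * a k j + r k) l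
  have h3 := le_sup (fun k => -v * a k j + r k) k
  have h4 := le_sup (fun k => -v * a k j + r k) l
  beta_reduce at h1 h2 h3 h4 ⊢
  have : u * (a k j - a l j) ≤ |v * (a k j - a l j)| := by
    refine (le_abs_self _).trans ?_
    rw [abs_mul, abs_mul]; gcongr
  rcases abs_cases (v * (a k j - a l j)) with h | h <;> linarith

lemma ff_int (j : Fin c) : Integrable (ff a r j) gam := by
  unfold ff
  refine ((int_iSup _ _ fun k => ?_).add (int_iSup _ _ fun k => ?_)).div_const 2
  · exact (int_id.mul_const _).add (integrable_const _)
  · exact (int_id.neg.mul_const _).add (integrable_const _)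

lemma Psi_int : Integrable (Psi a r) (Measure.pi fun _ => gam) := by
  unfold Psi
  refine int_iSup _ _ fun k => ?_
  exact (integrable_finsetSum _ fun j _ => (int_eval j).mul_const _).add (integrable_const _)

/-- convexity of four sign points -/
lemma four (G : Fin c → ℝ) (j : Fin c) (G' : Fin c → ℝ) (hj : G' j = G j)
    (hne : ∀ i, i ≠ j → G' i = - G i) :
    4 * ff a r j (G j) ≤ Psi a r G + Psi a r G' + (Psi a r (-G) + Psi a r (-G')) := by
  have key : ∀ k, (∑ i, G i * a k i) + ∑ i, G' i * a k i = 2 * (G j * a k j) := by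
    intro k
    rw [← Finset.sum_add_distrib, Finset.sum_eq_single j]
    · rw [hj]; ring
    · intro i _ hi; rw [hne i hi]; ring
    · simp
  unfold ff
  obtain ⟨k, hk⟩ := exists_eq_ciSup_of_finite (f := fun k => G j * a k j + r k)
  obtain ⟨l, hl⟩ := exists_eq_ciSup_of_finite (f := fun k => -G j * a k j + r k)
  rw [← hk, ← hl]
  have h1 : _ ≤ Psi a r G := le_sup (fun k => (∑ j, G j * a k j) + r k) k
  have h2 : _ ≤ Psi a r G' := le_sup (fun k => (∑ j, G' j * a k j) + r k) k
  have h3 : _ ≤ Psi a r (-G) := le_sup (fun k => (∑ j, (-G) j * a k j) + r k) l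
  have h4 : _ ≤ Psi a r (-G') := le_sup (fun k => (∑ j, (-G') j * a k j) + r k) l
  simp only [Pi.neg_apply, neg_mul, Finset.sum_neg_distrib] at h1 h2 h3 h4 ⊢
  linarith [key k, key l]

lemma sign_avg (G : Fin c → ℝ) (j : Fin c) :
    (Fintype.card (Fin c → ℤˣ) : ℝ) * ff a r j (G j) ≤
      ∑ e : Fin c → ℤˣ, Psi a r (fun i => ((e i : ℤ) : ℝ) * G i) := by
  classical
  set P : (Fin c → ℤˣ) → ℝ := fun e => Psi a r (fun i => ((e i : ℤ) : ℝ) * G i) with hP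
  let d : Fin c → ℤˣ := Function.update (fun _ => -1) j 1
  have s1 : ∑ e, P (d * e) = ∑ e, P e := Equiv.sum_comp (Equiv.mulLeft d) P
  have s2 : ∑ e, P (-1 * e) = ∑ e, P e := Equiv.sum_comp (Equiv.mulLeft (-1)) P
  have s3 : ∑ e, P (-1 * (d * e)) = ∑ e, P e := by
    rw [← s1]; simpa [mul_assoc] using (Equiv.sum_comp (Equiv.mulLeft d) (fun e => P (-1 * e))).trans (s2.trans s1.symm)
  have : ∑ e : Fin c → ℤˣ, 4 * ff a r j (G j) ≤
      ∑ e, (P e + P (d * e) + (P (-1 * e) + P (-1 * (d * e)))) := by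
    refine Finset.sum_le_sum fun e _ => ?_
    have hff : ff a r j (G j) ≤ ff a r j (((e j : ℤ) : ℝ) * G j) := by
      apply ff_mono
      rcases Int.units_eq_one_or (e j) with h | h <;> simp [h]
    have := four a r (fun i => ((e i : ℤ) : ℝ) * G i) j (fun i => (((d * e) i : ℤ) : ℝ) * G i)
      (by simp [d]) (by intro i hi; simp [d, hi])
    have n1 : P (-1 * e) = Psi a r (-(fun i => ((e i : ℤ) : ℝ) * G i)) := by
      simp only [hP]; congr 1; ext i; simp
    have n2 : P (-1 * (d * e)) = Psi a r (-(fun i => (((d * e) i : ℤ) : ℝ) * G i)) := by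
      simp only [hP]; congr 1; ext i; simp
    rw [n1, n2]
    linarith
  rw [Finset.sum_add_distrib, Finset.sum_add_distrib, Finset.sum_add_distrib, s1, s2, s3] at this
  simp only [Finset.sum_const, Finset.card_univ, nsmul_eq_mul] at this
  linarith

lemma one_left (hc : 1 ≤ c) (g : ℝ) :
    ((⨆ k, (g * (⨆ j, a k j) + r k)) + ⨆ k, (-g * (⨆ j, a k j) + r k)) / 2 ≤ ⨆ j, ff a r j g := by
  have : Nonempty (Fin c) := ⟨⟨0, hc⟩⟩
  obtain ⟨k, hk⟩ := exists_eq_ciSup_of_finite (f := fun k => g * (⨆ j, a k j) + r k)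
  obtain ⟨l, hl⟩ := exists_eq_ciSup_of_finite (f := fun k => -g * (⨆ j, a k j) + r k)
  rw [← hk, ← hl]
  obtain ⟨p, hp⟩ := exists_eq_ciSup_of_finite (f := a k)
  obtain ⟨q, hq⟩ := exists_eq_ciSup_of_finite (f := a l)
  have key : ∀ j, ff a r j g ≤ ⨆ j, ff a r j g := fun j => le_sup (fun j => ff a r j g) j
  have b : ∀ j, (g * a k j + r k) + (-g * a l j + r l) ≤ 2 * ff a r j g := by
    intro j
    have h1 := le_sup (fun k => g * a k j + r k) k
    have h2 := le_sup (fun k => -g * a k j + r k) l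
    unfold ff
    beta_reduce at h1 h2
    linarith
  simp only [← hp, ← hq]
  have e1 : a l p ≤ a l q := hq ▸ le_sup (a l) p
  have e2 : a k q ≤ a k p := hp ▸ le_sup (a k) q
  rcases le_total 0 g with h | h
  · have := b p
    have := key p
    have := mul_le_mul_of_nonneg_left e1 h
    linarith
  · have := b q
    have := key q
    have := mul_le_mul_of_nonpos_left e2 h
    linarith

lemma one_step (hc : 1 ≤ c) :
    ∫ g, (⨆ k, (g * (⨆ j, a k j) + r k)) ∂gam ≤
      ∫ G, (⨆ k, ((∑ j, G j * a k j) + r k)) ∂(Measure.pi fun _ : Fin c => gam) := by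
  have : Nonempty (Fin c) := ⟨⟨0, hc⟩⟩
  have iL : Integrable (fun g => ⨆ k, (g * (⨆ j, a k j) + r k)) gam :=
    int_iSup _ _ fun k => (int_id.mul_const _).add (integrable_const _)
  have iL' : Integrable (fun g => ⨆ k, (-g * (⨆ j, a k j) + r k)) gam :=
    int_iSup _ _ fun k => (int_id.neg.mul_const _).add (integrable_const _)
  have sym : ∫ g, (⨆ k, (-g * (⨆ j, a k j) + r k)) ∂gam = ∫ g, (⨆ k, (g * (⨆ j, a k j) + r k)) ∂gam :=
    mp_neg.integral_comp (Homeomorph.neg ℝ).measurableEmbedding (fun g => ⨆ k, (g * (⨆ j, a k j) + r k))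
  have iF : Integrable (fun g => ⨆ j, ff a r j g) gam := int_iSup _ _ (ff_int a r)
  have iM : Integrable (fun G : Fin c → ℝ => ⨆ j, ff a r j (G j)) (Measure.pi fun _ => gam) :=
    int_iSup _ _ fun j => (measurePreserving_eval (fun _ : Fin c => gam) j).integrable_comp_of_integrable (ff_int a r j)
  have A : ∫ g, (⨆ k, (g * (⨆ j, a k j) + r k)) ∂gam ≤ ∫ g, (⨆ j, ff a r j g) ∂gam := by
    have := integral_mono ((iL.add iL').div_const 2) iF (fun g => one_left a r hc g)
    have e : ∫ g, (((⨆ k, (g * (⨆ j, a k j) + r k)) + ⨆ k, (-g * (⨆ j, a k j) + r k)) / 2) ∂gam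
        = ∫ g, (⨆ k, (g * (⨆ j, a k j) + r k)) ∂gam := by
      rw [integral_div, integral_add iL iL', sym]; ring
    rw [← e]; exact this
  have B : ∫ g, (⨆ j, ff a r j g) ∂gam ≤
      ∫ G, (⨆ j, ff a r j (G j)) ∂(Measure.pi fun _ : Fin c => gam) := by
    set C : ℝ := ⨆ k, r k
    have f0 : ∀ j, ff a r j 0 = C := by intro j; simp [ff, C]
    have fC : ∀ j u, C ≤ ff a r j u := by
      intro j u; rw [← f0 j]; exact ff_mono a r j (by simp)
    have j0 : Fin c := ⟨0, hc⟩
    have := dominance gam (Measure.pi fun _ : Fin c => gam) (fun g => (⨆ j, ff a r j g) - C)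
      (fun G => (⨆ j, ff a r j (G j)) - C) (iF.sub (integrable_const _)) (iM.sub (integrable_const _))
      (fun g => sub_nonneg.2 ((fC j0 g).trans (le_sup (fun j => ff a r j g) j0)))
      (fun g => sub_nonneg.2 ((fC j0 (g j0)).trans (le_sup (fun j => ff a r j (g j)) j0))) ?_
    · rw [integral_sub iF (integrable_const _), integral_sub iM (integrable_const _)] at this
      simpa using this
    · intro t
      -- one superlevel set contains all the others
      have : ∃ j, ∀ i u, t + C < ff a r i u → t + C < ff a r j u := by
        have tot : ∀ i j : Fin c, {u | t + C < ff a r i u} ⊆ {u | t + C < ff a r j u} ∨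
            {u | t + C < ff a r j u} ⊆ {u | t + C < ff a r i u} := by
          intro i j
          by_contra hcon
          push Not at hcon
          obtain ⟨h1, h2⟩ := hcon
          obtain ⟨u, hu, hu'⟩ := Set.not_subset.1 h1
          obtain ⟨v, hv, hv'⟩ := Set.not_subset.1 h2
          simp only [Set.mem_ofPred_eq] at hu hu' hv hv'
          rcases le_total |u| |v| with h | h
          · exact hv' (hu.trans_le (ff_mono a r i h))
          · exact hu' (hv.trans_le (ff_mono a r j h))
        obtain ⟨j, -, hj⟩ := Set.Finite.exists_maximalFor
          (fun j : Fin c => {u | t + C < ff a r j u}) Set.univ Set.finite_univ Set.univ_nonempty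
        refine ⟨j, fun i u hu => ?_⟩
        rcases tot i j with h | h
        · exact h hu
        · exact hj (Set.mem_univ i) h hu
      obtain ⟨j, hj⟩ := this
      have m : NullMeasurableSet {u | t + C < ff a r j u} gam :=
        nullMeasurableSet_lt aemeasurable_const (ff_int a r j).aemeasurable
      calc gam {g | t < (⨆ j, ff a r j g) - C} ≤ gam {u | t + C < ff a r j u} := by
            refine measure_mono fun g hg => ?_
            obtain ⟨i, hi⟩ := exists_eq_ciSup_of_finite (f := fun j => ff a r j g)
            simp only [Set.mem_ofPred_eq, ← hi] at hg ⊢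
            exact hj i g (by linarith)
        _ = (Measure.pi fun _ : Fin c => gam) ((fun G => G j) ⁻¹' {u | t + C < ff a r j u}) :=
            ((measurePreserving_eval (fun _ : Fin c => gam) j).measure_preimage m).symm
        _ ≤ _ := by
            refine measure_mono fun G hG => ?_
            have := le_sup (fun j => ff a r j (G j)) j
            simp only [Set.mem_ofPred_eq, Set.mem_preimage] at hG this ⊢
            linarith
  have D : ∫ G, (⨆ j, ff a r j (G j)) ∂(Measure.pi fun _ : Fin c => gam) ≤
      ∫ G, Psi a r G ∂(Measure.pi fun _ : Fin c => gam) := by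
    have N : (0:ℝ) < (Fintype.card (Fin c → ℤˣ) : ℝ) := by exact_mod_cast Fintype.card_pos
    have iS : ∀ e : Fin c → ℤˣ, Integrable (fun G : Fin c → ℝ => Psi a r (fun i => ((e i : ℤ) : ℝ) * G i)) (Measure.pi fun _ => gam) :=
      fun e => (mp_sign e).integrable_comp_of_integrable (Psi_int a r)
    have eS : ∀ e : Fin c → ℤˣ, ∫ G : Fin c → ℝ, Psi a r (fun i => ((e i : ℤ) : ℝ) * G i) ∂(Measure.pi fun _ => gam)
        = ∫ G, Psi a r G ∂(Measure.pi fun _ => gam) := by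
      intro e
      have := integral_map (mp_sign e).aemeasurable (f := Psi a r)
        (by rw [(mp_sign e).map_eq]; exact (Psi_int a r).aestronglyMeasurable)
      rw [(mp_sign e).map_eq] at this
      exact this.symm
    have := integral_mono (iM.const_mul (Fintype.card (Fin c → ℤˣ) : ℝ)) (integrable_finsetSum Finset.univ fun e _ => iS e)
      (fun G => by
        obtain ⟨j, hj⟩ := exists_eq_ciSup_of_finite (f := fun j => ff a r j (G j))
        simp only [← hj]
        exact sign_avg a r G j)
    rw [integral_const_mul, integral_finsetSum _ (fun e _ => iS e)] at this
    simp only [eS, Finset.sum_const, Finset.card_univ, nsmul_eq_mul] at this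
    exact le_of_mul_le_mul_left this N
  exact A.trans (B.trans D)

lemma split_int {E : Type*} [MeasurableSpace E] (μ : Measure E) [IsProbabilityMeasure μ] (n : ℕ)
    (f : (Fin (n + 1) → E) → ℝ) :
    ∫ z, f z ∂(Measure.pi fun _ => μ) =
      ∫ p : E × (Fin n → E), f (Fin.cons p.1 p.2) ∂(μ.prod (Measure.pi fun _ => μ)) := by
  rw [← ((measurePreserving_piFinSuccAbove (fun _ : Fin (n + 1) => μ) 0).symm).integral_comp']
  refine integral_congr_ae (ae_of_all _ fun p => ?_)
  simp [MeasurableEquiv.piFinSuccAbove, Fin.consEquiv]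

lemma multi (hc : 1 ≤ c) (n : ℕ) : ∀ (a : K → Fin n → Fin c → ℝ) (r : K → ℝ),
    ∫ g, (⨆ k, ((∑ i, g i * ⨆ j, a k i j) + r k)) ∂(Measure.pi fun _ : Fin n => gam) ≤
    ∫ G, (⨆ k, ((∑ i, ∑ j, G i j * a k i j) + r k))
      ∂(Measure.pi fun _ : Fin n => Measure.pi fun _ : Fin c => gam) := by
  induction n with
  | zero => intro a r; simp
  | succ n ih =>
    intro a r
    set γc : Measure (Fin c → ℝ) := Measure.pi fun _ : Fin c => gam
    set γn : Measure (Fin n → ℝ) := Measure.pi fun _ : Fin n => gam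
    set Γ : Measure (Fin n → Fin c → ℝ) := Measure.pi fun _ : Fin n => γc
    have ic : ∀ j, Integrable (fun G : Fin c → ℝ => G j) γc := fun j => int_eval j
    have iG : ∀ i j, Integrable (fun G : Fin n → Fin c → ℝ => G i j) Γ := fun i j =>
      (measurePreserving_eval (fun _ : Fin n => γc) i).integrable_comp_of_integrable (ic j)
    have ig : ∀ i, Integrable (fun g : Fin n → ℝ => g i) γn := fun i => int_eval i
    rw [split_int gam n, split_int γc n]
    simp only [Fin.sum_univ_succ, Fin.cons_zero, Fin.cons_succ]
    have I1 : Integrable (fun p : ℝ × (Fin n → ℝ) => ⨆ k, (((p.1 * ⨆ j, a k 0 j) +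
        ∑ i : Fin n, p.2 i * ⨆ j, a k i.succ j) + r k)) (gam.prod γn) := by
      refine int_iSup _ _ fun k => ((int_id.comp_fst γn).mul_const _ |>.add ?_).add (integrable_const _)
      exact integrable_finsetSum _ fun i _ => ((ig i).comp_snd gam).mul_const _
    have I2 : Integrable (fun p : ℝ × (Fin n → Fin c → ℝ) => ⨆ k, (((p.1 * ⨆ j, a k 0 j) +
        ∑ i : Fin n, ∑ j, p.2 i j * a k i.succ j) + r k)) (gam.prod Γ) := by
      refine int_iSup _ _ fun k => ((int_id.comp_fst Γ).mul_const _ |>.add ?_).add (integrable_const _)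
      exact integrable_finsetSum _ fun i _ => integrable_finsetSum _ fun j _ =>
        ((iG i j).comp_snd gam).mul_const _
    have I3 : Integrable (fun p : (Fin c → ℝ) × (Fin n → Fin c → ℝ) => ⨆ k, (((∑ j, p.1 j * a k 0 j) +
        ∑ i : Fin n, ∑ j, p.2 i j * a k i.succ j) + r k)) (γc.prod Γ) := by
      refine int_iSup _ _ fun k => (Integrable.add ?_ ?_).add (integrable_const _)
      · exact integrable_finsetSum _ fun j _ => ((ic j).comp_fst Γ).mul_const _
      · exact integrable_finsetSum _ fun i _ => integrable_finsetSum _ fun j _ =>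
          ((iG i j).comp_snd γc).mul_const _
    rw [integral_prod _ I1, integral_prod_symm _ I3]
    have s1 := integral_mono I1.integral_prod_left I2.integral_prod_left (fun g0 => by
      have := ih (fun k i j => a k i.succ j) (fun k => (g0 * ⨆ j, a k 0 j) + r k)
      refine le_trans (le_of_eq ?_) (this.trans (le_of_eq ?_))
      · congr 1; ext g; congr 1; ext k; ring
      · congr 1; ext g; congr 1; ext k; ring)
    refine s1.trans ?_
    rw [← integral_prod _ I2, integral_prod_symm _ I2]
    refine integral_mono I2.integral_prod_right I3.integral_prod_right (fun G => ?_)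
    have := one_step (fun k => a k 0) (fun k => (∑ i : Fin n, ∑ j, G i j * a k i.succ j) + r k) hc
    simpa only [add_assoc] using this

end

lemma uncurry_int (n c : ℕ) (f : (Fin n × Fin c → ℝ) → ℝ) :
    ∫ G : Fin n → Fin c → ℝ, f (fun p => G p.1 p.2)
        ∂(Measure.pi fun _ : Fin n => Measure.pi fun _ : Fin c => gam) =
      ∫ g, f g ∂(Measure.pi fun _ : Fin n × Fin c => gam) := by
  have h := Measure.infinitePi_map_curry_symm (fun (_ : Fin n) (_ : Fin c) => gam)
  simp only [Measure.infinitePi_eq_pi] at h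
  rw [← h, integral_map_equiv]
  rfl

lemma fin_case {K : Type*} [Fintype K] [Nonempty K] (n c : ℕ) (hc : 1 ≤ c)
    (a : K → Fin n → Fin c → ℝ) :
    ∫ g, (⨆ k, ∑ i, g i * ⨆ j, a k i j) ∂(Measure.pi fun _ : Fin n => gam) ≤
    ∫ G, (⨆ k, ∑ i, ∑ j, G (i, j) * a k i j) ∂(Measure.pi fun _ : Fin n × Fin c => gam) := by
  rw [← uncurry_int]
  simpa using multi hc n a (fun _ => 0)

/-- **Structural result on Gaussian complexity** (Lemma 1): the Gaussian complexity of the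
class induced by the maximum operator is bounded by the Gaussian complexity where every
component gets its own independent Gaussian variable. -/
theorem gaussian_complexity_max_le {X : Type*} (n c : ℕ) (hn : 1 ≤ n) (hc : 1 ≤ c)
    (x : Fin n → X) (H : Set (X → Fin c → ℝ)) (hHcount : H.Countable) (hHne : H.Nonempty)
    (hbdd₁ : ∀ g : Fin n → ℝ,
      BddAbove (Set.range fun h : H => ∑ i, g i * ⨆ j, (h : X → Fin c → ℝ) (x i) j))
    (hbdd₂ : ∀ g : Fin n × Fin c → ℝ,
      BddAbove (Set.range fun h : H => ∑ i, ∑ j, g (i, j) * (h : X → Fin c → ℝ) (x i) j))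
    (hint₁ : Integrable
      (fun g : Fin n → ℝ => ⨆ h : H, ∑ i, g i * ⨆ j, (h : X → Fin c → ℝ) (x i) j)
      (Measure.pi fun _ : Fin n => gaussianReal 0 1))
    (hint₂ : Integrable
      (fun g : Fin n × Fin c → ℝ => ⨆ h : H, ∑ i, ∑ j, g (i, j) * (h : X → Fin c → ℝ) (x i) j)
      (Measure.pi fun _ : Fin n × Fin c => gaussianReal 0 1)) :
    (∫ g : Fin n → ℝ, (⨆ h : H, ∑ i, g i * ⨆ j, (h : X → Fin c → ℝ) (x i) j)
        ∂(Measure.pi fun _ : Fin n => gaussianReal 0 1)) ≤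
    ∫ g : Fin n × Fin c → ℝ, (⨆ h : H, ∑ i, ∑ j, g (i, j) * (h : X → Fin c → ℝ) (x i) j)
        ∂(Measure.pi fun _ : Fin n × Fin c => gaussianReal 0 1) := by
  have : Countable H := hHcount.to_subtype
  have : Nonempty H := hHne.to_subtype
  obtain ⟨s, hs⟩ := exists_surjective_nat H
  let a : H → Fin n → Fin c → ℝ := fun h i j => (h : X → Fin c → ℝ) (x i) j
  let L : ℕ → (Fin n → ℝ) → ℝ := fun N g => ⨆ k : Fin (N + 1), ∑ i, g i * ⨆ j, a (s k) i j
  have iL : ∀ N, Integrable (L N) (Measure.pi fun _ : Fin n => gam) := fun N =>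
    int_iSup _ _ fun k => integrable_finsetSum _ fun i _ => (int_eval i).mul_const _
  have mono : ∀ g, Monotone fun N => L N g := by
    intro g N M h
    refine ciSup_le fun k => ?_
    exact le_sup (fun k : Fin (M + 1) => ∑ i, g i * ⨆ j, a (s k) i j) ⟨k, by omega⟩
  have lub : ∀ g, IsLUB (Set.range fun N => L N g) (⨆ h : H, ∑ i, g i * ⨆ j, a h i j) := by
    intro g
    constructor
    · rintro _ ⟨N, rfl⟩
      exact ciSup_le fun k => le_ciSup (hbdd₁ g) (s k)
    · intro b hb
      refine ciSup_le fun h => ?_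
      obtain ⟨N, rfl⟩ := hs h
      refine le_trans ?_ (hb ⟨N, rfl⟩)
      exact le_sup (fun k : Fin (N + 1) => ∑ i, g i * ⨆ j, a (s k) i j) ⟨N, by omega⟩
  have lim := integral_tendsto_of_tendsto_of_monotone iL hint₁ (ae_of_all _ mono)
    (ae_of_all _ fun g => tendsto_atTop_isLUB (mono g) (lub g))
  refine le_of_tendsto' lim fun N => ?_
  refine (fin_case n c hc (fun k : Fin (N + 1) => a (s k))).trans ?_
  refine integral_mono ?_ hint₂ fun g => ?_
  · exact int_iSup _ _ fun k => integrable_finsetSum _ fun i _ => integrable_finsetSum _ fun j _ =>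
      (int_eval (i, j)).mul_const _
  · exact ciSup_le fun k => le_ciSup (hbdd₂ g) (s k)
end

section
/- Let X be a set, let n, c ≥ 1, let (x_1,y_1),…,(x_n,y_n) ∈ X × {1,…,c}, and let H be a nonempty countable set of functions h = (h_1,…,h_c) : X → ℝ^c. Assume that the two suprema below are integrable with respect to the relevant Gaussian product measures. Then E[sup_{h∈H} Σ_{i=1}^n g_i · h_{y_i}(x_i)] ≤ E[sup_{h∈H} Σ_{i=1}^n Σ_{j=1}^c g_{ij} · h_j(x_i)], where on the left g_1,…,g_n are i.i.d. standard Gaussian N(0,1) random variables and on the right g_{ij} (i = 1,…,n, j = 1,…,c) are i.i.d. standard Gaussian N(0,1) random variables. In particular, the empirical Gaussian complexity 𝔊_S(H) = E[sup_{h∈H} (1/n) Σ_{i=1}^n g_i h_{y_i}(x_i)] is bounded by (1/n) E[sup_{h∈H} Σ_{i=1}^n Σ_{j=1}^c g_{ij} h_j(x_i)]. -/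
open MeasureTheory ProbabilityTheory

/-- **Gaussian complexity of multi-class hypothesis spaces** (Lemma A.2): the Gaussian
complexity of a multi-class hypothesis class (seen as functions on `X × {1,…,c}` evaluated
at a sample `(x_i, y_i)`) is bounded by the Gaussian complexity where every component gets
its own independent Gaussian variable. -/
theorem gaussian_complexity_multiclass_le {X : Type*} (n c : ℕ) (hn : 1 ≤ n) (hc : 1 ≤ c)
    (x : Fin n → X) (y : Fin n → Fin c)
    (H : Set (X → Fin c → ℝ)) (hHcount : H.Countable) (hHne : H.Nonempty)
    (hbdd₁ : ∀ g : Fin n → ℝ,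
      BddAbove (Set.range fun h : H => ∑ i, g i * (h : X → Fin c → ℝ) (x i) (y i)))
    (hbdd₂ : ∀ g : Fin n × Fin c → ℝ,
      BddAbove (Set.range fun h : H => ∑ i, ∑ j, g (i, j) * (h : X → Fin c → ℝ) (x i) j))
    (hint₁ : Integrable
      (fun g : Fin n → ℝ => ⨆ h : H, ∑ i, g i * (h : X → Fin c → ℝ) (x i) (y i))
      (Measure.pi fun _ : Fin n => gaussianReal 0 1))
    (hint₂ : Integrable
      (fun g : Fin n × Fin c → ℝ => ⨆ h : H, ∑ i, ∑ j, g (i, j) * (h : X → Fin c → ℝ) (x i) j)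
      (Measure.pi fun _ : Fin n × Fin c => gaussianReal 0 1)) :
    ((∫ g : Fin n → ℝ, (⨆ h : H, ∑ i, g i * (h : X → Fin c → ℝ) (x i) (y i))
        ∂(Measure.pi fun _ : Fin n => gaussianReal 0 1)) ≤
      ∫ g : Fin n × Fin c → ℝ, (⨆ h : H, ∑ i, ∑ j, g (i, j) * (h : X → Fin c → ℝ) (x i) j)
        ∂(Measure.pi fun _ : Fin n × Fin c => gaussianReal 0 1)) ∧
    ((∫ g : Fin n → ℝ, (⨆ h : H, (1 / (n : ℝ)) * ∑ i, g i * (h : X → Fin c → ℝ) (x i) (y i))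
        ∂(Measure.pi fun _ : Fin n => gaussianReal 0 1)) ≤
      (1 / (n : ℝ)) *
        ∫ g : Fin n × Fin c → ℝ, (⨆ h : H, ∑ i, ∑ j, g (i, j) * (h : X → Fin c → ℝ) (x i) j)
          ∂(Measure.pi fun _ : Fin n × Fin c => gaussianReal 0 1)) := by
  classical
  have : Nonempty H := hHne.to_subtype
  set F : (Fin n × Fin c → ℝ) → ℝ :=
    fun g => ⨆ h : H, ∑ i, ∑ j, g (i, j) * (h : X → Fin c → ℝ) (x i) j with hF
  set G : (Fin n → ℝ) → ℝ :=
    fun g => ⨆ h : H, ∑ i, g i * (h : X → Fin c → ℝ) (x i) (y i) with hG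
  set μ := Measure.pi fun _ : Fin n × Fin c => gaussianReal 0 1 with hμ
  set ν := Measure.pi fun _ : Fin n => gaussianReal 0 1 with hν
  let T : (Fin n × Fin c → ℝ) → (Fin n × Fin c → ℝ) :=
    fun g p => if p.2 = y p.1 then g p else - g p
  let P : (Fin n × Fin c → ℝ) → (Fin n → ℝ) := fun g i => g (i, y i)
  have hT : MeasurePreserving T μ μ := by
    refine measurePreserving_pi (fun _ : Fin n × Fin c => gaussianReal 0 1)
      (fun _ : Fin n × Fin c => gaussianReal 0 1)
      (f := fun p t => if p.2 = y p.1 then t else - t) (fun p => ?_)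
    by_cases hp : p.2 = y p.1
    · simp only [hp, if_true]
      exact MeasurePreserving.id _
    · simp only [hp, if_false]
      exact ⟨measurable_neg, by simpa using gaussianReal_map_neg (μ := 0) (v := 1)⟩
  have hP : MeasurePreserving P μ ν := by
    refine ⟨by fun_prop, ?_⟩
    have h1 : iIndepFun (fun (p : Fin n × Fin c) (g : Fin n × Fin c → ℝ) => g p) μ :=
      iIndepFun_pi (X := fun _ t => t) (fun _ => aemeasurable_id)
    have hinj : Function.Injective (fun i : Fin n => (i, y i)) :=
      fun a b hab => (Prod.mk.inj hab).1
    have h2 := h1.precomp hinj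
    have h3 := (iIndepFun_iff_map_fun_eq_pi_map
      (fun i => (measurable_pi_apply _).aemeasurable)).1 h2
    refine Eq.trans h3 ?_
    rw [hν]
    congr 1
    funext i
    exact (measurePreserving_eval (fun _ : Fin n × Fin c => gaussianReal 0 1) (i, y i)).map_eq
  have hpt : ∀ g, G (P g) ≤ (F g + F (T g)) / 2 := by
    intro g
    refine ciSup_le fun h => ?_
    have a := le_ciSup (hbdd₂ g) h
    have b := le_ciSup (hbdd₂ (T g)) h
    have e : (∑ i, ∑ j, g (i, j) * (h : X → Fin c → ℝ) (x i) j)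
        + (∑ i, ∑ j, T g (i, j) * (h : X → Fin c → ℝ) (x i) j)
        = 2 * ∑ i, P g i * (h : X → Fin c → ℝ) (x i) (y i) := by
      rw [← Finset.sum_add_distrib, Finset.mul_sum]
      refine Finset.sum_congr rfl fun i _ => ?_
      rw [← Finset.sum_add_distrib, Finset.sum_eq_single (y i)]
      · simp only [T, P, if_true]; ring
      · intro j _ hj
        simp only [T, hj, if_false]; ring
      · simp
    simp only [hF]
    linarith
  have hFT : Integrable (fun g => F (T g)) μ := hT.integrable_comp_of_integrable hint₂
  have hGP : Integrable (fun g => G (P g)) μ := hP.integrable_comp_of_integrable hint₁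
  have key : ∫ g, G g ∂ν ≤ ∫ g, F g ∂μ := by
    have e1 : ∫ g, G g ∂ν = ∫ g, G (P g) ∂μ := by
      rw [← hP.map_eq]
      exact integral_map hP.aemeasurable (by rw [hP.map_eq]; exact hint₁.aestronglyMeasurable)
    have e2 : ∫ g, F (T g) ∂μ = ∫ g, F g ∂μ := by
      conv_rhs => rw [← hT.map_eq]
      exact (integral_map hT.aemeasurable
        (by rw [hT.map_eq]; exact hint₂.aestronglyMeasurable)).symm
    rw [e1]
    calc ∫ g, G (P g) ∂μ ≤ ∫ g, (F g + F (T g)) / 2 ∂μ :=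
          integral_mono hGP ((hint₂.add hFT).div_const 2) hpt
      _ = ∫ g, F g ∂μ := by
          rw [integral_div, integral_add hint₂ hFT, e2]; ring
  refine ⟨key, ?_⟩
  have e3 : ∀ g : Fin n → ℝ,
      (⨆ h : H, (1 / (n : ℝ)) * ∑ i, g i * (h : X → Fin c → ℝ) (x i) (y i))
        = (1 / (n : ℝ)) * G g := fun g =>
    (Real.mul_iSup_of_nonneg (by positivity) _).symm
  simp only [e3]
  rw [integral_const_mul]
  exact mul_le_mul_of_nonneg_left key (by positivity)
end

section
/- Let c ≥ 2, n ≥ 1, let X be a measurable space, E a real Hilbert space, φ : X → E a measurable feature map with kernel k(x,x) = ‖φ(x)‖², and let 1 ≤ p ≤ 2 and Λ > 0. Let H_{p,Λ} = {h^w : x ↦ (⟨w_1,φ(x)⟩,…,⟨w_c,φ(x)⟩) : w ∈ E^c, ‖w‖_{2,p} ≤ Λ}. Let ℓ be an L-regular loss with B_ℓ := sup_{(x,y),h∈H_{p,Λ}} ℓ(ρ_h(x,y)) finite, and assume the relevant suprema are measurable (e.g., taken over a countable dense family) and integrable. Then for every δ ∈ (0,1), with P^⊗n-probability at least 1 − δ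 over the sample ((x_1,y_1),…,(x_n,y_n)), every w with ‖w‖_{2,p} ≤ Λ satisfies R(h^w) ≤ (1/n) Σ_{i=1}^n ℓ(ρ_{h^w}(x_i,y_i)) + 3 B_ℓ √(log(2/δ)/(2n)) + (2LΛ/n) √(Σ_{i=1}^n k(x_i,x_i)) · K, where K = √e · (4 log c)^{1 + 1/(2 log c)} if p ≤ (2 log c)/(2 log c − 1), and K = (2p/(p−1))^{2 − 1/p} · c^{(p−1)/p} if (2 log c)/(2 log c − 1) < p ≤ 2. -/
open MeasureTheory ProbabilityTheory Real RealInnerProductSpace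

/-- The multi-class margin `ρ_h(x, y) = h_y(x) - max_{y' ≠ y} h_{y'}(x)`. -/
noncomputable def mcMargin {X : Type*} {c : ℕ} (h : X → Fin c → ℝ) (x : X) (y : Fin c) : ℝ :=
  h x y - ⨆ y' : {y' : Fin c // y' ≠ y}, h x y'.1

/-- The `ℓ_{2,p}` block norm `‖w‖_{2,p} = (Σ_j ‖w_j‖^p)^{1/p}` on `E^c`. -/
noncomputable def norm2p {E : Type*} [NormedAddCommGroup E] {c : ℕ}
    (p : ℝ) (w : Fin c → E) : ℝ :=
  (∑ j, ‖w j‖ ^ p) ^ (1 / p)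


/-! ### Part 1: product measures and McDiarmid's inequality -/

lemma mp_cons {Z : Type*} [MeasurableSpace Z] (P : Measure Z) [IsProbabilityMeasure P] (n : ℕ) :
    MeasurePreserving (fun q : Z × (Fin n → Z) => (Fin.cons q.1 q.2 : Fin (n + 1) → Z))
      (P.prod (Measure.pi fun _ : Fin n => P)) (Measure.pi fun _ : Fin (n + 1) => P) := by
  have h := (measurePreserving_piFinSuccAbove (fun _ : Fin (n + 1) => P) 0).symm
  convert h using 1
  ext q i
  simp [MeasurableEquiv.piFinSuccAbove, Fin.insertNthEquiv]

lemma mp_cons_meas {Z : Type*} [MeasurableSpace Z] (n : ℕ) :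
    Measurable (fun q : Z × (Fin n → Z) => (Fin.cons q.1 q.2 : Fin (n + 1) → Z)) := by
  refine measurable_pi_iff.mpr fun i => ?_
  refine Fin.cases ?_ (fun j => ?_) i
  · simpa using measurable_fst
  · simpa [Function.comp_def] using (measurable_pi_apply j).comp measurable_snd

/-- functions with bounded differences are bounded -/
lemma bdd_of_diff {Z : Type*} (n : ℕ) (a : ℝ) (f : (Fin n → Z) → ℝ)
    (hd : ∀ S i z, |f (Function.update S i z) - f S| ≤ a) (S T : Fin n → Z) :
    |f S - f T| ≤ n * a := by
  induction n with
  | zero => simp [Subsingleton.elim S T]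
  | succ n ih =>
    have h1 := ih (fun U => f (Fin.cons (S 0) U)) (by
      intro U i z
      have := hd (Fin.cons (S 0) U) i.succ z
      rwa [← Fin.cons_update] at this) (Fin.tail S) (Fin.tail T)
    simp only [Fin.cons_self_tail] at h1
    have h2 := hd T 0 (S 0)
    have h3 : Function.update T 0 (S 0) = Fin.cons (S 0) (Fin.tail T) := by
      conv_lhs => rw [← Fin.cons_self_tail T]
      rw [Fin.update_cons_zero]
    rw [h3] at h2
    have := abs_sub_le (f S) (f (Fin.cons (S 0) (Fin.tail T))) (f T)
    push_cast
    linarith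

lemma osc_Icc {Z : Type*} [Nonempty Z] (a : ℝ) (g : Z → ℝ) (h : ∀ z z', |g z - g z'| ≤ a) :
    ∃ m, ∀ z, g z ∈ Set.Icc m (m + a) := by
  obtain ⟨z0⟩ := ‹Nonempty Z›
  have hb : BddBelow (Set.range g) := ⟨g z0 - a, by
    rintro _ ⟨z, rfl⟩
    have := abs_le.1 (h z z0)
    linarith [this.1]⟩
  refine ⟨⨅ z, g z, fun z => ⟨ciInf_le hb z, ?_⟩⟩
  have : Nonempty Z := ⟨z0⟩
  have : g z - a ≤ ⨅ z, g z := le_ciInf fun z' => by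
    have := abs_le.1 (h z z')
    linarith [this.2]
  linarith

lemma integrable_of_osc {Z : Type*} [MeasurableSpace Z] (P : Measure Z) [IsProbabilityMeasure P]
    (a : ℝ) (g : Z → ℝ) (hg : Measurable g) (h : ∀ z z', |g z - g z'| ≤ a) : Integrable g P := by
  have : Nonempty Z := P.nonempty_of_neZero
  obtain ⟨m, hm⟩ := osc_Icc a g h
  exact Integrable.of_mem_Icc m (m + a) hg.aemeasurable (ae_of_all _ hm)

lemma hoeffding_osc {Z : Type*} [MeasurableSpace Z] (P : Measure Z) [IsProbabilityMeasure P]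
    (a : ℝ) (g : Z → ℝ) (hg : Measurable g) (h : ∀ z z', |g z - g z'| ≤ a) (t : ℝ) :
    ∫ z, exp (t * (g z - ∫ z, g z ∂P)) ∂P ≤ exp (t ^ 2 * a ^ 2 / 8) := by
  have : Nonempty Z := P.nonempty_of_neZero
  obtain ⟨m, hm⟩ := osc_Icc a g h
  have := (hasSubgaussianMGF_of_mem_Icc (μ := P) hg.aemeasurable (ae_of_all _ hm)).mgf_le t
  refine this.trans (le_of_eq ?_)
  congr 1
  simp [div_pow, sq_abs]
  ring

lemma mcdiarmid_mgf {Z : Type*} [MeasurableSpace Z] (P : Measure Z) [IsProbabilityMeasure P]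
    (n : ℕ) (a : ℝ) (f : (Fin n → Z) → ℝ) (hf : Measurable f)
    (hd : ∀ S i z, |f (Function.update S i z) - f S| ≤ a) (t : ℝ) :
    ∫ S, exp (t * (f S - ∫ S, f S ∂(Measure.pi fun _ : Fin n => P)))
      ∂(Measure.pi fun _ : Fin n => P) ≤ exp (n * (t ^ 2 * a ^ 2 / 8)) := by
  induction n with
  | zero =>
    have : ∀ S, f S = f default := fun S => by rw [Subsingleton.elim S default]
    simp [this]
  | succ n ih =>
    set μ := Measure.pi fun _ : Fin n => P with hμ
    have hmp := mp_cons P n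
    have hfc : Measurable fun q : Z × (Fin n → Z) => f (Fin.cons q.1 q.2) :=
      hf.comp (mp_cons_meas n)
    have hd0 : ∀ z z' U, |f (Fin.cons z U) - f (Fin.cons z' U)| ≤ a := by
      intro z z' U
      have := hd (Fin.cons z' U) 0 z
      rwa [Fin.update_cons_zero] at this
    have hdS : ∀ z U i z', |f (Fin.cons z (Function.update U i z')) - f (Fin.cons z U)| ≤ a := by
      intro z U i z'
      have := hd (Fin.cons z U) i.succ z'
      rwa [← Fin.cons_update] at this
    have hosc := bdd_of_diff _ a f hd
    have hfcz : ∀ z, Measurable fun U : Fin n → Z => f (Fin.cons z U) := fun z =>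
      hfc.comp (measurable_const.prodMk measurable_id)
    have hiz : ∀ z, Integrable (fun U : Fin n → Z => f (Fin.cons z U)) μ := fun z =>
      integrable_of_osc _ _ _ (hfcz z) fun _ _ => hosc _ _
    have hInt : Integrable (fun q : Z × (Fin n → Z) => f (Fin.cons q.1 q.2)) (P.prod μ) :=
      integrable_of_osc _ _ _ hfc fun _ _ => hosc _ _
    set g : Z → ℝ := fun z => ∫ U, f (Fin.cons z U) ∂μ with hg
    have hgm : Measurable g := by
      have : StronglyMeasurable fun q : Z × (Fin n → Z) => f (Fin.cons q.1 q.2) :=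
        hfc.stronglyMeasurable
      exact this.integral_prod_right.measurable
    have hgo : ∀ z z', |g z - g z'| ≤ a := by
      intro z z'
      rw [hg]
      simp only
      rw [← integral_sub (hiz z) (hiz z')]
      refine (abs_integral_le_integral_abs).trans ?_
      have : ∫ U, |f (Fin.cons z U) - f (Fin.cons z' U)| ∂μ ≤ ∫ U, a ∂μ :=
        integral_mono ((hiz z).sub (hiz z')).abs (integrable_const _) fun U => hd0 z z' U
      simpa using this
    have hE : ∫ S, f S ∂(Measure.pi fun _ : Fin (n+1) => P) = ∫ z, g z ∂P := by
      rw [← hmp.map_eq, integral_map hmp.measurable.aemeasurable hf.aestronglyMeasurable,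
        integral_prod _ hInt]
    set m := ∫ z, g z ∂P with hm
    rw [hE]
    have hexpm : Measurable fun S => exp (t * (f S - m)) := by fun_prop
    have hexpm' : Measurable fun q : Z × (Fin n → Z) => exp (t * (f (Fin.cons q.1 q.2) - m)) :=
      hexpm.comp (mp_cons_meas n)
    have hexpi : Integrable (fun q : Z × (Fin n → Z) => exp (t * (f (Fin.cons q.1 q.2) - m)))
        (P.prod μ) := by
      have : Nonempty (Z × (Fin n → Z)) := (P.prod μ).nonempty_of_neZero
      obtain ⟨l, hl⟩ := osc_Icc _ (fun q : Z × (Fin n → Z) => f (Fin.cons q.1 q.2))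
        fun _ _ => hosc _ _
      exact (integrable_exp_mul_of_mem_Icc (t := t) (hfc.sub_const m).aemeasurable
        (ae_of_all _ fun q => (⟨sub_le_sub_right (hl q).1 m, sub_le_sub_right (hl q).2 m⟩ :
          f (Fin.cons q.1 q.2) - m ∈ Set.Icc (l - m) (_ - m))))
    rw [← hmp.map_eq, integral_map hmp.measurable.aemeasurable hexpm.aestronglyMeasurable,
      integral_prod _ hexpi]
    have hz : ∀ z, ∫ U, exp (t * (f (Fin.cons z U) - m)) ∂μ ≤
        exp (n * (t ^ 2 * a ^ 2 / 8)) * exp (t * (g z - m)) := by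
      intro z
      have := ih (fun U => f (Fin.cons z U)) (hfcz z) (hdS z)
      have e : ∀ U, exp (t * (f (Fin.cons z U) - m)) =
          exp (t * (f (Fin.cons z U) - g z)) * exp (t * (g z - m)) := by
        intro U
        rw [← Real.exp_add]
        congr 1
        ring
      simp_rw [e]
      rw [integral_mul_const]
      exact mul_le_mul_of_nonneg_right this (exp_pos _).le
    have hgexp : Integrable (fun z => exp (t * (g z - m))) P := by
      have : Nonempty Z := P.nonempty_of_neZero
      obtain ⟨l, hl⟩ := osc_Icc _ g hgo
      exact (integrable_exp_mul_of_mem_Icc (t := t) (hgm.sub_const m).aemeasurable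
        (ae_of_all _ fun q => (⟨sub_le_sub_right (hl q).1 m, sub_le_sub_right (hl q).2 m⟩ :
          g q - m ∈ Set.Icc (l - m) (_ - m))))
    calc _ ≤ ∫ z, exp (n * (t ^ 2 * a ^ 2 / 8)) * exp (t * (g z - m)) ∂P :=
          integral_mono hexpi.integral_prod_left (hgexp.const_mul _) hz
      _ = exp (n * (t ^ 2 * a ^ 2 / 8)) * ∫ z, exp (t * (g z - m)) ∂P := integral_const_mul _ _
      _ ≤ exp (n * (t ^ 2 * a ^ 2 / 8)) * exp (t ^ 2 * a ^ 2 / 8) :=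
          mul_le_mul_of_nonneg_left (hoeffding_osc P a g hgm hgo t) (exp_pos _).le
      _ = _ := by
          rw [← Real.exp_add]
          congr 1
          push_cast
          ring

lemma mcdiarmid {Z : Type*} [MeasurableSpace Z] (P : Measure Z) [IsProbabilityMeasure P]
    (n : ℕ) (hn : 1 ≤ n) (a : ℝ) (ha : 0 < a) (f : (Fin n → Z) → ℝ) (hf : Measurable f)
    (hd : ∀ S i z, |f (Function.update S i z) - f S| ≤ a)
    (hE : ∫ S, f S ∂(Measure.pi fun _ : Fin n => P) ≤ 0) (t : ℝ) (ht : 0 ≤ t) :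
    (Measure.pi fun _ : Fin n => P).real {S | t ≤ f S} ≤ exp (- 2 * t ^ 2 / (n * a ^ 2)) := by
  set μ := Measure.pi fun _ : Fin n => P with hμ
  have hn' : (0 : ℝ) < n := by exact_mod_cast hn
  set s := 4 * t / (n * a ^ 2) with hs
  have hs0 : 0 ≤ s := by positivity
  set m := ∫ S, f S ∂μ with hm
  have hosc := bdd_of_diff _ a f hd
  have hi : Integrable (fun S => exp (s * (f S - m))) μ := by
    have : Nonempty (Fin n → Z) := μ.nonempty_of_neZero
    obtain ⟨l, hl⟩ := osc_Icc _ f hosc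
    exact (integrable_exp_mul_of_mem_Icc (t := s) (hf.sub_const m).aemeasurable
        (ae_of_all _ fun q => (⟨sub_le_sub_right (hl q).1 m, sub_le_sub_right (hl q).2 m⟩ :
          f q - m ∈ Set.Icc (l - m) (_ - m))))
  have h1 := measure_ge_le_exp_mul_mgf (μ := μ) (X := fun S => f S - m) t hs0 hi
  have h2 := mcdiarmid_mgf P n a f hf hd s
  have h3 : μ.real {S | t ≤ f S} ≤ μ.real {S | t ≤ f S - m} := by
    refine measureReal_mono ?_
    intro S hS
    simp only [Set.mem_ofPred_eq] at *
    linarith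
  refine h3.trans (h1.trans ?_)
  refine (mul_le_mul_of_nonneg_left h2 (exp_pos _).le).trans ?_
  rw [← Real.exp_add]
  refine le_of_eq ?_
  congr 1
  rw [hs]
  field_simp
  ring

/-! ### Part 2: symmetrization -/

open scoped BigOperators

/-- signs -/
noncomputable def sgB (b : Bool) : ℝ := cond b 1 (-1)

lemma sgB_not (b : Bool) : sgB (!b) = - sgB b := by cases b <;> simp [sgB]

lemma abs_sgB (b : Bool) : |sgB b| = 1 := by cases b <;> simp [sgB]

lemma sup_le_fin {ι : Type*} [Finite ι] (u : ι → ℝ) (t : ι) : u t ≤ ⨆ t, u t :=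
  le_ciSup (Set.finite_range u).bddAbove t

lemma sup_diff {ι : Type*} [Finite ι] [Nonempty ι] (u v : ι → ℝ) (a : ℝ)
    (h : ∀ t, |u t - v t| ≤ a) : |(⨆ t, u t) - ⨆ t, v t| ≤ a := by
  rw [abs_le]
  constructor
  · have : (⨆ t, v t) ≤ (⨆ t, u t) + a := ciSup_le fun t => by
      have := (abs_le.1 (h t)).1
      linarith [sup_le_fin u t]
    linarith
  · have : (⨆ t, u t) ≤ (⨆ t, v t) + a := ciSup_le fun t => by
      have := (abs_le.1 (h t)).2
      linarith [sup_le_fin v t]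
    linarith

lemma abs_sup_le {ι : Type*} [Finite ι] [Nonempty ι] (u : ι → ℝ) (a : ℝ)
    (h : ∀ t, |u t| ≤ a) : |⨆ t, u t| ≤ a := by
  have := sup_diff u (fun _ => 0) a (by simpa using h)
  simpa using this

lemma sum_update_sub {Z : Type*} {n : ℕ} (f : Fin n → Z → ℝ) (S : Fin n → Z) (k : Fin n) (z : Z) :
    ∑ i, f i (Function.update S k z i) - ∑ i, f i (S i) = f k z - f k (S k) := by
  rw [← Finset.sum_sub_distrib, Finset.sum_eq_single k]
  · simp
  · intro i _ hi
    simp [Function.update_of_ne hi]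
  · simp

/-- Rademacher sum (un-normalised) -/
noncomputable def radSum {Z ι : Type*} {n : ℕ} (g : ι → Z → ℝ) (S : Fin n → Z) : ℝ :=
  𝔼 σ : Fin n → Bool, ⨆ t, ∑ i, sgB (σ i) * g t (S i)

lemma integrable_bdd {Z : Type*} [MeasurableSpace Z] (P : Measure Z) [IsProbabilityMeasure P]
    (C : ℝ) (g : Z → ℝ) (hg : Measurable g) (h : ∀ z, |g z| ≤ C) : Integrable g P :=
  Integrable.of_bound hg.aestronglyMeasurable C (ae_of_all _ h)

lemma meas_rad_inner {Z ι : Type*} [MeasurableSpace Z] [Fintype ι] (g : ι → Z → ℝ)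
    (hg : ∀ t, Measurable (g t)) (n : ℕ) (s : Fin n → ℝ) :
    Measurable fun S : Fin n → Z => ⨆ t, ∑ i, s i * g t (S i) := by
  refine Measurable.iSup fun t => Finset.measurable_sum _ fun i _ => ?_
  exact ((hg t).comp (measurable_pi_apply i)).const_mul _

lemma bd_rad_inner {Z ι : Type*}
    [Fintype ι] [Nonempty ι] (g : ι → Z → ℝ) (B : ℝ)
    (h0 : ∀ t z, 0 ≤ g t z) (hB : ∀ t z, g t z ≤ B) (n : ℕ)
    (s : Fin n → ℝ) (hs : ∀ i, |s i| = 1) (S : Fin n → Z) :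
    |⨆ t, ∑ i, s i * g t (S i)| ≤ n * B := by
  refine abs_sup_le _ _ fun t => ?_
  refine (Finset.abs_sum_le_sum_abs _ _).trans ?_
  refine (Finset.sum_le_card_nsmul _ _ B fun i _ => ?_).trans (by simp)
  rw [abs_mul, hs, one_mul, abs_of_nonneg (h0 _ _)]
  exact hB _ _

lemma symm_step {Z ι : Type*} [MeasurableSpace Z] (P : Measure Z) [IsProbabilityMeasure P]
    [Fintype ι] [Nonempty ι] (g : ι → Z → ℝ) (hg : ∀ t, Measurable (g t)) (B : ℝ)
    (h0 : ∀ t z, 0 ≤ g t z) (hB : ∀ t z, g t z ≤ B) (n : ℕ)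
    (σ : Fin n → Bool) :
    ∫ S, (⨆ t, (n * ∫ z, g t z ∂P - ∑ i, g t (S i))) ∂(Measure.pi fun _ : Fin n => P) ≤
      ∫ S, (⨆ t, ∑ i, sgB (σ i) * g t (S i)) ∂(Measure.pi fun _ : Fin n => P) +
      ∫ S, (⨆ t, ∑ i, sgB (!σ i) * g t (S i)) ∂(Measure.pi fun _ : Fin n => P) := by
  set μ := Measure.pi fun _ : Fin n => P with hμ
  set ν := Measure.pi fun _ : Fin n => P.prod P with hν
  have habs : ∀ t z, |g t z| ≤ B := fun t z => by rw [abs_of_nonneg (h0 t z)]; exact hB t z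
  have habs2 : ∀ t z z', |g t z - g t z'| ≤ B := fun t z z' => by
    rw [abs_le]; constructor <;> linarith [h0 t z, h0 t z', hB t z, hB t z']
  have hgi : ∀ t i, Measurable fun S : Fin n → Z => g t (S i) := fun t i =>
    (hg t).comp (measurable_pi_apply i)
  have hgii : ∀ t i, Integrable (fun S : Fin n → Z => g t (S i)) μ := fun t i =>
    integrable_bdd _ B _ (hgi t i) fun _ => habs _ _
  have hev : ∀ t i, ∫ S, g t (S i) ∂μ = ∫ z, g t z ∂P := by
    intro t i
    have hmp := measurePreserving_eval (fun _ : Fin n => P) i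
    rw [← hmp.map_eq, integral_map hmp.measurable.aemeasurable (hg t).aestronglyMeasurable]
  -- the two-sample supremum
  set H : (Fin n → Z) × (Fin n → Z) → ℝ := fun q => ⨆ t, ∑ i, (g t (q.2 i) - g t (q.1 i)) with hH
  have hHm : Measurable H := by
    refine Measurable.iSup fun t => Finset.measurable_sum _ fun i _ => ?_
    exact ((hgi t i).comp measurable_snd).sub ((hgi t i).comp measurable_fst)
  have hHb : ∀ q, |H q| ≤ n * B := by
    intro q
    refine abs_sup_le _ _ fun t => ?_
    refine (Finset.abs_sum_le_sum_abs _ _).trans ?_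
    refine (Finset.sum_le_card_nsmul _ _ B fun i _ => ?_).trans (by simp)
    exact habs2 _ _ _
  have hHi : Integrable H (μ.prod μ) := integrable_bdd _ _ _ hHm hHb
  have hHS : ∀ S, Integrable (fun S' => H (S, S')) μ := fun S =>
    integrable_bdd _ _ _ (hHm.comp (measurable_const.prodMk measurable_id)) fun _ => hHb _
  have h1 : ∀ S, (⨆ t, (n * ∫ z, g t z ∂P - ∑ i, g t (S i))) ≤ ∫ S', H (S, S') ∂μ := by
    intro S
    refine ciSup_le fun t => ?_
    have e : n * ∫ z, g t z ∂P - ∑ i, g t (S i) =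
        ∫ S', ∑ i, (g t (S' i) - g t (S i)) ∂μ := by
      have hii : ∀ i ∈ Finset.univ, Integrable (fun S' : Fin n → Z => g t (S' i) - g t (S i)) μ :=
        fun i _ => (hgii t i).sub (integrable_const _)
      rw [integral_finsetSum _ hii]
      have : ∀ i, ∫ S', (g t (S' i) - g t (S i)) ∂μ = ∫ z, g t z ∂P - g t (S i) := by
        intro i
        rw [integral_sub (hgii t i) (integrable_const _), hev]
        simp
      simp [this]
    rw [e]
    refine integral_mono ?_ (hHS S) fun S' => sup_le_fin (fun t => ∑ i, (g t (S' i) - g t (S i))) t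
    exact integrable_finsetSum _ fun i _ => (hgii t i).sub (integrable_const _)
  have h2 : ∫ S, (⨆ t, (n * ∫ z, g t z ∂P - ∑ i, g t (S i))) ∂μ ≤ ∫ q, H q ∂(μ.prod μ) := by
    rw [integral_prod _ hHi]
    refine integral_mono ?_ hHi.integral_prod_left h1
    have hm : Measurable fun S : Fin n → Z => ⨆ t, (n * ∫ z, g t z ∂P - ∑ i, g t (S i)) :=
      Measurable.iSup fun t => measurable_const.sub (Finset.measurable_sum _ fun i _ => hgi t i)
    refine integrable_bdd _ (n * B) _ hm fun S => ?_
    refine abs_sup_le _ _ fun t => ?_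
    have hp0 : 0 ≤ ∫ z, g t z ∂P := integral_nonneg (h0 t)
    have hpB : ∫ z, g t z ∂P ≤ B := by
      have := integral_mono (integrable_bdd P B _ (hg t) (habs t)) (integrable_const B) (hB t)
      simpa using this
    have hs0 : 0 ≤ ∑ i, g t (S i) := Finset.sum_nonneg fun i _ => h0 _ _
    have hsB : ∑ i, g t (S i) ≤ n * B :=
      (Finset.sum_le_card_nsmul _ _ B fun i _ => hB _ _).trans (by simp)
    have : (n : ℝ) * ∫ z, g t z ∂P ≤ n * B := mul_le_mul_of_nonneg_left hpB (Nat.cast_nonneg _)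
    have : 0 ≤ (n : ℝ) * ∫ z, g t z ∂P := by positivity
    rw [abs_le]; constructor <;> linarith
  -- pass to pairs
  have hmp := measurePreserving_arrowProdEquivProdArrow Z Z (Fin n) (fun _ => P) (fun _ => P)
  set G : (Fin n → Z × Z) → ℝ := fun ω => ⨆ t, ∑ i, (g t (ω i).2 - g t (ω i).1) with hG
  have h3 : ∫ q, H q ∂(μ.prod μ) = ∫ ω, G ω ∂ν := by
    rw [← hmp.map_eq, integral_map hmp.measurable.aemeasurable hHm.aestronglyMeasurable]
    rfl
  have hgp2 : ∀ t i, Measurable fun ω : Fin n → Z × Z => g t (ω i).2 := fun t i =>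
    (hg t).comp (measurable_snd.comp (measurable_pi_apply i))
  have hgp1 : ∀ t i, Measurable fun ω : Fin n → Z × Z => g t (ω i).1 := fun t i =>
    (hg t).comp (measurable_fst.comp (measurable_pi_apply i))
  have hGm : Measurable G := by
    refine Measurable.iSup fun t => Finset.measurable_sum _ fun i _ => ?_
    exact (hgp2 t i).sub (hgp1 t i)
  have hsw : MeasurePreserving (fun (ω : Fin n → Z × Z) i => (cond (σ i) id Prod.swap) (ω i)) ν ν := by
    refine measurePreserving_pi _ _ fun i => ?_
    cases σ i
    · exact Measure.measurePreserving_swap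
    · exact MeasurePreserving.id _
  have h4 : ∫ ω, G ω ∂ν = ∫ ω, (⨆ t, ∑ i, sgB (σ i) * (g t (ω i).2 - g t (ω i).1)) ∂ν := by
    conv_lhs => rw [← hsw.map_eq]
    rw [integral_map hsw.measurable.aemeasurable hGm.aestronglyMeasurable]
    congr 1
    ext ω
    simp only [hG]
    congr 1
    ext t
    refine Finset.sum_congr rfl fun i _ => ?_
    cases σ i <;> simp [sgB]
  -- split
  have hfst : MeasurePreserving (fun (ω : Fin n → Z × Z) i => (ω i).1) ν μ :=
    measurePreserving_pi _ _ fun i => measurePreserving_fst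
  have hsnd : MeasurePreserving (fun (ω : Fin n → Z × Z) i => (ω i).2) ν μ :=
    measurePreserving_pi _ _ fun i => measurePreserving_snd
  have hs1 : ∀ i, |sgB (σ i)| = 1 := fun i => abs_sgB _
  have hs2 : ∀ i, |sgB (!σ i)| = 1 := fun i => abs_sgB _
  have m1 := meas_rad_inner g hg n fun i => sgB (σ i)
  have m2 := meas_rad_inner g hg n fun i => sgB (!σ i)
  have i1 : Integrable (fun ω : Fin n → Z × Z => ⨆ t, ∑ i, sgB (σ i) * g t (ω i).2) ν :=
    integrable_bdd ν _ _ (m1.comp hsnd.measurable)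
    fun ω => bd_rad_inner g B h0 hB n _ hs1 _
  have i2 : Integrable (fun ω : Fin n → Z × Z => ⨆ t, ∑ i, sgB (!σ i) * g t (ω i).1) ν :=
    integrable_bdd ν _ _ (m2.comp hfst.measurable)
    fun ω => bd_rad_inner g B h0 hB n _ hs2 _
  have e1 : ∫ S, (⨆ t, ∑ i, sgB (σ i) * g t (S i)) ∂μ =
      ∫ ω, (⨆ t, ∑ i, sgB (σ i) * g t (ω i).2) ∂ν := by
    rw [← hsnd.map_eq, integral_map hsnd.measurable.aemeasurable m1.aestronglyMeasurable]
  have e2 : ∫ S, (⨆ t, ∑ i, sgB (!σ i) * g t (S i)) ∂μ =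
      ∫ ω, (⨆ t, ∑ i, sgB (!σ i) * g t (ω i).1) ∂ν := by
    rw [← hfst.map_eq, integral_map hfst.measurable.aemeasurable m2.aestronglyMeasurable]
  rw [e1, e2, ← integral_add i1 i2]
  refine h2.trans ?_
  rw [h3, h4]
  refine integral_mono ?_ (i1.add i2) ?_
  · have hm : Measurable fun ω : Fin n → Z × Z =>
        ⨆ t, ∑ i, sgB (σ i) * (g t (ω i).2 - g t (ω i).1) := by
      refine Measurable.iSup fun t => Finset.measurable_sum _ fun i _ => ?_
      exact ((hgp2 t i).sub (hgp1 t i)).const_mul _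
    refine integrable_bdd _ (n * B) _ hm fun ω => ?_
    refine abs_sup_le _ _ fun t => ?_
    refine (Finset.abs_sum_le_sum_abs _ _).trans ?_
    refine (Finset.sum_le_card_nsmul _ _ B fun i _ => ?_).trans (by simp)
    rw [abs_mul, hs1, one_mul]
    exact habs2 _ _ _
  · intro ω
    refine ciSup_le fun t => ?_
    have : ∑ i, sgB (σ i) * (g t (ω i).2 - g t (ω i).1) =
        ∑ i, sgB (σ i) * g t (ω i).2 + ∑ i, sgB (!σ i) * g t (ω i).1 := by
      rw [← Finset.sum_add_distrib]
      refine Finset.sum_congr rfl fun i _ => ?_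
      rw [sgB_not]; ring
    rw [this]
    exact add_le_add (sup_le_fin (fun t => ∑ i, sgB (σ i) * g t (ω i).2) t)
      (sup_le_fin (fun t => ∑ i, sgB (!σ i) * g t (ω i).1) t)

/-- flipping all signs -/
def flipE (κ : Type*) : (κ → Bool) ≃ (κ → Bool) where
  toFun σ i := !σ i
  invFun σ i := !σ i
  left_inv σ := by ext i; simp
  right_inv σ := by ext i; simp

lemma symm_main {Z ι : Type*} [MeasurableSpace Z] (P : Measure Z) [IsProbabilityMeasure P]
    [Fintype ι] [Nonempty ι] (g : ι → Z → ℝ) (hg : ∀ t, Measurable (g t)) (B : ℝ)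
    (h0 : ∀ t z, 0 ≤ g t z) (hB : ∀ t z, g t z ≤ B) (n : ℕ) :
    ∫ S, (⨆ t, (n * ∫ z, g t z ∂P - ∑ i, g t (S i))) ∂(Measure.pi fun _ : Fin n => P) ≤
      2 * ∫ S, radSum g S ∂(Measure.pi fun _ : Fin n => P) := by
  set μ := Measure.pi fun _ : Fin n => P with hμ
  set A : (Fin n → Bool) → ℝ := fun σ => ∫ S, (⨆ t, ∑ i, sgB (σ i) * g t (S i)) ∂μ with hA
  have h1 := fun σ => symm_step P g hg B h0 hB n σ
  have h2 : ∫ S, (⨆ t, (n * ∫ z, g t z ∂P - ∑ i, g t (S i))) ∂μ ≤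
      𝔼 σ, (A σ + A (flipE _ σ)) := Finset.le_expect Finset.univ_nonempty fun σ _ => h1 σ
  rw [Finset.expect_add_distrib, ← Fintype.expect_equiv (flipE _) (fun σ => A (flipE _ σ)) A
    (fun _ => rfl)] at h2
  have h3 : ∫ S, radSum g S ∂μ = 𝔼 σ, A (flipE _ σ) := by
    rw [Fintype.expect_equiv (flipE _) (fun σ => A (flipE _ σ)) A (fun _ => rfl)]
    simp only [radSum, Fintype.expect_eq_sum_div_card, hA]
    rw [integral_div, integral_finsetSum]
    intro σ _
    exact integrable_bdd μ _ _ (meas_rad_inner g hg n _)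
      fun S => bd_rad_inner g B h0 hB n _ (fun i => abs_sgB _) _
  rw [h3]
  linarith

lemma learn_finite {Z ι : Type*} [MeasurableSpace Z] (P : Measure Z) [IsProbabilityMeasure P]
    [Fintype ι] [Nonempty ι] (g : ι → Z → ℝ) (hg : ∀ t, Measurable (g t)) (B : ℝ)
    (h0 : ∀ t z, 0 ≤ g t z) (hB : ∀ t z, g t z ≤ B) (n : ℕ)
    (hn : 1 ≤ n) (hB0 : 0 < B) (δ : ℝ) (hδ : δ ∈ Set.Ioo (0 : ℝ) 1) :
    (Measure.pi fun _ : Fin n => P).real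
      {S | ∃ t, (1 / (n : ℝ)) * ∑ i, g t (S i) + 3 * B * √(log (2 / δ) / (2 * n))
        + (2 / n) * radSum g S < ∫ z, g t z ∂P} ≤ δ / 2 := by
  set μ := Measure.pi fun _ : Fin n => P with hμ
  have hn' : (0 : ℝ) < n := by exact_mod_cast hn
  have hgi : ∀ t i, Measurable fun S : Fin n → Z => g t (S i) := fun t i =>
    (hg t).comp (measurable_pi_apply i)
  have habs2 : ∀ t z z', |g t z - g t z'| ≤ B := fun t z z' => by
    rw [abs_le]; constructor <;> linarith [h0 t z, h0 t z', hB t z, hB t z']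
  have habs : ∀ t z, |g t z| ≤ B := fun t z => by rw [abs_of_nonneg (h0 t z)]; exact hB t z
  set Φ : (Fin n → Z) → ℝ := fun S => ⨆ t, (n * ∫ z, g t z ∂P - ∑ i, g t (S i)) with hΦ
  have hΦm : Measurable Φ :=
    Measurable.iSup fun t => measurable_const.sub (Finset.measurable_sum _ fun i _ => hgi t i)
  have hRm : Measurable fun S : Fin n → Z => radSum g S := by
    unfold radSum
    simp only [Fintype.expect_eq_sum_div_card]
    exact (Finset.measurable_sum _ fun σ _ => meas_rad_inner g hg n _).div_const _
  set F : (Fin n → Z) → ℝ := fun S => Φ S - 2 * radSum g S with hF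
  have hFm : Measurable F := hΦm.sub (hRm.const_mul 2)
  have hΦd : ∀ S i z, |Φ (Function.update S i z) - Φ S| ≤ B := by
    intro S i z
    refine sup_diff _ _ _ fun t => ?_
    have := sum_update_sub (fun _ => g t) S i z
    have e : (n * ∫ z, g t z ∂P - ∑ j, g t (Function.update S i z j)) -
      (n * ∫ z, g t z ∂P - ∑ j, g t (S j)) = g t (S i) - g t z := by linarith
    rw [e]; exact habs2 _ _ _
  have hRd : ∀ (S : Fin n → Z) i z, |radSum g (Function.update S i z) - radSum g S| ≤ B := by
    intro S i z
    unfold radSum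
    rw [← Finset.expect_sub_distrib]
    refine (Finset.abs_expect_le _ _).trans ?_
    refine Finset.expect_le Finset.univ_nonempty fun σ _ => ?_
    refine sup_diff _ _ _ fun t => ?_
    rw [sum_update_sub (fun j z => sgB (σ j) * g t z) S i z, ← mul_sub, abs_mul, abs_sgB, one_mul]
    exact habs2 _ _ _
  have hFd : ∀ S i z, |F (Function.update S i z) - F S| ≤ 3 * B := by
    intro S i z
    have a1 := abs_le.1 (hΦd S i z)
    have a2 := abs_le.1 (hRd S i z)
    simp only [hF]
    rw [abs_le]; constructor <;> linarith [a1.1, a1.2, a2.1, a2.2]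
  have hFE : ∫ S, F S ∂μ ≤ 0 := by
    have := symm_main P g hg B h0 hB n
    simp only [hF]
    rw [integral_sub, integral_const_mul]
    · linarith
    · exact integrable_of_osc _ _ _ hΦm (bdd_of_diff _ _ _ hΦd)
    · exact (integrable_of_osc _ _ _ hRm (bdd_of_diff _ _ _ hRd)).const_mul 2
  have hlog : 0 < log (2 / δ) := Real.log_pos (by rw [lt_div_iff₀ hδ.1]; linarith [hδ.2])
  set τ := n * (3 * B * √(log (2 / δ) / (2 * n))) with hτ
  have hm := mcdiarmid P n hn (3 * B) (by positivity) F hFm hFd hFE τ (by positivity)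
  have hexp : exp (- 2 * τ ^ 2 / (n * (3 * B) ^ 2)) = δ / 2 := by
    have : - 2 * τ ^ 2 / (n * (3 * B) ^ 2) = - log (2 / δ) := by
      rw [hτ, mul_pow, mul_pow, Real.sq_sqrt (by positivity)]
      field_simp
    rw [this, Real.exp_neg, Real.exp_log (by have := hδ.1; positivity), inv_div]
  rw [hexp] at hm
  refine le_trans (measureReal_mono ?_) hm
  rintro S ⟨t, ht⟩
  simp only [Set.mem_ofPred_eq]
  have h5 := sup_le_fin (fun t => (n * ∫ z, g t z ∂P - ∑ i, g t (S i))) t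
  have h6 : Φ S = F S + 2 * radSum g S := by simp [hF]
  have h7 := mul_lt_mul_of_pos_left ht hn'
  have h8 : n * ((1 / (n : ℝ)) * ∑ i, g t (S i) + 3 * B * √(log (2 / δ) / (2 * n))
        + (2 / n) * radSum g S) = ∑ i, g t (S i) + τ + 2 * radSum g S := by
    rw [hτ]; field_simp
  rw [h8] at h7
  have h9 : n * ∫ z, g t z ∂P - ∑ i, g t (S i) ≤ Φ S := h5
  linarith


/-! ### Part 3: contraction and Khintchine-type bounds -/

lemma expect_cons {Ω : Type*} [Fintype Ω] (n : ℕ) (f : (Fin (n + 1) → Ω) → ℝ) :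
    𝔼 σ, f σ = 𝔼 η : Ω, 𝔼 σ : Fin n → Ω, f (Fin.cons η σ) := by
  rw [← Finset.expect_product' Finset.univ Finset.univ
    (fun (η : Ω) (σ : Fin n → Ω) => f (Fin.cons η σ)), Finset.univ_product_univ]
  symm
  exact Fintype.expect_equiv (Fin.consEquiv fun _ => Ω) _ _ fun _ => rfl

lemma expect_flip {κ : Type*} [Fintype κ] [DecidableEq κ] (f : (κ → Bool) → ℝ) :
    𝔼 ε : κ → Bool, f (fun i => !ε i) = 𝔼 ε : κ → Bool, f ε :=
  Fintype.expect_equiv (flipE κ) _ _ fun _ => rfl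

lemma expect_bool (f : Bool → ℝ) : 𝔼 b, f b = (f true + f false) / 2 := by
  rw [Fintype.expect_eq_sum_div_card]
  simp

/-- flipping all signs but one -/
def flipBut {κ : Type*} [DecidableEq κ] (k : κ) : (κ → Bool) ≃ (κ → Bool) where
  toFun σ i := if i = k then σ i else !σ i
  invFun σ i := if i = k then σ i else !σ i
  left_inv σ := by ext i; by_cases h : i = k <;> simp [h]
  right_inv σ := by ext i; by_cases h : i = k <;> simp [h]

lemma abs_le_expect {c : ℕ} (x : Fin c → ℝ) (k : Fin c) :
    |x k| ≤ 𝔼 ε : Fin c → Bool, |∑ j, sgB (ε j) * x j| := by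
  have h := Fintype.expect_equiv (flipBut k)
    (fun ε => |∑ j, sgB (flipBut k ε j) * x j|) (fun ε => |∑ j, sgB (ε j) * x j|) fun _ => rfl
  have h2 : 2 * |x k| ≤ 𝔼 ε : Fin c → Bool,
      (|∑ j, sgB (ε j) * x j| + |∑ j, sgB (flipBut k ε j) * x j|) := by
    refine Finset.le_expect Finset.univ_nonempty fun ε _ => ?_
    refine le_trans ?_ (abs_add_le _ _)
    rw [← Finset.sum_add_distrib, Finset.sum_eq_single k]
    · simp only [flipBut, Equiv.coe_fn_mk, if_true, ← two_mul, abs_mul, abs_sgB]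
      simp
    · intro j _ hj
      simp only [flipBut, Equiv.coe_fn_mk, if_neg hj, sgB_not]
      ring
    · simp
  rw [Finset.expect_add_distrib, h] at h2
  linarith

lemma contr_step {ι : Type*} [Finite ι] [Nonempty ι] {c : ℕ} (g ψ : ι → ℝ) (a : ι → Fin c → ℝ)
    (C : ℝ) (h : ∀ s t, |ψ s - ψ t| ≤
      C * 𝔼 ε : Fin c → Bool, |∑ j, sgB (ε j) * (a s j - a t j)|) :
    𝔼 b : Bool, ⨆ t, (g t + sgB b * ψ t) ≤
      𝔼 ε : Fin c → Bool, ⨆ t, (g t + C * ∑ j, sgB (ε j) * a t j) := by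
  rw [expect_bool]
  obtain ⟨s, hs⟩ := exists_eq_ciSup_of_finite (f := fun t => g t + sgB true * ψ t)
  obtain ⟨t, ht⟩ := exists_eq_ciSup_of_finite (f := fun t => g t + sgB false * ψ t)
  rw [← hs, ← ht]
  have st : sgB true = 1 := rfl
  have sf : sgB false = -1 := rfl
  simp only [st, sf]
  set M : (Fin c → Bool) → ℝ := fun ε => ⨆ t, (g t + C * ∑ j, sgB (ε j) * a t j) with hM
  have hfl : 𝔼 ε : Fin c → Bool, M (fun i => !ε i) = 𝔼 ε : Fin c → Bool, M ε := expect_flip M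
  have h1 : g s + g t + C * 𝔼 ε : Fin c → Bool, |∑ j, sgB (ε j) * (a s j - a t j)| ≤
      𝔼 ε : Fin c → Bool, (M ε + M (fun i => !ε i)) := by
    rw [Finset.mul_expect, ← Fintype.expect_const (ι := Fin c → Bool) (g s + g t),
      ← Finset.expect_add_distrib]
    refine Finset.expect_le_expect fun ε _ => ?_
    have key : ∀ u, g u + C * ∑ j, sgB (ε j) * a u j ≤ M ε := fun u =>
      sup_le_fin (fun t => g t + C * ∑ j, sgB (ε j) * a t j) u
    have key' : ∀ u, g u - C * ∑ j, sgB (ε j) * a u j ≤ M (fun i => !ε i) := fun u => by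
      have := sup_le_fin (fun t => g t + C * ∑ j, sgB (!ε j) * a t j) u
      simp only [sgB_not, neg_mul, Finset.sum_neg_distrib, mul_neg] at this
      simp only [hM, sgB_not, neg_mul, Finset.sum_neg_distrib, mul_neg]
      linarith
    have e : ∑ j, sgB (ε j) * (a s j - a t j) =
        ∑ j, sgB (ε j) * a s j - ∑ j, sgB (ε j) * a t j := by
      rw [← Finset.sum_sub_distrib]
      exact Finset.sum_congr rfl fun j _ => by ring
    rw [e]
    have k1 := key s
    have k2 := key t
    have k3 := key' s
    have k4 := key' t
    rcases abs_cases (∑ j, sgB (ε j) * a s j - ∑ j, sgB (ε j) * a t j) with ⟨e1, _⟩ | ⟨e1, _⟩ <;>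
    · rw [e1]
      linarith
  rw [Finset.expect_add_distrib, hfl] at h1
  have h2 := (abs_le.1 (h s t)).2
  linarith

lemma contraction {ι : Type*} [Finite ι] [Nonempty ι] {c : ℕ} (C : ℝ) (n : ℕ)
    (ψ : Fin n → ι → ℝ) (a : Fin n → ι → Fin c → ℝ)
    (h : ∀ i s t, |ψ i s - ψ i t| ≤
      C * 𝔼 ε : Fin c → Bool, |∑ j, sgB (ε j) * (a i s j - a i t j)|) (g : ι → ℝ) :
    𝔼 σ : Fin n → Bool, ⨆ t, (g t + ∑ i, sgB (σ i) * ψ i t) ≤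
      𝔼 ε : Fin n → Fin c → Bool, ⨆ t, (g t + C * ∑ i, ∑ j, sgB (ε i j) * a i t j) := by
  induction n generalizing g with
  | zero => simp
  | succ n ih =>
    rw [expect_cons, expect_cons]
    have h1 : ∀ b : Bool, 𝔼 σ : Fin n → Bool,
        ⨆ t, (g t + ∑ i, sgB ((Fin.cons b σ : Fin (n + 1) → Bool) i) * ψ i t) ≤
        𝔼 ε : Fin n → Fin c → Bool, ⨆ t, ((g t + C * ∑ i : Fin n, ∑ j, sgB (ε i j) * a i.succ t j)
          + sgB b * ψ 0 t) := by
      intro b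
      have := ih (fun i => ψ i.succ) (fun i => a i.succ) (fun i => h i.succ)
        (fun t => g t + sgB b * ψ 0 t)
      simp only [Fin.sum_univ_succ, Fin.cons_zero, Fin.cons_succ]
      simp only [add_assoc] at this ⊢
      refine this.trans (le_of_eq ?_)
      simp only [add_comm]
    refine (Finset.expect_le_expect fun b _ => h1 b).trans ?_
    refine (Finset.expect_comm _ _ _).le.trans ?_
    refine le_trans ?_ (Finset.expect_comm _ _ _).le
    refine Finset.expect_le_expect fun ε _ => ?_
    refine (contr_step _ _ (a 0) C (h 0)).trans (le_of_eq ?_)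
    simp only [Fin.sum_univ_succ, Fin.cons_zero, Fin.cons_succ]
    refine Finset.expect_congr rfl fun η _ => ?_
    congr 1
    ext t
    ring

lemma pow_maj (u1 u2 U1 U2 : ℝ) (h0 : 0 ≤ U2) (hs : u1 + u2 = U1 + U2) (h1 : U2 ≤ u1)
    (h2 : u1 ≤ U1) (m : ℕ) : u1 ^ m + u2 ^ m ≤ U1 ^ m + U2 ^ m := by
  rcases eq_or_lt_of_le (h1.trans h2) with h | h
  · have : u1 = U1 := le_antisymm h2 (h ▸ h1)
    have : u2 = U2 := by linarith
    subst_vars; rfl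
  · set α := (u1 - U2) / (U1 - U2) with hα
    have hp : 0 < U1 - U2 := by linarith
    have ha0 : 0 ≤ α := div_nonneg (by linarith) hp.le
    have ha1 : α ≤ 1 := by rw [hα, div_le_one hp]; linarith
    have hm : α * (U1 - U2) = u1 - U2 := by rw [hα]; field_simp
    have hc := convexOn_pow (𝕜 := ℝ) m
    have hU1 : U1 ∈ Set.Ici (0 : ℝ) := by simp; linarith
    have hU2 : U2 ∈ Set.Ici (0 : ℝ) := h0
    have c1 := hc.2 hU1 hU2 ha0 (sub_nonneg.2 ha1) (by ring)
    have c2 := hc.2 hU1 hU2 (sub_nonneg.2 ha1) ha0 (by ring)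
    simp only [smul_eq_mul] at c1 c2
    have e1 : α * U1 + (1 - α) * U2 = u1 := by linarith
    have e2 : (1 - α) * U1 + α * U2 = u2 := by linarith
    rw [e1] at c1
    rw [e2] at c2
    linarith

lemma cosh_two_point {E : Type*} [NormedAddCommGroup E] [InnerProductSpace ℝ E] (x v : E) :
    cosh ‖x + v‖ + cosh ‖x - v‖ ≤ 2 * (cosh ‖x‖ * cosh ‖v‖) := by
  have e : 2 * (cosh ‖x‖ * cosh ‖v‖) = cosh (‖x‖ + ‖v‖) + cosh (‖x‖ - ‖v‖) := by
    rw [Real.cosh_add, Real.cosh_sub]; ring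
  rw [e]
  refine hasSum_le (fun m => ?_) ((Real.hasSum_cosh ‖x + v‖).add (Real.hasSum_cosh ‖x - v‖))
    ((Real.hasSum_cosh (‖x‖ + ‖v‖)).add (Real.hasSum_cosh (‖x‖ - ‖v‖)))
  rw [← add_div, ← add_div]
  refine div_le_div_of_nonneg_right ?_ (by positivity)
  simp only [pow_mul]
  have p := norm_add_sq_real x v
  have q := norm_sub_sq_real x v
  have cs := abs_le.1 (abs_real_inner_le_norm x v)
  refine pow_maj _ _ _ _ (sq_nonneg _) ?_ ?_ ?_ m
  · rw [p, q]; ring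
  · rw [p]; linarith [cs.1, sub_sq ‖x‖ ‖v‖]
  · rw [p]; linarith [cs.2, add_sq ‖x‖ ‖v‖]

lemma cosh_sum {E : Type*} [NormedAddCommGroup E] [InnerProductSpace ℝ E] {c : ℕ} (j : Fin c)
    (n : ℕ) (v : Fin n → E) (x : E) :
    𝔼 ε : Fin n → Fin c → Bool, cosh ‖x + ∑ i, sgB (ε i j) • v i‖ ≤
      cosh ‖x‖ * ∏ i, cosh ‖v i‖ := by
  induction n generalizing x with
  | zero => simp
  | succ n ih =>
    rw [expect_cons]
    have h1 : ∀ η : Fin c → Bool, 𝔼 ε : Fin n → Fin c → Bool,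
        cosh ‖x + ∑ i, sgB ((Fin.cons η ε : Fin (n + 1) → Fin c → Bool) i j) • v i‖ ≤
        cosh ‖x + sgB (η j) • v 0‖ * ∏ i : Fin n, cosh ‖v i.succ‖ := by
      intro η
      have := ih (fun i => v i.succ) (x + sgB (η j) • v 0)
      simpa only [Fin.sum_univ_succ, Fin.cons_zero, Fin.cons_succ, add_assoc] using this
    refine (Finset.expect_le_expect fun b _ => h1 b).trans ?_
    rw [← Finset.expect_mul, Fin.prod_univ_succ, ← mul_assoc]
    refine mul_le_mul_of_nonneg_right ?_ (Finset.prod_nonneg fun i _ => (Real.cosh_pos _).le)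
    have hf := expect_flip (fun η : Fin c → Bool => cosh ‖x + sgB (η j) • v 0‖)
    have h2 : 𝔼 η : Fin c → Bool, (cosh ‖x + sgB (η j) • v 0‖ + cosh ‖x + sgB (!η j) • v 0‖) ≤
        2 * (cosh ‖x‖ * cosh ‖v 0‖) := by
      refine Finset.expect_le Finset.univ_nonempty fun η _ => ?_
      have := cosh_two_point x (sgB (η j) • v 0)
      rw [norm_smul, Real.norm_eq_abs, abs_sgB, one_mul] at this
      rwa [sgB_not, neg_smul, ← sub_eq_add_neg]
    rw [Finset.expect_add_distrib] at h2
    simp only at hf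
    rw [hf] at h2
    linarith

lemma pow_le_cosh (q y : ℝ) (hq : 0 < q) (hy : 0 ≤ y) :
    y ^ q ≤ 2 * (q ^ q * exp (-q)) * cosh y := by
  have h1 : y / q ≤ exp (y / q - 1) := by
    have := Real.add_one_le_exp (y / q - 1)
    linarith
  have h2 : (y / q) ^ q ≤ exp (y - q) := by
    have := Real.rpow_le_rpow (by positivity) h1 hq.le
    rw [← Real.exp_mul] at this
    convert this using 2
    field_simp
  rw [Real.div_rpow hy hq.le, div_le_iff₀ (by positivity)] at h2
  have h3 : exp y ≤ 2 * cosh y := by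
    rw [Real.cosh_eq]; linarith [exp_pos (-y)]
  calc y ^ q ≤ exp (y - q) * q ^ q := h2
    _ = q ^ q * exp (-q) * exp y := by rw [sub_eq_add_neg, Real.exp_add]; ring
    _ ≤ q ^ q * exp (-q) * (2 * cosh y) := mul_le_mul_of_nonneg_left h3 (by positivity)
    _ = _ := by ring

lemma khintchine {E : Type*} [NormedAddCommGroup E] [InnerProductSpace ℝ E] {c : ℕ} (j : Fin c)
    (n : ℕ) (v : Fin n → E) (q : ℝ) (hq : 2 * log 2 ≤ q) :
    𝔼 ε : Fin n → Fin c → Bool, ‖∑ i, sgB (ε i j) • v i‖ ^ q ≤ (√(q * ∑ i, ‖v i‖ ^ 2)) ^ q := by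
  have hq0 : 0 < q := lt_of_lt_of_le (by have := Real.log_pos (one_lt_two); linarith) hq
  set V := ∑ i, ‖v i‖ ^ 2 with hV
  have hV0 : 0 ≤ V := Finset.sum_nonneg fun i _ => sq_nonneg _
  rcases eq_or_lt_of_le hV0 with h | h
  · have hv : ∀ i, v i = 0 := by
      intro i
      have := (Finset.sum_eq_zero_iff_of_nonneg (fun i _ => sq_nonneg (‖v i‖))).1 h.symm i
        (Finset.mem_univ _)
      simpa using this
    simp [hv, Real.zero_rpow hq0.ne', ← h]
  · set l := √(q / V) with hl
    have hl0 : 0 < l := Real.sqrt_pos.2 (by positivity)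
    have hl2 : l ^ 2 = q / V := Real.sq_sqrt (by positivity)
    have h1 := cosh_sum j n (fun i => l • v i) 0
    have h2 : ∏ i, cosh ‖l • v i‖ ≤ exp (q / 2) := by
      calc ∏ i, cosh ‖l • v i‖ ≤ ∏ i, exp (‖l • v i‖ ^ 2 / 2) :=
            Finset.prod_le_prod (fun i _ => (Real.cosh_pos _).le)
              fun i _ => Real.cosh_le_exp_half_sq _
        _ = exp (q / 2) := by
            rw [← Real.exp_sum]
            congr 1
            have : ∀ i, ‖l • v i‖ ^ 2 / 2 = (q / V) / 2 * ‖v i‖ ^ 2 := by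
              intro i
              rw [norm_smul, mul_pow, Real.norm_eq_abs, sq_abs, hl2]; ring
            simp only [this]
            rw [← Finset.mul_sum, ← hV]
            field_simp
    have h3 : ∀ ε : Fin n → Fin c → Bool, ‖∑ i, sgB (ε i j) • v i‖ ^ q ≤
        (l ^ q)⁻¹ * (2 * (q ^ q * exp (-q))) * cosh ‖0 + ∑ i, sgB (ε i j) • l • v i‖ := by
      intro ε
      have e : ∑ i, sgB (ε i j) • l • v i = l • ∑ i, sgB (ε i j) • v i := by
        rw [Finset.smul_sum]
        exact Finset.sum_congr rfl fun i _ => smul_comm _ _ _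
      rw [zero_add, e, norm_smul, Real.norm_of_nonneg hl0.le]
      have := pow_le_cosh q (l * ‖∑ i, sgB (ε i j) • v i‖) hq0 (by positivity)
      rw [Real.mul_rpow hl0.le (norm_nonneg _)] at this
      have hlq : 0 < l ^ q := by positivity
      rw [mul_assoc, ← div_eq_inv_mul, le_div_iff₀ hlq]
      linarith
    refine (Finset.expect_le_expect fun ε _ => h3 ε).trans ?_
    rw [← Finset.mul_expect]
    rw [norm_zero, Real.cosh_zero, one_mul] at h1
    refine (mul_le_mul_of_nonneg_left (h1.trans h2) (by positivity)).trans ?_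
    have h4 : 2 ≤ exp (q / 2) := by
      rw [← Real.log_le_iff_le_exp (by norm_num)]; linarith
    have h5 : 2 * (exp (-q) * exp (q / 2)) ≤ 1 := by
      rw [← Real.exp_add, show -q + q / 2 = -(q / 2) by ring, Real.exp_neg,
        ← div_eq_mul_inv, div_le_one (exp_pos _)]
      exact h4
    have h6 : √(q * V) = q / l := by
      rw [eq_div_iff hl0.ne', hl, ← Real.sqrt_mul (by positivity)]
      rw [show q * V * (q / V) = q ^ 2 by field_simp, Real.sqrt_sq hq0.le]
    rw [h6, Real.div_rpow hq0.le hl0.le]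
    have h7 : 0 < (l ^ q)⁻¹ * q ^ q := by positivity
    calc _ = (l ^ q)⁻¹ * q ^ q * (2 * (exp (-q) * exp (q / 2))) := by ring
      _ ≤ (l ^ q)⁻¹ * q ^ q * 1 := mul_le_mul_of_nonneg_left h5 h7.le
      _ = _ := by rw [mul_one, div_eq_inv_mul]

lemma expect_jensen {κ : Type*} [Fintype κ] [Nonempty κ] (f : κ → ℝ) (hf : ∀ k, 0 ≤ f k) (q : ℝ)
    (hq : 1 ≤ q) : (𝔼 k, f k) ^ q ≤ 𝔼 k, f k ^ q := by
  have := Real.rpow_arith_mean_le_arith_mean_rpow Finset.univ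
    (fun _ : κ => (1 / (Fintype.card κ : ℝ))) f (fun _ _ => by positivity) (by simp)
    (fun k _ => hf k) hq
  simp only [Fintype.expect_eq_sum_div_card, ← Finset.mul_sum] at this ⊢
  rwa [one_div_mul_eq_div, one_div_mul_eq_div] at this

lemma expect_lq {E : Type*} [NormedAddCommGroup E] [InnerProductSpace ℝ E] {c : ℕ}
    (n : ℕ) (v : Fin n → E) (q : ℝ) (hq : 2 * log 2 ≤ q) (hq1 : 1 ≤ q) :
    𝔼 ε : Fin n → Fin c → Bool, (∑ j, ‖∑ i, sgB (ε i j) • v i‖ ^ q) ^ (1 / q) ≤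
      (c : ℝ) ^ (1 / q) * √(q * ∑ i, ‖v i‖ ^ 2) := by
  have hq0 : 0 < q := by linarith
  have h0 : ∀ ε : Fin n → Fin c → Bool, 0 ≤ ∑ j, ‖∑ i, sgB (ε i j) • v i‖ ^ q := fun ε =>
    Finset.sum_nonneg fun j _ => by positivity
  have h1 := expect_jensen (fun ε : Fin n → Fin c → Bool =>
    (∑ j, ‖∑ i, sgB (ε i j) • v i‖ ^ q) ^ (1 / q)) (fun ε => by have := h0 ε; positivity) q hq1
  have h2 : ∀ ε : Fin n → Fin c → Bool, ((∑ j, ‖∑ i, sgB (ε i j) • v i‖ ^ q) ^ (1 / q)) ^ q =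
      ∑ j, ‖∑ i, sgB (ε i j) • v i‖ ^ q := fun ε => by
    rw [← Real.rpow_mul (h0 ε), one_div_mul_cancel hq0.ne', Real.rpow_one]
  simp only [h2] at h1
  rw [Finset.expect_sum_comm] at h1
  have h3 := h1.trans (Finset.sum_le_sum fun j _ => khintchine j n v q hq)
  rw [Finset.sum_const, Finset.card_univ, Fintype.card_fin, nsmul_eq_mul] at h3
  refine (Real.rpow_le_rpow_iff ?_ ?_ hq0).1 (h3.trans (le_of_eq ?_))
  · exact Finset.expect_nonneg fun ε _ => by have := h0 ε; positivity
  · positivity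
  · rw [Real.mul_rpow (by positivity) (by positivity), ← Real.rpow_mul (by positivity),
      one_div_mul_cancel hq0.ne', Real.rpow_one]

/-! ### Part 4: the margin, Hölder, and the bound of the Rademacher sum -/

lemma margin_diff {X : Type*} {c : ℕ} (hc : 2 ≤ c) (h h' : X → Fin c → ℝ) (x : X) (y : Fin c) :
    ∃ k, |mcMargin h x y - mcMargin h' x y| ≤ |h x y - h' x y| + |h x k - h' x k| := by
  have : Nonempty (Fin c) := ⟨y⟩
  obtain ⟨k, hk⟩ := Finite.exists_max (fun k => |h x k - h' x k|)
  refine ⟨k, ?_⟩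
  have : Nontrivial (Fin c) := Fin.nontrivial_iff_two_le.2 hc
  obtain ⟨y0, hy0⟩ := exists_ne y
  have : Nonempty {y' : Fin c // y' ≠ y} := ⟨⟨y0, hy0⟩⟩
  have h1 := sup_diff (fun y' : {y' : Fin c // y' ≠ y} => h x y'.1)
    (fun y' : {y' : Fin c // y' ≠ y} => h' x y'.1) _ (fun t => hk t.1)
  unfold mcMargin
  have e : (h x y - ⨆ y' : {y' : Fin c // y' ≠ y}, h x y'.1) -
      (h' x y - ⨆ y' : {y' : Fin c // y' ≠ y}, h' x y'.1) =
      (h x y - h' x y) - ((⨆ y' : {y' : Fin c // y' ≠ y}, h x y'.1) -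
        ⨆ y' : {y' : Fin c // y' ≠ y}, h' x y'.1) := by ring
  rw [e]
  exact (abs_sub _ _).trans (by gcongr)

lemma norm2p_nonneg {E : Type*} [NormedAddCommGroup E] {c : ℕ} (p : ℝ) (w : Fin c → E) :
    0 ≤ norm2p p w := by
  unfold norm2p
  have : 0 ≤ ∑ j, ‖w j‖ ^ p := Finset.sum_nonneg fun j _ => by positivity
  positivity

lemma norm2p_pow {E : Type*} [NormedAddCommGroup E] {c : ℕ} (p : ℝ) (hp : 0 < p)
    (w : Fin c → E) : norm2p p w ^ p = ∑ j, ‖w j‖ ^ p := by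
  unfold norm2p
  have : 0 ≤ ∑ j, ‖w j‖ ^ p := Finset.sum_nonneg fun j _ => by positivity
  rw [← Real.rpow_mul this, one_div_mul_cancel hp.ne', Real.rpow_one]

lemma norm_le_norm2p {E : Type*} [NormedAddCommGroup E] {c : ℕ} (p : ℝ) (hp : 0 < p)
    (w : Fin c → E) (j : Fin c) : ‖w j‖ ≤ norm2p p w := by
  rw [← Real.rpow_le_rpow_iff (norm_nonneg _) (norm2p_nonneg _ _) hp, norm2p_pow p hp]
  exact Finset.single_le_sum (f := fun j => ‖w j‖ ^ p) (fun j _ => by positivity)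
    (Finset.mem_univ j)

lemma norm2p_mono {E : Type*} [NormedAddCommGroup E] {c : ℕ} (p r : ℝ) (hp : 0 < p) (hr : p ≤ r)
    (w : Fin c → E) : norm2p r w ≤ norm2p p w := by
  have hr0 : 0 < r := hp.trans_le hr
  rw [← Real.rpow_le_rpow_iff (norm2p_nonneg _ _) (norm2p_nonneg _ _) hr0, norm2p_pow r hr0]
  have e : ∀ x : ℝ, 0 ≤ x → x ^ r = x ^ p * x ^ (r - p) := fun x hx => by
    rw [← Real.rpow_add_of_nonneg hx hp.le (by linarith)]; congr 1; ring
  rw [e _ (norm2p_nonneg _ _), norm2p_pow p hp, Finset.sum_mul]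
  refine Finset.sum_le_sum fun j _ => ?_
  rw [e _ (norm_nonneg _)]
  refine mul_le_mul_of_nonneg_left ?_ (by positivity)
  exact Real.rpow_le_rpow (norm_nonneg _) (norm_le_norm2p p hp w j) (by linarith)

lemma norm2p_le_of_le {E : Type*} [NormedAddCommGroup E] {c : ℕ} (p : ℝ) (hp : 0 < p)
    (w w' : Fin c → E) (h : ∀ j, ‖w j‖ ≤ ‖w' j‖) : norm2p p w ≤ norm2p p w' := by
  unfold norm2p
  refine Real.rpow_le_rpow (Finset.sum_nonneg fun j _ => by positivity) ?_ (by positivity)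
  exact Finset.sum_le_sum fun j _ => Real.rpow_le_rpow (norm_nonneg _) (h j) hp.le

lemma holder_inner {E : Type*} [NormedAddCommGroup E] [InnerProductSpace ℝ E] {c : ℕ}
    (r q : ℝ) (hrq : r.HolderConjugate q) (w u : Fin c → E) :
    ∑ j, ⟪w j, u j⟫ ≤ norm2p r w * norm2p q u := by
  refine (Finset.sum_le_sum fun j _ => real_inner_le_norm (w j) (u j)).trans ?_
  exact Real.inner_le_Lp_mul_Lq_of_nonneg Finset.univ hrq (fun j _ => norm_nonneg _)
    (fun j _ => norm_nonneg _)

lemma rad_bound {X E ι : Type*} [NormedAddCommGroup E] [InnerProductSpace ℝ E] [Finite ι]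
    [Nonempty ι] {n c : ℕ} (hc : 2 ≤ c) (φ : X → E) (W : ι → Fin c → E) (r q Λ L : ℝ)
    (hrq : r.HolderConjugate q) (hq : 2 * log 2 ≤ q) (hL : 0 ≤ L)
    (hW : ∀ t, norm2p r (W t) ≤ Λ) (ℓ : ℝ → ℝ)
    (hℓLip : ∀ t₁ t₂, |ℓ t₁ - ℓ t₂| ≤ L * |t₁ - t₂|) (S : Fin n → X × Fin c) :
    radSum (fun t (z : X × Fin c) => ℓ (mcMargin (fun x' j => ⟪W t j, φ x'⟫) z.1 z.2)) S ≤
      2 * L * Λ * ((c : ℝ) ^ (1 / q) * √(q * ∑ i, ‖φ (S i).1‖ ^ 2)) := by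
  have hΛ : 0 ≤ Λ := by
    obtain ⟨t⟩ := ‹Nonempty ι›
    exact (norm2p_nonneg _ _).trans (hW t)
  have h1 := contraction (2 * L) n
    (fun i t => ℓ (mcMargin (fun x' j => ⟪W t j, φ x'⟫) (S i).1 (S i).2))
    (fun i t j => ⟪W t j, φ (S i).1⟫) (fun i s t => by
      obtain ⟨k, hk⟩ := margin_diff hc (fun x' j => ⟪W s j, φ x'⟫) (fun x' j => ⟪W t j, φ x'⟫)
        (S i).1 (S i).2
      refine (hℓLip _ _).trans ?_
      have a1 := abs_le_expect (fun j => ⟪W s j, φ (S i).1⟫ - ⟪W t j, φ (S i).1⟫) (S i).2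
      have a2 := abs_le_expect (fun j => ⟪W s j, φ (S i).1⟫ - ⟪W t j, φ (S i).1⟫) k
      have := hk.trans (add_le_add a1 a2)
      refine (mul_le_mul_of_nonneg_left this hL).trans (le_of_eq ?_)
      ring) (fun _ => 0)
  simp only [zero_add] at h1
  unfold radSum
  refine h1.trans ?_
  have h2 := expect_lq (c := c) n (fun i => φ (S i).1) q hq hrq.symm.lt.le
  refine le_trans ?_ (mul_le_mul_of_nonneg_left h2 (by positivity))
  rw [Finset.mul_expect]
  refine Finset.expect_le_expect fun ε _ => ciSup_le fun t => ?_
  have e : ∑ i, ∑ j, sgB (ε i j) * ⟪W t j, φ (S i).1⟫ =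
      ∑ j, ⟪W t j, ∑ i, sgB (ε i j) • φ (S i).1⟫ := by
    rw [Finset.sum_comm]
    refine Finset.sum_congr rfl fun j _ => ?_
    rw [inner_sum]
    refine Finset.sum_congr rfl fun i _ => ?_
    rw [real_inner_smul_right]
  rw [e, mul_assoc (2 * L) Λ _]
  refine mul_le_mul_of_nonneg_left ?_ (by positivity : 0 ≤ 2 * L)
  refine (holder_inner r q hrq _ _).trans ?_
  exact mul_le_mul_of_nonneg_right (hW t) (norm2p_nonneg q _)

lemma loss_diff {X E : Type*} [NormedAddCommGroup E] [InnerProductSpace ℝ E] {c : ℕ} (hc : 2 ≤ c)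
    (φ : X → E) (L : ℝ) (hL : 0 ≤ L) (ℓ : ℝ → ℝ)
    (hℓLip : ∀ t₁ t₂, |ℓ t₁ - ℓ t₂| ≤ L * |t₁ - t₂|) (w w' : Fin c → E) (x : X) (y : Fin c) :
    ∃ k, |ℓ (mcMargin (fun x' j => ⟪w j, φ x'⟫) x y) - ℓ (mcMargin (fun x' j => ⟪w' j, φ x'⟫) x y)|
      ≤ L * (|⟪w y - w' y, φ x⟫| + |⟪w k - w' k, φ x⟫|) := by
  obtain ⟨k, hk⟩ := margin_diff hc (fun x' j => ⟪w j, φ x'⟫) (fun x' j => ⟪w' j, φ x'⟫) x y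
  refine ⟨k, (hℓLip _ _).trans (mul_le_mul_of_nonneg_left ?_ hL)⟩
  simpa only [inner_sub_left] using hk

lemma meas_margin {X E : Type*} [MeasurableSpace X] [NormedAddCommGroup E]
    [InnerProductSpace ℝ E] [MeasurableSpace E] [BorelSpace E] {c : ℕ} (φ : X → E)
    (hφ : Measurable φ) (w : Fin c → E) :
    Measurable fun z : X × Fin c => mcMargin (fun x' j => ⟪w j, φ x'⟫) z.1 z.2 := by
  have hm : ∀ j, Measurable fun x => ⟪w j, φ x⟫ := fun j =>
    ((continuous_const.inner continuous_id : Continuous fun v : E => ⟪w j, v⟫).measurable).comp hφ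
  refine measurable_from_prod_countable_left fun y => ?_
  unfold mcMargin
  exact (hm y).sub (Measurable.iSup fun y' : {y' : Fin c // y' ≠ y} => hm y'.1)

/-! ### Part 5: the constants -/

lemma const_aux (q : ℝ) (hq : 2 * log 2 ≤ q) : 2 * √q + 1 ≤ (2 * q) ^ (1 + 1 / q) := by
  have hl := Real.log_two_gt_d9
  have hq1 : 1.38 < q := by linarith
  have hs : √q ^ 2 = q := Real.sq_sqrt (by linarith)
  have hs0 := Real.sqrt_nonneg q
  have hb : 1 ≤ 2 * q := by linarith
  rw [Real.rpow_add (by linarith), Real.rpow_one]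
  rcases le_total 2 q with h | h
  · have h1 : 1 ≤ (2 * q) ^ (1 / q) := Real.one_le_rpow hb (by positivity)
    have h2 : 1.4 ≤ √q := Real.le_sqrt_of_sq_le (by linarith)
    nlinarith
  · have h1 : (2 * q) ^ ((1 : ℝ) / 2) ≤ (2 * q) ^ (1 / q) :=
      Real.rpow_le_rpow_of_exponent_le hb (by
        apply one_div_le_one_div_of_le <;> linarith)
    rw [← Real.sqrt_eq_rpow] at h1
    have h2 : 1.66 ≤ √(2 * q) := Real.le_sqrt_of_sq_le (by linarith)
    have h3 : 1.17 ≤ √q := Real.le_sqrt_of_sq_le (by linarith)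
    nlinarith

lemma const_main (c : ℕ) (hc : 2 ≤ c) (p : ℝ) (hp₁ : 1 ≤ p) (hp₂ : p ≤ 2) :
    ∃ r q : ℝ, r.HolderConjugate q ∧ p ≤ r ∧ 2 * log 2 ≤ q ∧
      2 * ((c : ℝ) ^ (1 / q) * √q) + 1 ≤
        (if p ≤ (2 * Real.log c) / (2 * Real.log c - 1) then
          Real.sqrt (Real.exp 1) * (4 * Real.log c) ^ (1 + 1 / (2 * Real.log c))
        else
          (2 * p / (p - 1)) ^ (2 - 1 / p) * (c : ℝ) ^ ((p - 1) / p)) := by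
  have hc' : (2 : ℝ) ≤ c := by exact_mod_cast hc
  have hlc : log 2 ≤ log c := Real.log_le_log (by norm_num) hc'
  have hl := Real.log_two_gt_d9
  have main : ∀ q : ℝ, 2 * log 2 ≤ q → 2 * ((c : ℝ) ^ (1 / q) * √q) + 1 ≤
      (2 * q) ^ (1 + 1 / q) * (c : ℝ) ^ (1 / q) := by
    intro q hq
    have h1 := const_aux q hq
    have hq0 : 0 < q := by linarith
    have h2 : 1 ≤ (c : ℝ) ^ (1 / q) := Real.one_le_rpow (by linarith) (by positivity)
    nlinarith [mul_le_mul_of_nonneg_right h1 (zero_le_one.trans h2)]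
  split_ifs with h
  · refine ⟨(2 * log c) / (2 * log c - 1), 2 * log c, ?_, h, by linarith, ?_⟩
    · rw [Real.holderConjugate_comm]
      exact Real.HolderConjugate.conjExponent (by linarith)
    · refine (main (2 * log c) (by linarith)).trans (le_of_eq ?_)
      have : (c : ℝ) ^ (1 / (2 * log c)) = √(exp 1) := by
        rw [Real.rpow_def_of_pos (by linarith), Real.sqrt_eq_rpow, ← Real.exp_mul]
        congr 1
        have : log c ≠ 0 := by linarith
        field_simp
      rw [this, mul_comm]
      ring_nf
  · push Not at h
    have hp : 1 < p := by
      refine lt_of_le_of_lt ?_ h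
      rw [le_div_iff₀ (by linarith)]
      linarith
    refine ⟨p, p / (p - 1), Real.HolderConjugate.conjExponent hp, le_rfl, ?_, ?_⟩
    · rw [le_div_iff₀ (by linarith)]
      nlinarith [Real.log_two_lt_d9]
    · refine (main (p / (p - 1)) ?_).trans (le_of_eq ?_)
      · rw [le_div_iff₀ (by linarith)]
        nlinarith [Real.log_two_lt_d9]
      · have h1 : p - 1 ≠ 0 := by linarith
        have h2 : p ≠ 0 := by linarith
        congr 2
        · ring
        · field_simp; ring
        · field_simp

/-! ### Part 6: a separable subspace carrying the feature map almost surely -/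

lemma exists_sep {Z E : Type*} [MeasurableSpace Z] [NormedAddCommGroup E] [InnerProductSpace ℝ E]
    [CompleteSpace E] [MeasurableSpace E] [BorelSpace E] (P : Measure Z) [IsProbabilityMeasure P]
    (ψ : Z → E) (hψ : Measurable ψ) :
    ∃ V : Submodule ℝ E, IsClosed (V : Set E) ∧ TopologicalSpace.IsSeparable (V : Set E) ∧
      ∀ w ∈ Vᗮ, ∀ᵐ z ∂P, ⟪w, ψ z⟫ = 0 := by
  obtain ⟨s, b, -⟩ := exists_hilbertBasis ℝ E
  have hm : ∀ v : E, Measurable fun z => ⟪v, ψ z⟫ := fun v =>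
    ((continuous_const.inner continuous_id : Continuous fun u : E => ⟪v, u⟫).measurable).comp hψ
  have hmn : Measurable fun z => ‖ψ z‖ := continuous_norm.measurable.comp hψ
  set F : s → Z → ℝ := fun i z => ⟪b i, ψ z⟫ ^ 2 / (1 + ‖ψ z‖ ^ 2) with hF
  have hF0 : ∀ i z, 0 ≤ F i z := fun i z => by simp only [hF]; positivity
  have hFs : ∀ (t : Finset s) z, ∑ i ∈ t, F i z ≤ 1 := by
    intro t z
    simp only [hF]
    rw [← Finset.sum_div, div_le_one (by positivity)]
    have := b.orthonormal.sum_inner_products_le (s := t) (ψ z)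
    simp only [Real.norm_eq_abs, sq_abs] at this
    linarith
  have hFi : ∀ i, Integrable (F i) P := fun i => by
    refine integrable_bdd P 1 (F i) ?_ fun z => ?_
    · exact ((hm _).pow_const 2).div ((hmn.pow_const 2).const_add 1)
    · rw [abs_of_nonneg (hF0 i z)]
      simpa using hFs {i} z
  have hsum : Summable fun i => ∫ z, F i z ∂P := by
    refine summable_of_sum_le (c := 1) (fun i => integral_nonneg (hF0 i)) fun t => ?_
    rw [← integral_finsetSum _ fun i _ => hFi i]
    calc ∫ z, ∑ i ∈ t, F i z ∂P ≤ ∫ z, (1 : ℝ) ∂P :=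
          integral_mono (integrable_finsetSum _ fun i _ => hFi i) (integrable_const _) (hFs t)
      _ = 1 := by simp
  have hJ := hsum.countable_support
  set J := Function.support fun i => ∫ z, F i z ∂P with hJdef
  have hnJ : ∀ i, i ∉ J → ∀ᵐ z ∂P, ⟪b i, ψ z⟫ = 0 := by
    intro i hi
    have h0 : ∫ z, F i z ∂P = 0 := by simpa [hJdef] using hi
    rw [integral_eq_zero_iff_of_nonneg (hF0 i) (hFi i)] at h0
    filter_upwards [h0] with z hz
    have hz' : ⟪b i, ψ z⟫ ^ 2 / (1 + ‖ψ z‖ ^ 2) = 0 := hz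
    have hne : (1 + ‖ψ z‖ ^ 2) ≠ 0 := by positivity
    rw [div_eq_zero_iff] at hz'
    rcases hz' with h | h
    · exact pow_eq_zero_iff (two_ne_zero) |>.1 h
    · exact absurd h hne
  refine ⟨(Submodule.span ℝ (Set.image b J)).topologicalClosure,
    Submodule.isClosed_topologicalClosure _, ?_, ?_⟩
  · rw [Submodule.topologicalClosure_coe]
    exact ((hJ.image b).isSeparable.span (R := ℝ)).closure
  · intro w hw
    have hI := (b.orthonormal.inner_products_summable w).countable_support
    have hall : ∀ᵐ z ∂P, ∀ i ∈ Function.support (fun i => ‖⟪b i, w⟫‖ ^ 2), ⟪b i, ψ z⟫ = 0 := by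
      rw [ae_ball_iff hI]
      intro i hi
      refine hnJ i fun hiJ => hi ?_
      have hbV : b i ∈ (Submodule.span ℝ (Set.image b J)).topologicalClosure :=
        Submodule.le_topologicalClosure _ (Submodule.subset_span ⟨i, hiJ, rfl⟩)
      have : ⟪b i, w⟫ = 0 := (Submodule.mem_orthogonal _ w).1 hw (b i) hbV
      simp [this]
    filter_upwards [hall] with z hz
    rw [← b.tsum_inner_mul_inner w (ψ z)]
    refine (tsum_congr fun i => ?_).trans tsum_zero
    by_cases hi : ⟪b i, w⟫ = 0
    · rw [real_inner_comm, hi, zero_mul]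
    · rw [hz i (by simpa using hi), mul_zero]

/-! ### Part 8: selection of a sample with a pairwise almost sure property -/

lemma exists_select {Z : Type*} [MeasurableSpace Z] (P : Measure Z) [IsProbabilityMeasure P]
    (r : Z → Z → Prop) (hr : ∀ z, ∀ᵐ z' ∂P, r z z') (n : ℕ) (Q : Z → Prop) (hQ : ∀ᵐ z ∂P, Q z)
    (A : Set (Fin n → Z)) (hA : MeasurableSet A)
    (hpos : (Measure.pi fun _ : Fin n => P) A ≠ 0) :
    ∃ S ∈ A, (∀ i, Q (S i)) ∧ ∀ i j, i < j → r (S i) (S j) := by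
  induction n generalizing Q with
  | zero =>
    obtain ⟨S, hS⟩ := nonempty_of_measure_ne_zero hpos
    exact ⟨S, hS, fun i => i.elim0, fun i => i.elim0⟩
  | succ n ih =>
    have hA' := (mp_cons_meas (Z := Z) n) hA
    rw [← (mp_cons P n).measure_preimage hA.nullMeasurableSet, Ne,
      Measure.measure_prod_null hA'] at hpos
    have : ∃ z, Q z ∧ (Measure.pi fun _ : Fin n => P)
        (Prod.mk z ⁻¹' ((fun q : Z × (Fin n → Z) => (Fin.cons q.1 q.2 : Fin (n + 1) → Z)) ⁻¹' A))
          ≠ 0 := by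
      by_contra hcon
      push Not at hcon
      exact hpos (by filter_upwards [hQ] with z hz using hcon z hz)
    obtain ⟨z, hz, hne⟩ := this
    obtain ⟨S, hS, h1, h2⟩ := ih (fun z' => Q z' ∧ r z z') (hQ.and (hr z)) _
      (measurable_prodMk_left hA') hne
    refine ⟨Fin.cons z S, hS, fun i => ?_, fun i j => ?_⟩
    · refine Fin.cases ?_ (fun k => ?_) i
      · exact hz
      · simpa using (h1 k).1
    · refine Fin.cases ?_ (fun l => ?_) j
      · intro h; exact absurd h (Fin.not_lt_zero i)
      · refine Fin.cases ?_ (fun k => ?_) i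
        · intro _; simpa using (h1 l).2
        · intro h; simpa using h2 k l (by simpa using h)

/-! ### orthogonal sums -/

lemma ortho_sum {E : Type*} [NormedAddCommGroup E] [InnerProductSpace ℝ E] {n c : ℕ}
    (v : Fin n → E) (hv : ∀ i j, i ≠ j → ⟪v i, v j⟫ = 0) (u : Fin c → E) (k : Fin n → Fin c) :
    ∑ i, |⟪u (k i), v i⟫| ≤ √(∑ j, ‖u j‖ ^ 2) * √(∑ i, ‖v i‖ ^ 2) := by
  set s : Fin n → ℝ := fun i => if 0 ≤ ⟪u (k i), v i⟫ then 1 else -1 with hs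
  have hs1 : ∀ i, |⟪u (k i), v i⟫| = s i * ⟪u (k i), v i⟫ := by
    intro i
    simp only [hs]
    split_ifs with h
    · rw [abs_of_nonneg h, one_mul]
    · rw [abs_of_neg (not_le.1 h)]; ring
  have hs2 : ∀ i, s i ^ 2 = 1 := by
    intro i; simp only [hs]; split_ifs <;> norm_num
  set x : Fin c → E := fun j => ∑ i with k i = j, s i • v i with hx
  have e1 : ∑ i, |⟪u (k i), v i⟫| = ∑ j, ⟪u j, x j⟫ := by
    simp only [hs1, hx, inner_sum, real_inner_smul_right]
    rw [← Finset.sum_fiberwise Finset.univ k]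
    refine Finset.sum_congr rfl fun j _ => Finset.sum_congr rfl fun i hi => ?_
    rw [(Finset.mem_filter.1 hi).2]
  have e2 : ∑ j, ‖x j‖ ^ 2 = ∑ i, ‖v i‖ ^ 2 := by
    rw [← Finset.sum_fiberwise Finset.univ k (fun i => ‖v i‖ ^ 2)]
    refine Finset.sum_congr rfl fun j _ => ?_
    rw [← real_inner_self_eq_norm_sq]
    simp only [hx, sum_inner, inner_sum]
    refine Finset.sum_congr rfl fun i hi => ?_
    rw [Finset.sum_eq_single i]
    · rw [real_inner_smul_left, real_inner_smul_right, real_inner_self_eq_norm_sq, ← mul_assoc,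
        ← sq, hs2, one_mul]
    · intro l _ hl
      first
        | rw [real_inner_smul_left, real_inner_smul_right, hv _ _ hl.symm]; simp
        | rw [real_inner_smul_left, real_inner_smul_right, hv _ _ hl]; simp
    · intro h; exact absurd hi h
  rw [e1, ← e2]
  refine (Finset.sum_le_sum fun j _ => real_inner_le_norm (u j) (x j)).trans ?_
  exact Real.sum_mul_le_sqrt_mul_sqrt _ _ _

/-! ### Part 7: the bound on a separable class -/

lemma loss_cont {X E : Type*} [NormedAddCommGroup E] [InnerProductSpace ℝ E] {c : ℕ} (hc : 2 ≤ c)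
    (φ : X → E) (L : ℝ) (hL : 0 ≤ L) (ℓ : ℝ → ℝ)
    (hℓLip : ∀ t₁ t₂, |ℓ t₁ - ℓ t₂| ≤ L * |t₁ - t₂|) (x : X) (y : Fin c) :
    Continuous fun w : Fin c → E => ℓ (mcMargin (fun x' j => ⟪w j, φ x'⟫) x y) := by
  refine (LipschitzWith.of_dist_le' (K := 2 * L * ‖φ x‖) fun w w' => ?_).continuous
  obtain ⟨k, hk⟩ := loss_diff hc φ L hL ℓ hℓLip w w' x y
  rw [Real.dist_eq, dist_eq_norm]
  have h : ∀ j, |⟪w j - w' j, φ x⟫| ≤ ‖w - w'‖ * ‖φ x‖ := fun j =>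
    (abs_real_inner_le_norm _ _).trans
      (mul_le_mul_of_nonneg_right (norm_le_pi_norm (w - w') j) (norm_nonneg _))
  refine hk.trans ((mul_le_mul_of_nonneg_left (add_le_add (h y) (h k)) hL).trans (le_of_eq ?_))
  ring

lemma bad_countable {X E : Type*} [MeasurableSpace X] [NormedAddCommGroup E]
    [InnerProductSpace ℝ E] [MeasurableSpace E] [BorelSpace E]
    (n c : ℕ) (hn : 1 ≤ n) (hc : 2 ≤ c)
    (P : Measure (X × Fin c)) [IsProbabilityMeasure P]
    (φ : X → E) (hφ : Measurable φ) (r q Λ L : ℝ)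
    (hrq : r.HolderConjugate q) (hq : 2 * log 2 ≤ q) (hL : 0 ≤ L)
    (ℓ : ℝ → ℝ) (hℓc : Continuous ℓ) (hℓ₀ : ∀ t, 0 ≤ ℓ t)
    (hℓLip : ∀ t₁ t₂, |ℓ t₁ - ℓ t₂| ≤ L * |t₁ - t₂|)
    (B : ℝ) (hB0 : 0 < B) (W : ℕ → Fin c → E) (hW : ∀ m, norm2p r (W m) ≤ Λ)
    (hB : ∀ m (x : X) (y : Fin c), ℓ (mcMargin (fun x' j => ⟪W m j, φ x'⟫) x y) ≤ B)
    (δ : ℝ) (hδ : δ ∈ Set.Ioo (0 : ℝ) 1) :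
    ∃ Bad : Set (Fin n → X × Fin c), MeasurableSet Bad ∧
      (Measure.pi fun _ : Fin n => P) Bad ≤ ENNReal.ofReal (δ / 2) ∧
      ∀ S ∉ Bad, ∀ m, ∫ z, ℓ (mcMargin (fun x' j => ⟪W m j, φ x'⟫) z.1 z.2) ∂P ≤
        (1 / (n : ℝ)) * ∑ i, ℓ (mcMargin (fun x' j => ⟪W m j, φ x'⟫) (S i).1 (S i).2)
            + 3 * B * √(log (2 / δ) / (2 * n))
            + (2 / n) * (2 * L * Λ * ((c : ℝ) ^ (1 / q) * √(q * ∑ i, ‖φ (S i).1‖ ^ 2))) := by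
  set g : ℕ → X × Fin c → ℝ := fun m z => ℓ (mcMargin (fun x' j => ⟪W m j, φ x'⟫) z.1 z.2) with hg
  have hgm : ∀ m, Measurable (g m) := fun m => hℓc.measurable.comp (meas_margin φ hφ (W m))
  set F : ℕ → (Fin n → X × Fin c) → ℝ := fun m S => (1 / (n : ℝ)) * ∑ i, g m (S i)
            + 3 * B * √(log (2 / δ) / (2 * n))
            + (2 / n) * (2 * L * Λ * ((c : ℝ) ^ (1 / q) * √(q * ∑ i, ‖φ (S i).1‖ ^ 2))) with hF
  have hFm : ∀ m, Measurable (F m) := by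
    intro m
    have h1 : Measurable fun S : Fin n → X × Fin c => ∑ i, g m (S i) :=
      Finset.measurable_sum _ fun i _ => (hgm m).comp (measurable_pi_apply i)
    have h2 : Measurable fun S : Fin n → X × Fin c => ∑ i, ‖φ (S i).1‖ ^ 2 :=
      Finset.measurable_sum _ fun i _ => (continuous_norm.measurable.comp
        (hφ.comp (measurable_fst.comp (measurable_pi_apply i)))).pow_const 2
    exact ((h1.const_mul _).add_const _).add
      ((((h2.const_mul _).sqrt.const_mul _).const_mul _).const_mul _)
  set D : ℕ → Set (Fin n → X × Fin c) := fun m => {S | ∃ t : Fin (m + 1), F t S < ∫ z, g t z ∂P}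
    with hD
  have hDmono : Monotone D := by
    intro a b hab S hS
    obtain ⟨t, ht⟩ := hS
    exact ⟨⟨t.1, by omega⟩, ht⟩
  have hDm : ∀ m, MeasurableSet (D m) := by
    intro m
    have : D m = ⋃ t : Fin (m + 1), {S | F t S < ∫ z, g t z ∂P} := by
      ext S; simp [hD]
    rw [this]
    exact MeasurableSet.iUnion fun t => measurableSet_lt (hFm t) measurable_const
  have hDle : ∀ m, (Measure.pi fun _ : Fin n => P) (D m) ≤ ENNReal.ofReal (δ / 2) := by
    intro m
    have h1 := learn_finite P (fun t : Fin (m + 1) => g t) (fun t => hgm t) B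
      (fun t z => hℓ₀ _) (fun t z => hB t z.1 z.2) n hn hB0 δ hδ
    rw [← ENNReal.ofReal_toReal (measure_ne_top _ (D m))]
    refine ENNReal.ofReal_le_ofReal (le_trans (measureReal_mono ?_) h1)
    rintro S ⟨t, ht⟩
    refine ⟨t, lt_of_le_of_lt ?_ ht⟩
    simp only [hF]
    have := rad_bound hc φ (fun t : Fin (m + 1) => W t) r q Λ L hrq hq hL (fun t => hW t) ℓ hℓLip S
    gcongr
  refine ⟨⋃ m, D m, MeasurableSet.iUnion hDm, ?_, ?_⟩
  · rw [hDmono.measure_iUnion]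
    exact iSup_le hDle
  · intro S hS m
    by_contra hcon
    push Not at hcon
    exact hS (Set.mem_iUnion.2 ⟨m, ⟨⟨m, by omega⟩, hcon⟩⟩)

lemma bad_separable {X E : Type*} [MeasurableSpace X] [NormedAddCommGroup E]
    [InnerProductSpace ℝ E] [MeasurableSpace E] [BorelSpace E]
    (n c : ℕ) (hn : 1 ≤ n) (hc : 2 ≤ c)
    (P : Measure (X × Fin c)) [IsProbabilityMeasure P]
    (φ : X → E) (hφ : Measurable φ) (p r q Λ L : ℝ) (hp : 0 < p) (hpr : p ≤ r)
    (hrq : r.HolderConjugate q) (hq : 2 * log 2 ≤ q) (hL : 0 ≤ L) (hΛ : 0 < Λ)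
    (ℓ : ℝ → ℝ) (hℓc : Continuous ℓ) (hℓ₀ : ∀ t, 0 ≤ ℓ t)
    (hℓLip : ∀ t₁ t₂, |ℓ t₁ - ℓ t₂| ≤ L * |t₁ - t₂|)
    (B : ℝ) (hB0 : 0 < B)
    (hB : ∀ w : Fin c → E, norm2p p w ≤ Λ →
      ∀ (x : X) (y : Fin c), ℓ (mcMargin (fun x' j => ⟪w j, φ x'⟫) x y) ≤ B)
    (V : Submodule ℝ E) (hV : TopologicalSpace.IsSeparable (V : Set E))
    (δ : ℝ) (hδ : δ ∈ Set.Ioo (0 : ℝ) 1) :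
    ∃ Bad : Set (Fin n → X × Fin c), MeasurableSet Bad ∧
      (Measure.pi fun _ : Fin n => P) Bad ≤ ENNReal.ofReal (δ / 2) ∧
      ∀ S ∉ Bad, ∀ w : Fin c → E, (∀ j, w j ∈ V) → norm2p p w ≤ Λ →
        ∫ z, ℓ (mcMargin (fun x' j => ⟪w j, φ x'⟫) z.1 z.2) ∂P ≤
        (1 / (n : ℝ)) * ∑ i, ℓ (mcMargin (fun x' j => ⟪w j, φ x'⟫) (S i).1 (S i).2)
            + 3 * B * √(log (2 / δ) / (2 * n))
            + (2 / n) * (2 * L * Λ * ((c : ℝ) ^ (1 / q) * √(q * ∑ i, ‖φ (S i).1‖ ^ 2))) := by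
  set K : Set (Fin c → E) := {w | (∀ j, w j ∈ V) ∧ norm2p p w ≤ Λ} with hK
  have hKs : TopologicalSpace.IsSeparable K := by
    refine (TopologicalSpace.IsSeparable.univ_pi (fun _ : Fin c => hV)).mono ?_
    intro w hw j _
    exact hw.1 j
  obtain ⟨t, htK, htc, htd⟩ := hKs.exists_countable_dense_subset
  have h0K : (0 : Fin c → E) ∈ K := by
    refine ⟨fun j => V.zero_mem, ?_⟩
    simp only [norm2p, Pi.zero_apply, norm_zero, Real.zero_rpow hp.ne', Finset.sum_const_zero,
      Real.zero_rpow (one_div_pos.2 hp).ne']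
    exact hΛ.le
  have htne : t.Nonempty := closure_nonempty_iff.1 ⟨0, htd h0K⟩
  obtain ⟨W, hW⟩ := htc.exists_eq_range htne
  have hWK : ∀ m, W m ∈ K := fun m => htK (hW ▸ Set.mem_range_self m)
  obtain ⟨Bad, hBm, hBle, hBad⟩ := bad_countable n c hn hc P φ hφ r q Λ L hrq hq hL ℓ hℓc hℓ₀ hℓLip
    B hB0 W (fun m => (norm2p_mono p r hp hpr _).trans (hWK m).2)
    (fun m => hB (W m) (hWK m).2) δ hδ
  refine ⟨Bad, hBm, hBle, fun S hS w hwV hwΛ => ?_⟩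
  have hw : w ∈ closure t := htd ⟨hwV, hwΛ⟩
  obtain ⟨u, hut, hul⟩ := mem_closure_iff_seq_limit.1 hw
  have hlim : ∀ x y, Filter.Tendsto
      (fun k => ℓ (mcMargin (fun x' j => ⟪u k j, φ x'⟫) x y)) Filter.atTop
      (nhds (ℓ (mcMargin (fun x' j => ⟪w j, φ x'⟫) x y))) := fun x y =>
    ((loss_cont hc φ L hL ℓ hℓLip x y).tendsto w).comp hul
  have hI : Filter.Tendsto
      (fun k => ∫ z, ℓ (mcMargin (fun x' j => ⟪u k j, φ x'⟫) z.1 z.2) ∂P) Filter.atTop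
      (nhds (∫ z, ℓ (mcMargin (fun x' j => ⟪w j, φ x'⟫) z.1 z.2) ∂P)) := by
    refine tendsto_integral_of_dominated_convergence (fun _ => B) (fun k => ?_)
      (integrable_const _) (fun k => ?_) ?_
    · exact (hℓc.measurable.comp (meas_margin φ hφ (u k))).aestronglyMeasurable
    · refine ae_of_all _ fun z => ?_
      rw [Real.norm_of_nonneg (hℓ₀ _)]
      exact hB (u k) (htK (hut k)).2 _ _
    · exact ae_of_all _ fun z => hlim z.1 z.2
  have hE : Filter.Tendsto
      (fun k => ∑ i, ℓ (mcMargin (fun x' j => ⟪u k j, φ x'⟫) (S i).1 (S i).2)) Filter.atTop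
      (nhds (∑ i, ℓ (mcMargin (fun x' j => ⟪w j, φ x'⟫) (S i).1 (S i).2))) :=
    tendsto_finsetSum _ fun i _ => hlim _ _
  refine le_of_tendsto_of_tendsto' hI (((hE.const_mul _).add_const _).add_const _) fun k => ?_
  have : u k ∈ Set.range W := hW ▸ hut k
  obtain ⟨m, hm⟩ := this
  rw [← hm]
  exact hBad S hS m

/-! ### Part 9: the final argument -/

lemma risk_le {X E : Type*} [MeasurableSpace X] [NormedAddCommGroup E]
    [InnerProductSpace ℝ E] [MeasurableSpace E] [BorelSpace E] (c : ℕ)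
    (P : Measure (X × Fin c)) [IsProbabilityMeasure P] (φ : X → E) (hφ : Measurable φ)
    (ℓ : ℝ → ℝ) (hℓc : Continuous ℓ) (hℓ₁ : ∀ t ≤ (0 : ℝ), 1 ≤ ℓ t) (hℓ₀ : ∀ t, 0 ≤ ℓ t)
    (B : ℝ) (w : Fin c → E)
    (hB : ∀ (x : X) (y : Fin c), ℓ (mcMargin (fun x' j => ⟪w j, φ x'⟫) x y) ≤ B) :
    (P {z : X × Fin c | mcMargin (fun x' j => ⟪w j, φ x'⟫) z.1 z.2 ≤ 0}).toReal ≤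
      ∫ z, ℓ (mcMargin (fun x' j => ⟪w j, φ x'⟫) z.1 z.2) ∂P := by
  have hm := meas_margin φ hφ w
  have hs : MeasurableSet {z : X × Fin c | mcMargin (fun x' j => ⟪w j, φ x'⟫) z.1 z.2 ≤ 0} :=
    measurableSet_le hm measurable_const
  have e := integral_indicator_one (μ := P) hs
  rw [← Measure.real_def, ← e]
  refine integral_mono ?_ ?_ fun z => ?_
  · exact (integrable_const (1 : ℝ)).indicator hs
  · exact integrable_bdd P B _ (hℓc.measurable.comp hm) fun z => by
      rw [abs_of_nonneg (hℓ₀ _)]; exact hB z.1 z.2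
  · by_cases hz : z ∈ {z : X × Fin c | mcMargin (fun x' j => ⟪w j, φ x'⟫) z.1 z.2 ≤ 0}
    · rw [Set.indicator_of_mem hz]
      exact hℓ₁ _ hz
    · rw [Set.indicator_of_notMem hz]
      exact hℓ₀ _

lemma inner_comp {E : Type*} [NormedAddCommGroup E] [InnerProductSpace ℝ E] (V : Submodule ℝ E)
    [V.HasOrthogonalProjection] (u : E) (hu : u ∈ Vᗮ) (x : E) :
    ⟪u, x - V.starProjection x⟫ = ⟪u, x⟫ := by
  rw [inner_sub_right, (Submodule.mem_orthogonal' V u).1 hu _ (V.starProjection_apply_mem x),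
    sub_zero]

lemma norm_comp_le {E : Type*} [NormedAddCommGroup E] [InnerProductSpace ℝ E] (V : Submodule ℝ E)
    [V.HasOrthogonalProjection] (x : E) : ‖x - V.starProjection x‖ ≤ ‖x‖ := by
  have h1 := inner_comp V _ (V.sub_starProjection_mem_orthogonal x) x
  rw [real_inner_self_eq_norm_sq] at h1
  have h2 := real_inner_le_norm (x - V.starProjection x) x
  rw [← h1, sq] at h2
  by_contra hcon
  push Not at hcon
  nlinarith [norm_nonneg x]

lemma sqrt_sq_le_norm2p {E : Type*} [NormedAddCommGroup E] {c : ℕ} (p : ℝ) (hp : 0 < p)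
    (hp₂ : p ≤ 2) (w : Fin c → E) : √(∑ j, ‖w j‖ ^ 2) ≤ norm2p p w := by
  refine le_trans (le_of_eq ?_) (norm2p_mono p 2 hp hp₂ w)
  unfold norm2p
  rw [Real.sqrt_eq_rpow]
  simp

lemma emp_diff {X E : Type*} [NormedAddCommGroup E] [InnerProductSpace ℝ E] {n c : ℕ}
    (hc : 2 ≤ c) (φ : X → E) (p Λ L : ℝ) (hp : 0 < p) (hp₂ : p ≤ 2) (hL : 0 ≤ L)
    (ℓ : ℝ → ℝ) (hℓLip : ∀ t₁ t₂, |ℓ t₁ - ℓ t₂| ≤ L * |t₁ - t₂|)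
    (V : Submodule ℝ E) [V.HasOrthogonalProjection] (S : Fin n → X × Fin c)
    (hS : ∀ i j, i < j →
      ⟪φ (S i).1 - V.starProjection (φ (S i).1), φ (S j).1⟫ = 0)
    (w : Fin c → E) (hw : norm2p p w ≤ Λ) :
    ∑ i, ℓ (mcMargin (fun x' j => ⟪V.starProjection (w j), φ x'⟫) (S i).1 (S i).2) ≤
      ∑ i, ℓ (mcMargin (fun x' j => ⟪w j, φ x'⟫) (S i).1 (S i).2) +
        2 * L * Λ * √(∑ i, ‖φ (S i).1‖ ^ 2) := by
  set v : Fin n → E := fun i => φ (S i).1 - V.starProjection (φ (S i).1) with hv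
  have hvo : ∀ i, v i ∈ Vᗮ := fun i => V.sub_starProjection_mem_orthogonal _
  set u : Fin c → E := fun j => w j - V.starProjection (w j) with hu
  have huo : ∀ j, u j ∈ Vᗮ := fun j => V.sub_starProjection_mem_orthogonal _
  have hvv : ∀ i j, i ≠ j → ⟪v i, v j⟫ = 0 := by
    have h1 : ∀ i j, i < j → ⟪v i, v j⟫ = 0 := fun i j hij => by
      have := inner_comp V (v i) (hvo i) (φ (S j).1)
      rw [hS i j hij] at this
      exact this
    intro i j hij
    rcases lt_or_gt_of_ne hij with h | h
    · exact h1 i j h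
    · rw [real_inner_comm]; exact h1 j i h
  have key : ∀ i, ∃ k, ℓ (mcMargin (fun x' j => ⟪V.starProjection (w j), φ x'⟫) (S i).1 (S i).2) ≤
      ℓ (mcMargin (fun x' j => ⟪w j, φ x'⟫) (S i).1 (S i).2) +
        L * (|⟪u (S i).2, v i⟫| + |⟪u k, v i⟫|) := by
    intro i
    obtain ⟨k, hk⟩ := loss_diff hc φ L hL ℓ hℓLip w (fun j => V.starProjection (w j))
      (S i).1 (S i).2
    refine ⟨k, ?_⟩
    have e : ∀ j, ⟪u j, v i⟫ = ⟪w j - V.starProjection (w j), φ (S i).1⟫ := fun j =>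
      inner_comp V (u j) (huo j) _
    rw [e, e]
    have := (abs_le.1 hk).1
    linarith
  choose k hk using key
  refine (Finset.sum_le_sum fun i _ => hk i).trans ?_
  rw [Finset.sum_add_distrib, ← Finset.mul_sum, Finset.sum_add_distrib]
  have o1 := ortho_sum v hvv u (fun i => (S i).2)
  have o2 := ortho_sum v hvv u k
  have hU : √(∑ j, ‖u j‖ ^ 2) ≤ Λ := by
    refine le_trans (Real.sqrt_le_sqrt (Finset.sum_le_sum fun j _ => ?_))
      ((sqrt_sq_le_norm2p p hp hp₂ w).trans hw)
    exact pow_le_pow_left₀ (norm_nonneg _) (norm_comp_le V _) 2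
  have hVn : √(∑ i, ‖v i‖ ^ 2) ≤ √(∑ i, ‖φ (S i).1‖ ^ 2) :=
    Real.sqrt_le_sqrt (Finset.sum_le_sum fun j _ =>
      pow_le_pow_left₀ (norm_nonneg _) (norm_comp_le V _) 2)
  have hΛ : 0 ≤ Λ := (norm2p_nonneg p w).trans hw
  have hm := mul_le_mul hU hVn (Real.sqrt_nonneg _) hΛ
  have := mul_le_mul_of_nonneg_left (add_le_add (o1.trans hm) (o2.trans hm)) hL
  linarith

/-- **`ℓ_p`-norm multi-class SVM generalization bound** (Corollary 4). -/
theorem lp_norm_multiclass_svm_generalization_bound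
    {X E : Type*} [MeasurableSpace X] [NormedAddCommGroup E] [InnerProductSpace ℝ E]
    [CompleteSpace E] [MeasurableSpace E] [BorelSpace E]
    (n c : ℕ) (hn : 1 ≤ n) (hc : 2 ≤ c)
    (P : Measure (X × Fin c)) [IsProbabilityMeasure P]
    (φ : X → E) (hφ : Measurable φ)
    (p : ℝ) (hp₁ : 1 ≤ p) (hp₂ : p ≤ 2) (Λ : ℝ) (hΛ : 0 < Λ)
    (ℓ : ℝ → ℝ) (L : ℝ)
    (hℓ₁ : ∀ t ≤ (0 : ℝ), 1 ≤ ℓ t) (hℓ₀ : ∀ t, 0 ≤ ℓ t)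
    (hℓLip : ∀ t₁ t₂, |ℓ t₁ - ℓ t₂| ≤ L * |t₁ - t₂|)
    (hℓanti : ∀ s t : ℝ, s ≤ t → ℓ t ≤ ℓ s)
    (hℓzero : ∃ cℓ : ℝ, ℓ cℓ = 0)
    (B : ℝ) (hB : ∀ w : Fin c → E, norm2p p w ≤ Λ →
      ∀ (x : X) (y : Fin c), ℓ (mcMargin (fun x' j => ⟪w j, φ x'⟫) x y) ≤ B)
    (δ : ℝ) (hδ : δ ∈ Set.Ioo (0 : ℝ) 1) :
    ENNReal.ofReal (1 - δ) ≤
      (Measure.pi fun _ : Fin n => P)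
        {S : Fin n → X × Fin c | ∀ w : Fin c → E, norm2p p w ≤ Λ →
          (P {z : X × Fin c | mcMargin (fun x' j => ⟪w j, φ x'⟫) z.1 z.2 ≤ 0}).toReal ≤
            (1 / (n : ℝ)) * ∑ i, ℓ (mcMargin (fun x' j => ⟪w j, φ x'⟫) (S i).1 (S i).2)
            + 3 * B * Real.sqrt (Real.log (2 / δ) / (2 * n))
            + (2 * L * Λ / n) * Real.sqrt (∑ i, ‖φ (S i).1‖ ^ 2) *
              (if p ≤ (2 * Real.log c) / (2 * Real.log c - 1) then
                Real.sqrt (Real.exp 1) * (4 * Real.log c) ^ (1 + 1 / (2 * Real.log c))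
              else
                (2 * p / (p - 1)) ^ (2 - 1 / p) * (c : ℝ) ^ ((p - 1) / p))} := by
  have hp0 : 0 < p := by linarith
  obtain ⟨r, q, hrq, hpr, hq, hK⟩ := const_main c hc p hp₁ hp₂
  set K : ℝ := (if p ≤ (2 * Real.log c) / (2 * Real.log c - 1) then
      Real.sqrt (Real.exp 1) * (4 * Real.log c) ^ (1 + 1 / (2 * Real.log c))
    else (2 * p / (p - 1)) ^ (2 - 1 / p) * (c : ℝ) ^ ((p - 1) / p)) with hKdef
  have hL : 0 ≤ L := by
    obtain ⟨a, ha⟩ := hℓzero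
    have h1 := hℓLip 0 a
    have h2 := hℓ₁ 0 le_rfl
    rw [ha, sub_zero, abs_of_nonneg (hℓ₀ 0)] at h1
    by_contra hcon
    push Not at hcon
    nlinarith [abs_nonneg (0 - a)]
  have hℓc : Continuous ℓ := (LipschitzWith.of_dist_le' (K := L) fun x y => by
    simpa only [Real.dist_eq] using hℓLip x y).continuous
  have hB0 : 0 < B := by
    have hne : Nonempty (X × Fin c) := P.nonempty_of_neZero
    obtain ⟨x, y⟩ := hne
    have h1 := hB 0 (by
      simp only [norm2p, Pi.zero_apply, norm_zero, Real.zero_rpow hp0.ne', Finset.sum_const_zero,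
        Real.zero_rpow (one_div_pos.2 hp0).ne']
      exact hΛ.le) x y
    have h2 : mcMargin (fun x' j => ⟪(0 : Fin c → E) j, φ x'⟫) x y = 0 := by
      simp [mcMargin]
    rw [h2] at h1
    linarith [hℓ₁ 0 le_rfl]
  obtain ⟨V, hVc, hVs, hV⟩ := exists_sep P (fun z : X × Fin c => φ z.1) (hφ.comp measurable_fst)
  have : CompleteSpace V := hVc.completeSpace_coe
  obtain ⟨Bad, hBm, hBle, hBad⟩ := bad_separable n c hn hc P φ hφ p r q Λ L hp0 hpr hrq hq hL hΛ
    ℓ hℓc hℓ₀ hℓLip B hB0 hB V hVs δ hδ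
  set μ := Measure.pi fun _ : Fin n => P with hμ
  set Good : Set (Fin n → X × Fin c) := {S | ∀ w : Fin c → E, norm2p p w ≤ Λ →
          (P {z : X × Fin c | mcMargin (fun x' j => ⟪w j, φ x'⟫) z.1 z.2 ≤ 0}).toReal ≤
            (1 / (n : ℝ)) * ∑ i, ℓ (mcMargin (fun x' j => ⟪w j, φ x'⟫) (S i).1 (S i).2)
            + 3 * B * Real.sqrt (Real.log (2 / δ) / (2 * n))
            + (2 * L * Λ / n) * Real.sqrt (∑ i, ‖φ (S i).1‖ ^ 2) * K} with hGood
  have hδ0 := hδ.1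
  have hδ1 := hδ.2
  by_contra hcon
  push Not at hcon
  set M := toMeasurable μ Good with hM
  have hMm : MeasurableSet M := measurableSet_toMeasurable _ _
  have hMlt : μ M < ENNReal.ofReal (1 - δ) := by rwa [hM, measure_toMeasurable]
  have hpos : μ (M ∪ Bad)ᶜ ≠ 0 := by
    intro h0
    have h1 : μ (M ∪ Bad) = 1 := (prob_compl_eq_zero_iff (hMm.union hBm)).1 h0
    have h2 : μ (M ∪ Bad) < 1 := by
      refine (measure_union_le _ _).trans_lt ?_
      refine (ENNReal.add_lt_add_of_lt_of_le (measure_ne_top _ _) hMlt hBle).trans_le ?_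
      rw [← ENNReal.ofReal_add (by linarith) (by linarith), ENNReal.ofReal_le_one]
      linarith
    exact h2.ne h1
  obtain ⟨S, hSA, -, hS⟩ := exists_select P
    (fun z z' => ⟪φ z.1 - V.starProjection (φ z.1), φ z'.1⟫ = 0)
    (fun z => hV _ (V.sub_starProjection_mem_orthogonal _)) n (fun _ => True)
    (ae_of_all _ fun _ => trivial) _ (hMm.union hBm).compl hpos
  have hSM : S ∉ M := fun h => hSA (Or.inl h)
  have hSB : S ∉ Bad := fun h => hSA (Or.inr h)
  refine hSM (subset_toMeasurable _ _ fun w hw => ?_)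
  set w' : Fin c → E := fun j => V.starProjection (w j) with hw'
  have hw'Λ : norm2p p w' ≤ Λ :=
    (norm2p_le_of_le p hp0 _ _ fun j => V.norm_starProjection_apply_le _).trans hw
  have hR : P {z : X × Fin c | mcMargin (fun x' j => ⟪w j, φ x'⟫) z.1 z.2 ≤ 0} =
      P {z : X × Fin c | mcMargin (fun x' j => ⟪w' j, φ x'⟫) z.1 z.2 ≤ 0} := by
    refine measure_congr ?_
    have hall : ∀ᵐ z ∂P, ∀ j, ⟪w j - w' j, φ z.1⟫ = 0 :=
      ae_all_iff.2 fun j => hV _ (V.sub_starProjection_mem_orthogonal (w j))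
    filter_upwards [hall] with z hz
    have hz' : ∀ j, ⟪w j, φ z.1⟫ = ⟪w' j, φ z.1⟫ := fun j => by
      have := hz j
      rw [inner_sub_left] at this
      linarith
    have : mcMargin (fun x' j => ⟪w j, φ x'⟫) z.1 z.2 =
        mcMargin (fun x' j => ⟪w' j, φ x'⟫) z.1 z.2 := by
      simp only [mcMargin, hz']
    exact congrArg (· ≤ (0 : ℝ)) this
  rw [hR]
  have h1 := risk_le c P φ hφ ℓ hℓc hℓ₁ hℓ₀ B w' (hB w' hw'Λ)
  have h2 := hBad S hSB w' (fun j => V.starProjection_apply_mem _) hw'Λ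
  have h3 := emp_diff hc φ p Λ L hp0 hp₂ hL ℓ hℓLip V S hS w hw
  have hn0 : (0 : ℝ) < n := by exact_mod_cast hn
  have h4 := mul_le_mul_of_nonneg_left h3 (by positivity : 0 ≤ 1 / (n : ℝ))
  have hq0 : 0 ≤ q := hrq.symm.nonneg
  rw [Real.sqrt_mul hq0] at h2
  set Q := √(∑ i, ‖φ (S i).1‖ ^ 2) with hQ
  have hQ0 : 0 ≤ Q := Real.sqrt_nonneg _
  have h5 := mul_le_mul_of_nonneg_left hK (by positivity : 0 ≤ 2 * L * Λ / n * Q)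
  have e1 : 2 / (n : ℝ) * (2 * L * Λ * ((c : ℝ) ^ (1 / q) * (√q * Q))) +
      1 / (n : ℝ) * (2 * L * Λ * Q) =
      2 * L * Λ / n * Q * (2 * ((c : ℝ) ^ (1 / q) * √q) + 1) := by ring
  rw [mul_add] at h4
  linarith
end

section
/- Let X be a set, let n, c ≥ 1, let (x_1,y_1),…,(x_n,y_n) ∈ X × {1,…,c}, let θ > 0, and let H be a nonempty countable set of functions h : X → ℝ^c. For h ∈ H define ρ_{θ,h}(x,y) = min(ρ_h(x,y), θ). Assume the suprema below are integrable. Then the empirical Rademacher complexity of the class {(x,y) ↦ ρ_{θ,h}(x,y) : h ∈ H} satisfies E_σ[sup_{h∈H} (1/n) Σ_{i=1}^n σ_i ρ_{θ,h}(x_i,y_i)] ≤ (√(2π)/n) · E_g[sup_{h∈H} Σ_{i=1}^n Σ_{j=1}^c g_{ij} h_j(x_i)], where σ_1,…,σ_n are i.i.d. Rademacher random variables (uniform on {−1,+1}) and g_{ij} are i.i.d. standard Gaussian N(0,1) random variables. -/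
open MeasureTheory ProbabilityTheory Real

/-- The Rademacher sign corresponding to a Boolean. -/
def radSign (b : Bool) : ℝ := if b then 1 else -1

/-- Integrability of a countable supremum dominated by an integrable function. -/
lemma integrable_iSup_of_bound {ι E : Type*} [Countable ι] [Nonempty ι] [MeasurableSpace E]
    {μ : Measure E} (F : E → ι → ℝ) (b : E → ℝ) (hb : Integrable b μ)
    (hF : ∀ g s, |F g s| ≤ b g) (hm : ∀ s, Measurable fun g => F g s) :
    Integrable (fun g => ⨆ s, F g s) μ := by
  have hbd : ∀ g, BddAbove (Set.range (F g)) := fun g =>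
    ⟨b g, by rintro _ ⟨s, rfl⟩; exact (abs_le.1 (hF g s)).2⟩
  refine hb.mono' (Measurable.iSup hm).aestronglyMeasurable (ae_of_all _ fun g => ?_)
  rw [Real.norm_eq_abs, abs_le]
  constructor
  · obtain ⟨s⟩ := ‹Nonempty ι›
    exact (abs_le.1 (hF g s)).1.trans (le_ciSup (hbd g) s)
  · exact ciSup_le fun s => (abs_le.1 (hF g s)).2

/-- One-variable contraction step. -/
lemma contraction_step {ι E : Type*} [Countable ι] [Nonempty ι] [MeasurableSpace E]
    {μ : Measure E} [IsProbabilityMeasure μ] (f R : ι → ℝ) (φ : E → ι → ℝ) (b : E → ℝ) (K : ℝ)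
    (hb : Integrable b μ) (hφ : ∀ g s, |φ g s| ≤ b g) (hm : ∀ s, Measurable fun g => φ g s)
    (hR : ∀ s, |R s| ≤ K) (T : E → E) (hT : MeasurePreserving T μ μ)
    (hTφ : ∀ g s, φ (T g) s = - φ g s)
    (hf : ∀ s t, f s - f t ≤ ∫ g, |φ g s - φ g t| ∂μ) :
    (⨆ s, (f s + R s)) + (⨆ s, (-f s + R s)) ≤ 2 * ∫ g, ⨆ s, (φ g s + R s) ∂μ := by
  have hbK : Integrable (fun g => b g + K) μ := hb.add (integrable_const K)
  have hp : ∀ g s, |φ g s + R s| ≤ b g + K := fun g s =>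
    (abs_add_le _ _).trans (add_le_add (hφ g s) (hR s))
  have hq : ∀ g s, |-φ g s + R s| ≤ b g + K := fun g s =>
    (abs_add_le _ _).trans (add_le_add (by rw [abs_neg]; exact hφ g s) (hR s))
  have hI1 := integrable_iSup_of_bound (μ := μ) (fun g s => φ g s + R s) _ hbK hp
    (fun s => (hm s).add_const _)
  have hI2 := integrable_iSup_of_bound (μ := μ) (fun g s => -φ g s + R s) _ hbK hq
    (fun s => (hm s).neg.add_const _)
  have heq : ∫ g, ⨆ s, (-φ g s + R s) ∂μ = ∫ g, ⨆ s, (φ g s + R s) ∂μ := by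
    have h1 : Measurable fun g => ⨆ s, (φ g s + R s) :=
      Measurable.iSup fun s => (hm s).add_const _
    have h2 : ∫ g, ⨆ s, (φ g s + R s) ∂(μ.map T) = ∫ g, ⨆ s, (φ (T g) s + R s) ∂μ :=
      integral_map hT.measurable.aemeasurable h1.aestronglyMeasurable
    rw [hT.map_eq] at h2
    simp only [hTφ] at h2
    exact h2.symm
  have key : ∀ s t, (f s + R s) + (-f t + R t) ≤ 2 * ∫ g, ⨆ s, (φ g s + R s) ∂μ := by
    intro s t
    have hIs : ∀ s, Integrable (fun g => φ g s) μ := fun s =>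
      hb.mono' (hm s).aestronglyMeasurable (ae_of_all _ fun g => hφ g s)
    have hab : Integrable (fun g => |φ g s - φ g t|) μ := ((hIs s).sub (hIs t)).abs
    calc (f s + R s) + (-f t + R t) ≤ ∫ g, |φ g s - φ g t| ∂μ + (R s + R t) := by
          linarith [hf s t]
      _ = ∫ g, (|φ g s - φ g t| + (R s + R t)) ∂μ := by
          rw [integral_add hab (integrable_const _)]; simp
      _ ≤ ∫ g, ((⨆ s, (φ g s + R s)) + ⨆ s, (-φ g s + R s)) ∂μ := by
          refine integral_mono (hab.add (integrable_const _)) (hI1.add hI2) fun g => ?_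
          have b1 : BddAbove (Set.range fun s => φ g s + R s) :=
            ⟨b g + K, by rintro _ ⟨s, rfl⟩; exact (abs_le.1 (hp g s)).2⟩
          have b2 : BddAbove (Set.range fun s => -φ g s + R s) :=
            ⟨b g + K, by rintro _ ⟨s, rfl⟩; exact (abs_le.1 (hq g s)).2⟩
          have e1 := le_ciSup b1 s
          have e2 := le_ciSup b1 t
          have e3 := le_ciSup b2 s
          have e4 := le_ciSup b2 t
          simp only at e1 e2 e3 e4 ⊢
          rcases abs_cases (φ g s - φ g t) with ⟨h, _⟩ | ⟨h, _⟩ <;> rw [h] <;> linarith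
      _ = 2 * ∫ g, ⨆ s, (φ g s + R s) ∂μ := by
          rw [integral_add hI1 hI2, heq]; ring
  have h1 : ∀ t, (⨆ s, (f s + R s)) ≤ 2 * ∫ g, ⨆ s, (φ g s + R s) ∂μ - (-f t + R t) :=
    fun t => ciSup_le fun s => by linarith [key s t]
  have h2 : (⨆ s, (-f s + R s)) ≤ 2 * ∫ g, ⨆ s, (φ g s + R s) ∂μ - ⨆ s, (f s + R s) :=
    ciSup_le fun t => by linarith [h1 t]
  linarith

/-- Contraction principle, by induction on the sample size. -/
lemma contraction_induct {ι E : Type*} [Countable ι] [Nonempty ι] [MeasurableSpace E]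
    {μ : Measure E} [IsProbabilityMeasure μ] (T : E → E) (hT : MeasurePreserving T μ μ)
    (b : E → ℝ) (hb : Integrable b μ) (L : ℝ) (n : ℕ) :
    ∀ (f : Fin n → ι → ℝ) (R : ι → ℝ) (φ : Fin n → E → ι → ℝ) (K : ℝ),
    (∀ i g s, |φ i g s| ≤ b g) → (∀ i s, Measurable fun g => φ i g s) →
    (∀ s, |R s| ≤ K) → (∀ i s, |f i s| ≤ L) →
    (∀ i g s, φ i (T g) s = - φ i g s) →
    (∀ i s t, f i s - f i t ≤ ∫ g, |φ i g s - φ i g t| ∂μ) →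
    ∑ σ : Fin n → Bool, (⨆ s, (∑ i, radSign (σ i) * f i s + R s)) ≤
      2 ^ n * ∫ g, ⨆ s, (∑ i, φ i (g i) s + R s) ∂(Measure.pi fun _ : Fin n => μ) := by
  induction n with
  | zero =>
    intro f R φ K _ _ _ _ _ _
    simp
  | succ n ih =>
    intro f R φ K hφ hm hR hf hTφ hff
    have hbi : Integrable (fun g : Fin n → E => ∑ i, b (g i)) (Measure.pi fun _ => μ) :=
      integrable_finsetSum _ fun i _ =>
        (measurePreserving_eval (fun _ : Fin n => μ) i).integrable_comp_of_integrable hb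
    have hbig : Integrable (fun p : E × (Fin n → E) => b p.1 + (∑ i, b (p.2 i) + K))
        (μ.prod (Measure.pi fun _ => μ)) :=
      (hb.comp_fst _).add ((hbi.add (integrable_const K)).comp_snd _)
    have hmS : ∀ s, Measurable fun g : Fin n → E => ∑ i, φ i.succ (g i) s := fun s =>
      Finset.measurable_sum _ fun i _ => (hm i.succ s).comp (measurable_pi_apply i)
    have hbS : ∀ (g : Fin n → E) s, |∑ i, φ i.succ (g i) s| ≤ ∑ i, b (g i) := fun g s =>
      (Finset.abs_sum_le_sum_abs _ _).trans (Finset.sum_le_sum fun i _ => hφ _ _ _)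
    have hIbig : Integrable (fun p : E × (Fin n → E) =>
        ⨆ s, (φ 0 p.1 s + (∑ i, φ i.succ (p.2 i) s + R s)))
        (μ.prod (Measure.pi fun _ => μ)) := by
      refine integrable_iSup_of_bound _ _ hbig (fun p s => ?_) fun s => ?_
      · exact (abs_add_le _ _).trans (add_le_add (hφ _ _ _)
          ((abs_add_le _ _).trans (add_le_add (hbS _ _) (hR s))))
      · exact ((hm 0 s).comp measurable_fst).add
          (((hmS s).comp measurable_snd).add_const _)
    have hRHS : ∫ g, ⨆ s, (∑ i, φ i (g i) s + R s) ∂(Measure.pi fun _ : Fin (n+1) => μ) =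
        ∫ g' : Fin n → E, ∫ g0, ⨆ s, (φ 0 g0 s + (∑ i, φ i.succ (g' i) s + R s)) ∂μ
          ∂(Measure.pi fun _ => μ) := by
      rw [← integral_prod_symm _ hIbig]
      have := (measurePreserving_piFinSuccAbove (fun _ : Fin (n+1) => μ) 0).integral_comp'
        (fun p : E × (Fin n → E) => ⨆ s, (φ 0 p.1 s + (∑ i, φ i.succ (p.2 i) s + R s)))
      rw [← this]
      refine integral_congr_ae (ae_of_all _ fun g => ?_)
      simp [Fin.sum_univ_succ, add_assoc, Fin.removeNth, MeasurableEquiv.piFinSuccAbove, Fin.tail]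
    have hLHS : ∑ σ : Fin (n+1) → Bool, (⨆ s, (∑ i, radSign (σ i) * f i s + R s)) =
        ∑ σ : Fin n → Bool, (⨆ s, (∑ i, radSign (σ i) * f i.succ s + (f 0 s + R s))) +
        ∑ σ : Fin n → Bool, (⨆ s, (∑ i, radSign (σ i) * f i.succ s + (-f 0 s + R s))) := by
      rw [← (Fin.consEquiv fun _ => Bool).sum_comp, Fintype.sum_prod_type, Fintype.sum_bool]
      congr 1 <;> refine Finset.sum_congr rfl fun σ _ => ?_ <;> congr 1 <;> funext s <;>
        simp [Fin.consEquiv, Fin.sum_univ_succ, radSign] <;> ring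
    have hK1 : ∀ s, |f 0 s + R s| ≤ L + K := fun s =>
      (abs_add_le _ _).trans (add_le_add (hf 0 s) (hR s))
    have hK2 : ∀ s, |-f 0 s + R s| ≤ L + K := fun s =>
      (abs_add_le _ _).trans (add_le_add (by rw [abs_neg]; exact hf 0 s) (hR s))
    have i1 := ih (fun i => f i.succ) (fun s => f 0 s + R s) (fun i => φ i.succ) (L + K)
      (fun i => hφ _) (fun i => hm _) hK1 (fun i => hf _) (fun i => hTφ _) (fun i => hff _)
    have i2 := ih (fun i => f i.succ) (fun s => -f 0 s + R s) (fun i => φ i.succ) (L + K)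
      (fun i => hφ _) (fun i => hm _) hK2 (fun i => hf _) (fun i => hTφ _) (fun i => hff _)
    have hJ : ∀ Q : ι → ℝ, (∀ s, |Q s| ≤ L + K) → Integrable (fun g : Fin n → E =>
        ⨆ s, (∑ i, φ i.succ (g i) s + Q s)) (Measure.pi fun _ => μ) := fun Q hQ =>
      integrable_iSup_of_bound _ _ (hbi.add (integrable_const (L + K)))
        (fun g s => (abs_add_le _ _).trans (add_le_add (hbS g s) (hQ s)))
        (fun s => (hmS s).add_const _)
    rw [hLHS, hRHS]
    refine (add_le_add i1 i2).trans ?_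
    rw [← mul_add, ← integral_add (hJ _ hK1) (hJ _ hK2), pow_succ, mul_assoc]
    refine mul_le_mul_of_nonneg_left ?_ (by positivity)
    rw [← integral_const_mul]
    refine integral_mono ((hJ _ hK1).add (hJ _ hK2)) (hIbig.integral_prod_right.const_mul 2)
      fun g' => ?_
    have := contraction_step (μ := μ) (f 0) (fun s => ∑ i, φ i.succ (g' i) s + R s) (φ 0) b
      (∑ i, b (g' i) + K) hb (hφ 0) (hm 0)
      (fun s => (abs_add_le _ _).trans (add_le_add (hbS g' s) (hR s))) T hT (hTφ 0) (hff 0)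
    refine le_trans (le_of_eq ?_) this
    simp only
    congr 1 <;> congr 1 <;> funext s <;> ring

lemma integral_abs_gaussian : ∫ x, |x| ∂(gaussianReal 0 1) = √(2 / π) := by
  rw [integral_gaussianReal_eq_integral_smul one_ne_zero]
  have h0 : ∀ x : ℝ, gaussianPDFReal 0 1 x • |x| =
      (fun y => (√(2 * π))⁻¹ * (y ^ (1:ℝ) * rexp (-(1/2) * y ^ (2:ℝ)))) |x| := by
    intro x
    simp only [gaussianPDFReal, smul_eq_mul, Real.rpow_one, Real.rpow_two, sq_abs]
    simp
    ring_nf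
  simp_rw [h0]
  rw [integral_comp_abs (f := fun y => (√(2 * π))⁻¹ * (y ^ (1:ℝ) * rexp (-(1/2) * y ^ (2:ℝ)))),
    integral_const_mul, integral_rpow_mul_exp_neg_mul_rpow (by norm_num) (by norm_num)
      (by norm_num)]
  norm_num
  have h2 : √(2:ℝ) * √2 = 2 := Real.mul_self_sqrt (by norm_num)
  have hp : √π ≠ 0 := (Real.sqrt_pos.2 Real.pi_pos).ne'
  field_simp
  nlinarith

lemma integral_abs_lin_ge {c : ℕ} (w : Fin c → ℝ) (j : Fin c) :
    √(2 / π) * |w j| ≤ ∫ g : Fin c → ℝ, |∑ k, g k * w k| ∂(Measure.pi fun _ => gaussianReal 0 1) := by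
  classical
  set P := (Measure.pi fun _ : Fin c => gaussianReal 0 1)
  let S : (Fin c → ℝ) → Fin c → ℝ := fun g k => (if k = j then id else fun x => -x) (g k)
  have hS : MeasurePreserving S P P := by
    refine measurePreserving_pi _ _ fun k => ?_
    split_ifs
    · exact MeasurePreserving.id _
    · exact ⟨measurable_neg, by simpa using gaussianReal_map_neg (μ := 0) (v := 1)⟩
  have hid : Integrable (fun x : ℝ => x) (gaussianReal 0 1) :=
    (memLp_id_gaussianReal (μ := 0) (v := 1) 1).integrable le_rfl
  have hg : ∀ k, Integrable (fun g : Fin c → ℝ => g k) P := fun k =>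
    (measurePreserving_eval (fun _ : Fin c => gaussianReal 0 1) k).integrable_comp_of_integrable hid
  have hI : Integrable (fun g : Fin c → ℝ => |∑ k, g k * w k|) P :=
    (integrable_finsetSum _ fun k _ => (hg k).mul_const _).abs
  have hI2 : Integrable (fun g : Fin c → ℝ => |∑ k, S g k * w k|) P :=
    hS.integrable_comp_of_integrable hI
  have e1 : ∫ g, |∑ k, S g k * w k| ∂P = ∫ g, |∑ k, g k * w k| ∂P := by
    have : ∫ g, |∑ k, g k * w k| ∂(P.map S) = ∫ g, |∑ k, S g k * w k| ∂P :=
      integral_map hS.measurable.aemeasurable (by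
        rw [hS.map_eq]; exact hI.aestronglyMeasurable)
    rw [← this, hS.map_eq]
  have e2 : ∫ g : Fin c → ℝ, |g j| ∂P = √(2 / π) := by
    rw [← integral_abs_gaussian]
    have hmp := measurePreserving_eval (fun _ : Fin c => gaussianReal 0 1) j
    have : ∫ x, |x| ∂(P.map (Function.eval j)) = ∫ g : Fin c → ℝ, |g j| ∂P :=
      integral_map hmp.measurable.aemeasurable (by fun_prop)
    rw [← this, hmp.map_eq]
  have e3 : ∫ g : Fin c → ℝ, 2 * (|g j| * |w j|) ∂P ≤
      ∫ g, (|∑ k, g k * w k| + |∑ k, S g k * w k|) ∂P := by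
    refine integral_mono (((hg j).abs.mul_const _).const_mul _) (hI.add hI2) fun g => ?_
    have : ∑ k, g k * w k + ∑ k, S g k * w k = 2 * (g j * w j) := by
      rw [← Finset.sum_add_distrib, Finset.sum_eq_single j]
      · simp [S]; ring
      · intro k _ hk; simp [S, hk]
      · simp
    have h2 := abs_add_le (∑ k, g k * w k) (∑ k, S g k * w k)
    rw [this, abs_mul, abs_mul] at h2
    simpa using h2
  rw [integral_add hI hI2, e1, integral_const_mul, integral_mul_const, e2] at e3
  linarith

lemma margin_lip {X : Type*} {c : ℕ} (h h' : X → Fin c → ℝ) (x : X) (y : Fin c) (θ : ℝ) :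
    ∃ j, min (mcMargin h x y) θ - min (mcMargin h' x y) θ ≤ 2 * |h x j - h' x j| := by
  have : Nonempty (Fin c) := ⟨y⟩
  obtain ⟨j, hj⟩ := Finite.exists_max fun j => |h x j - h' x j|
  refine ⟨j, ?_⟩
  have hM : mcMargin h x y - mcMargin h' x y ≤ 2 * |h x j - h' x j| := by
    have h1 := (abs_le.1 (hj y)).2
    have h2 : (⨆ y' : {y' : Fin c // y' ≠ y}, h' x y'.1) ≤
        (⨆ y' : {y' : Fin c // y' ≠ y}, h x y'.1) + |h x j - h' x j| := by
      rcases isEmpty_or_nonempty {y' : Fin c // y' ≠ y} with he | he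
      · simp [Real.iSup_of_isEmpty]
      · refine ciSup_le fun y' => ?_
        have := le_ciSup (f := fun y' : {y' : Fin c // y' ≠ y} => h x y'.1)
          (Set.finite_range _).bddAbove y'
        have h3 := (abs_le.1 (hj y')).1
        linarith
    unfold mcMargin
    linarith
  have h0 := abs_nonneg (h x j - h' x j)
  rcases min_cases (mcMargin h x y) θ with ⟨a, _⟩ | ⟨a, _⟩ <;>
  rcases min_cases (mcMargin h' x y) θ with ⟨b, _⟩ | ⟨b, _⟩ <;> rw [a, b] <;> linarith

/-- **Rademacher complexity of the truncated-margin class is controlled by the Gaussian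
complexity with one Gaussian per class component** (step in the proof of Theorem 1):
the empirical Rademacher complexity of `{(x,y) ↦ min(ρ_h(x,y), θ) : h ∈ H}` is at most
`(√(2π)/n) · E_g[sup_{h∈H} Σ_i Σ_j g_{ij} h_j(x_i)]`. -/
theorem rademacher_truncated_margin_le_gaussian {X : Type*} (n c : ℕ) (hn : 1 ≤ n) (hc : 1 ≤ c)
    (x : Fin n → X) (y : Fin n → Fin c) (θ : ℝ) (hθ : 0 < θ)
    (H : Set (X → Fin c → ℝ)) (hHcount : H.Countable) (hHne : H.Nonempty)
    (hbdd₁ : ∀ σ : Fin n → Bool,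
      BddAbove (Set.range fun h : H =>
        (1 / (n : ℝ)) * ∑ i, radSign (σ i) * min (mcMargin (h : X → Fin c → ℝ) (x i) (y i)) θ))
    (hbdd₂ : ∀ g : Fin n × Fin c → ℝ,
      BddAbove (Set.range fun h : H => ∑ i, ∑ j, g (i, j) * (h : X → Fin c → ℝ) (x i) j))
    (hint : Integrable
      (fun g : Fin n × Fin c → ℝ => ⨆ h : H, ∑ i, ∑ j, g (i, j) * (h : X → Fin c → ℝ) (x i) j)
      (Measure.pi fun _ : Fin n × Fin c => gaussianReal 0 1)) :
    (1 / (2 : ℝ) ^ n) * ∑ σ : Fin n → Bool,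
        (⨆ h : H,
          (1 / (n : ℝ)) * ∑ i, radSign (σ i) * min (mcMargin (h : X → Fin c → ℝ) (x i) (y i)) θ) ≤
      (Real.sqrt (2 * π) / n) *
        ∫ g : Fin n × Fin c → ℝ,
          (⨆ h : H, ∑ i, ∑ j, g (i, j) * (h : X → Fin c → ℝ) (x i) j)
          ∂(Measure.pi fun _ : Fin n × Fin c => gaussianReal 0 1) := by
  classical
  have hcount : Countable H := hHcount.to_subtype
  have hne : Nonempty H := hHne.to_subtype
  have hn0 : (0 : ℝ) < n := by exact_mod_cast hn
  -- uniform bound on all coordinates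
  have hB : ∃ B : ℝ, ∀ (s : H) i j, |(s : X → Fin c → ℝ) (x i) j| ≤ B := by
    have hpos : ∀ (a : ℝ) (p : Fin n × Fin c),
        ∃ M, ∀ s : H, a * (s : X → Fin c → ℝ) (x p.1) p.2 ≤ M := by
      intro a p
      obtain ⟨M, hM⟩ := hbdd₂ (Pi.single p a)
      refine ⟨M, fun s => ?_⟩
      have := hM ⟨s, rfl⟩
      simp only at this
      rw [← Fintype.sum_prod_type
        (f := fun q : Fin n × Fin c => (Pi.single p a : Fin n × Fin c → ℝ) (q.1, q.2) *
          (s : X → Fin c → ℝ) (x q.1) q.2), Finset.sum_eq_single p] at this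
      · simpa using this
      · intro q _ hq
        simp [Pi.single_eq_of_ne hq]
      · simp
    choose M hM using hpos
    have hle : ∀ (s : H) p, |(s : X → Fin c → ℝ) (x p.1) p.2| ≤ max (M 1 p) (M (-1) p) := by
      intro s p
      have h1 := hM 1 p s
      have h2 := hM (-1) p s
      exact abs_le'.2 ⟨le_max_of_le_left (by linarith), le_max_of_le_right (by linarith)⟩
    obtain ⟨B, hB⟩ := (Set.finite_range fun p => max (M 1 p) (M (-1) p)).bddAbove
    exact ⟨B, fun s i j => (hle s (i, j)).trans (hB ⟨(i, j), rfl⟩)⟩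
  obtain ⟨B, hB⟩ := hB
  set C : ℝ := √(2 * π) with hC
  have hC0 : 0 ≤ C := Real.sqrt_nonneg _
  have hC2 : C * √(2 / π) = 2 := by
    rw [hC, ← Real.sqrt_mul (by positivity)]
    have : 2 * π * (2 / π) = 2 ^ 2 := by field_simp
    rw [this, Real.sqrt_sq (by norm_num)]
  set μ : Measure (Fin c → ℝ) := Measure.pi fun _ => gaussianReal 0 1 with hμ
  let T : (Fin c → ℝ) → Fin c → ℝ := fun g k => -(g k)
  have hT : MeasurePreserving T μ μ :=
    measurePreserving_pi _ _ fun k =>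
      ⟨measurable_neg, by simpa using gaussianReal_map_neg (μ := 0) (v := 1)⟩
  have hid : Integrable (fun x : ℝ => x) (gaussianReal 0 1) :=
    (memLp_id_gaussianReal (μ := 0) (v := 1) 1).integrable le_rfl
  have hg : ∀ k, Integrable (fun g : Fin c → ℝ => g k) μ := fun k =>
    (measurePreserving_eval (fun _ : Fin c => gaussianReal 0 1) k).integrable_comp_of_integrable hid
  let b : (Fin c → ℝ) → ℝ := fun g => C * ∑ k, |g k| * B
  have hb : Integrable b μ :=
    (integrable_finsetSum _ fun k _ => (hg k).abs.mul_const _).const_mul _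
  let f : Fin n → H → ℝ := fun i s => min (mcMargin (s : X → Fin c → ℝ) (x i) (y i)) θ
  let φ : Fin n → (Fin c → ℝ) → H → ℝ :=
    fun i g s => C * ∑ k, g k * (s : X → Fin c → ℝ) (x i) k
  have hff : ∀ i s t, ∃ j, f i s - f i t ≤
      2 * |(s : X → Fin c → ℝ) (x i) j - (t : X → Fin c → ℝ) (x i) j| :=
    fun i s t => margin_lip _ _ _ _ _
  have hfL : ∃ L, ∀ i s, |f i s| ≤ L := by
    obtain ⟨t⟩ := hne
    have hd : ∀ i s t, f i s - f i t ≤ 4 * B := fun i s t => by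
      obtain ⟨j, hj⟩ := hff i s t
      have h1 := abs_le.1 (hB s i j)
      have h2 := abs_le.1 (hB t i j)
      have : |(s : X → Fin c → ℝ) (x i) j - (t : X → Fin c → ℝ) (x i) j| ≤ 2 * B :=
        abs_le.2 ⟨by linarith, by linarith⟩
      linarith
    refine ⟨∑ i, |f i t| + 4 * B, fun i s => ?_⟩
    have h1 : |f i t| ≤ ∑ i, |f i t| :=
      Finset.single_le_sum (f := fun i => |f i t|) (fun i _ => abs_nonneg _) (Finset.mem_univ i)
    have h2 := hd i s t
    have h3 := hd i t s
    have h4 := abs_le.1 (le_refl |f i t|)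
    exact abs_le.2 ⟨by linarith, by linarith⟩
  obtain ⟨L, hL⟩ := hfL
  have key := contraction_induct (μ := μ) T hT b hb L n f (fun _ => 0) φ 0
    (fun i g s => by
      simp only [φ, b]
      rw [abs_mul, abs_of_nonneg hC0]
      refine mul_le_mul_of_nonneg_left ?_ hC0
      refine (Finset.abs_sum_le_sum_abs _ _).trans (Finset.sum_le_sum fun k _ => ?_)
      rw [abs_mul]
      exact mul_le_mul_of_nonneg_left (hB s i k) (abs_nonneg _))
    (fun i s => by fun_prop) (fun s => by simp) hL
    (fun i g s => by simp [φ, T])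
    (fun i s t => by
      obtain ⟨j, hj⟩ := hff i s t
      refine hj.trans ?_
      have := integral_abs_lin_ge
        (fun k => (s : X → Fin c → ℝ) (x i) k - (t : X → Fin c → ℝ) (x i) k) j
      have h2 := mul_le_mul_of_nonneg_left this hC0
      rw [← mul_assoc, hC2, ← integral_const_mul] at h2
      refine h2.trans (le_of_eq (integral_congr_ae (ae_of_all _ fun g => ?_)))
      simp only [φ]
      rw [← mul_sub, abs_mul, abs_of_nonneg hC0, ← Finset.sum_sub_distrib]
      simp only [mul_sub])
  -- rewrite both sides
  have hcurry : ∫ g : Fin n × Fin c → ℝ,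
        (⨆ h : H, ∑ i, ∑ j, g (i, j) * (h : X → Fin c → ℝ) (x i) j)
          ∂(Measure.pi fun _ : Fin n × Fin c => gaussianReal 0 1) =
      ∫ g : Fin n → Fin c → ℝ, (⨆ h : H, ∑ i, ∑ j, g i j * (h : X → Fin c → ℝ) (x i) j)
        ∂(Measure.pi fun _ : Fin n => μ) := by
    have hm := Measure.infinitePi_map_curry (fun (_ : Fin n) (_ : Fin c) => gaussianReal 0 1)
    simp only [Measure.infinitePi_eq_pi] at hm
    rw [hμ, ← hm, integral_map_equiv]
    rfl
  rw [hcurry]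
  have hr : ∫ g : Fin n → Fin c → ℝ, ⨆ s, (∑ i, φ i (g i) s + 0) ∂(Measure.pi fun _ => μ) =
      C * ∫ g : Fin n → Fin c → ℝ, (⨆ h : H, ∑ i, ∑ j, g i j * (h : X → Fin c → ℝ) (x i) j)
        ∂(Measure.pi fun _ : Fin n => μ) := by
    rw [← integral_const_mul]
    refine integral_congr_ae (ae_of_all _ fun g => ?_)
    simp only [φ, add_zero]
    rw [Real.mul_iSup_of_nonneg hC0]
    simp only [Finset.mul_sum]
  have hl : ∀ σ : Fin n → Bool, (⨆ h : H,
      (1 / (n : ℝ)) * ∑ i, radSign (σ i) * min (mcMargin (h : X → Fin c → ℝ) (x i) (y i)) θ) =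
      (1 / (n : ℝ)) * ⨆ s, (∑ i, radSign (σ i) * f i s + 0) := by
    intro σ
    rw [Real.mul_iSup_of_nonneg (by positivity)]
    simp only [f, add_zero]
  rw [hr] at key
  simp only [hl]
  rw [← Finset.mul_sum]
  have h2n : (0 : ℝ) < 2 ^ n := by positivity
  calc _ = (1 / (2:ℝ) ^ n * (1 / n)) * ∑ σ : Fin n → Bool,
        ⨆ s, (∑ i, radSign (σ i) * f i s + 0) := by ring
    _ ≤ (1 / (2:ℝ) ^ n * (1 / n)) * _ := mul_le_mul_of_nonneg_left key (by positivity)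
    _ = _ := by field_simp
end

section
/- Let E be a real Hilbert space, c, n ≥ 1, 1 < p ≤ 2 with p* = p/(p−1), v_1,…,v_n ∈ E, labels y_1,…,y_n ∈ {1,…,c}, C > 0, ℓ : ℝ → ℝ any function, and nonnegative multipliers α̃_{ij} ≥ 0 for i = 1,…,n and j ∈ {1,…,c} \ {y_i}. Define α ∈ ℝ^{n×c} by α_{ij} = −α̃_{ij} for j ≠ y_i and α_{i y_i} = Σ_{j≠y_i} α̃_{ij}. Then, as an identity in the extended reals ℝ ∪ {±∞}, inf over w ∈ E^c and t ∈ ℝ^n of the Lagrangian (1/2)(Σ_{j=1}^c ‖w_j‖^p)^{2/p} + C Σ_{i=1}^n ℓ(t_i) + Σ_{i=1}^n Σ_{j≠y_i} α̃_{ij}(t_i + ⟨w_j, v_i⟩ − ⟨w_{y_i}, v_i⟩) equals −(1/2)(Σ_{j=1}^c ‖Σ_{i=1}^n α_{ij} v_i‖^{p*})^{2(p−1)/p} − C Σ_{i=1}^n ℓ*(−α_{i y_i}/C), where ℓ*(s) = sup_{t∈ℝ}(s·t − ℓ(t)) ∈ ℝ ∪ {+∞} is the Fenchel conjugate of ℓ.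 -/
open RealInnerProductSpace

/-- The Fenchel conjugate `ℓ*(s) = sup_t (s·t − ℓ(t))`, valued in the extended reals. -/
noncomputable def fenchelConj (ℓ : ℝ → ℝ) (s : ℝ) : EReal :=
  ⨆ t : ℝ, ((s * t - ℓ t : ℝ) : EReal)

/-- The dual variables `α_{ij} = −α̃_{ij}` for `j ≠ y_i` and `α_{i y_i} = Σ_{j ≠ y_i} α̃_{ij}`. -/
noncomputable def dualAlpha {n c : ℕ} (y : Fin n → Fin c) (αt : Fin n → Fin c → ℝ)
    (i : Fin n) (j : Fin c) : ℝ :=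
  if j = y i then ∑ j' ∈ Finset.univ.erase (y i), αt i j' else -αt i j

theorem svm_coe_sum {ι : Type*} (S : Finset ι) (f : ι → ℝ) :
    ((∑ i ∈ S, f i : ℝ) : EReal) = ∑ i ∈ S, (f i : EReal) := by
  classical
  induction S using Finset.induction_on with
  | empty => simp
  | insert a S ha ih => rw [Finset.sum_insert ha, Finset.sum_insert ha, EReal.coe_add, ih]

theorem svm_lower {E : Type*} [NormedAddCommGroup E] [InnerProductSpace ℝ E]
    {c : ℕ} {p q : ℝ} (hpq : p.HolderConjugate q) (w u : Fin c → E) :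
    -(1 / 2) * (∑ j, ‖u j‖ ^ q) ^ (2 / q) ≤
      (1 / 2) * (∑ j, ‖w j‖ ^ p) ^ (2 / p) - ∑ j, ⟪w j, u j⟫ := by
  have h1 : ∑ j, ⟪w j, u j⟫ ≤ ∑ j, ‖w j‖ * ‖u j‖ :=
    Finset.sum_le_sum fun j _ => real_inner_le_norm _ _
  have h2 := Real.inner_le_Lp_mul_Lq_of_nonneg Finset.univ hpq
    (f := fun j => ‖w j‖) (g := fun j => ‖u j‖) (fun _ _ => norm_nonneg _)
    (fun _ _ => norm_nonneg _)
  have hA : 0 ≤ ∑ j, ‖w j‖ ^ p := Finset.sum_nonneg fun _ _ => by positivity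
  have hB : 0 ≤ ∑ j, ‖u j‖ ^ q := Finset.sum_nonneg fun _ _ => by positivity
  have e1 : (∑ j, ‖w j‖ ^ p) ^ (2 / p) = ((∑ j, ‖w j‖ ^ p) ^ (1 / p)) ^ 2 := by
    rw [← Real.rpow_natCast, ← Real.rpow_mul hA]; congr 1; push_cast; ring
  have e2 : (∑ j, ‖u j‖ ^ q) ^ (2 / q) = ((∑ j, ‖u j‖ ^ q) ^ (1 / q)) ^ 2 := by
    rw [← Real.rpow_natCast, ← Real.rpow_mul hB]; congr 1; push_cast; ring
  rw [e1, e2]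
  nlinarith [sq_nonneg ((∑ j, ‖w j‖ ^ p) ^ (1 / p) - (∑ j, ‖u j‖ ^ q) ^ (1 / q))]

theorem svm_attained {E : Type*} [NormedAddCommGroup E] [InnerProductSpace ℝ E]
    {c : ℕ} {p q : ℝ} (hpq : p.HolderConjugate q) (u : Fin c → E) :
    ∃ w : Fin c → E, (1 / 2) * (∑ j, ‖w j‖ ^ p) ^ (2 / p) - ∑ j, ⟪w j, u j⟫ =
      -(1 / 2) * (∑ j, ‖u j‖ ^ q) ^ (2 / q) := by
  have hp := hpq.pos
  have hq := hpq.symm.pos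
  have hB : 0 ≤ ∑ j, ‖u j‖ ^ q := Finset.sum_nonneg fun _ _ => by positivity
  rcases hB.eq_or_lt with h0 | hT
  · refine ⟨0, ?_⟩
    rw [← h0]
    have h5 : (2 / p) ≠ 0 := by positivity
    have h6 : (2 / q) ≠ 0 := by positivity
    simp [Real.zero_rpow hp.ne', Real.zero_rpow h5, Real.zero_rpow h6]
  · set T := ∑ j, ‖u j‖ ^ q with hTdef
    have hconj : (q - 1) * p = q := hpq.symm.sub_one_mul_conj
    have hinv : p⁻¹ + q⁻¹ = 1 := hpq.inv_add_inv_eq_one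
    have key : ∀ j, ‖u j‖ ^ (q - 2) * ‖u j‖ ^ 2 = ‖u j‖ ^ q := by
      intro j
      rcases (norm_nonneg (u j)).eq_or_lt with h | h
      · rw [← h, Real.zero_rpow hq.ne']; simp
      · rw [← Real.rpow_natCast, ← Real.rpow_add h]; congr 1; push_cast; ring
    have key2 : ∀ j, ‖u j‖ ^ (q - 2) * ‖u j‖ = ‖u j‖ ^ (q - 1) := by
      intro j
      rcases (norm_nonneg (u j)).eq_or_lt with h | h
      · rw [← h, Real.zero_rpow hpq.symm.sub_one_pos.ne']; simp
      · nth_rewrite 2 [← Real.rpow_one ‖u j‖]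
        rw [← Real.rpow_add h]; congr 1; ring
    refine ⟨fun j => (T ^ (2 / q - 1) * ‖u j‖ ^ (q - 2)) • u j, ?_⟩
    have e1 : ∑ j, ⟪(T ^ (2 / q - 1) * ‖u j‖ ^ (q - 2)) • u j, u j⟫ = T ^ (2 / q) := by
      simp only [real_inner_smul_left, real_inner_self_eq_norm_sq, mul_assoc, key]
      rw [← Finset.mul_sum, ← hTdef]
      nth_rewrite 2 [← Real.rpow_one T]
      rw [← Real.rpow_add hT]; congr 1; ring
    have e2 : ∑ j, ‖(T ^ (2 / q - 1) * ‖u j‖ ^ (q - 2)) • u j‖ ^ p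
        = T ^ ((2 / q - 1) * p + 1) := by
      have : ∀ j, ‖(T ^ (2 / q - 1) * ‖u j‖ ^ (q - 2)) • u j‖ ^ p
          = T ^ ((2 / q - 1) * p) * ‖u j‖ ^ q := by
        intro j
        rw [norm_smul, Real.norm_of_nonneg (by positivity), mul_assoc, key2,
          Real.mul_rpow (by positivity) (by positivity), ← Real.rpow_mul hT.le,
          ← Real.rpow_mul (norm_nonneg _), hconj]
      simp only [this]
      rw [← Finset.mul_sum, ← hTdef, Real.rpow_add hT, Real.rpow_one]
    have e3 : ((2 / q - 1) * p + 1) * (2 / p) = 2 / q := by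
      have : p⁻¹ = 1 - q⁻¹ := by linarith
      have h3 : ((2 / q - 1) * p + 1) * (2 / p) = 2 * (2 * q⁻¹ - 1) + 2 * p⁻¹ := by
        field_simp
      rw [h3, this, div_eq_mul_inv]; ring
    rw [e1, e2, ← Real.rpow_mul hT.le, e3]; ring

theorem sum_conj_ne_bot (ℓ : ℝ → ℝ) {n : ℕ} (s : Fin n → ℝ) (S : Finset (Fin n)) :
    ∑ i ∈ S, fenchelConj ℓ (s i) ≠ ⊥ := by
  have : ((∑ i ∈ S, (s i * 0 - ℓ 0) : ℝ) : EReal) ≤ ∑ i ∈ S, fenchelConj ℓ (s i) := by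
    rw [svm_coe_sum]
    exact Finset.sum_le_sum fun i _ => le_iSup (fun t : ℝ => ((s i * t - ℓ t : ℝ) : EReal)) 0
  exact ne_bot_of_le_ne_bot (EReal.coe_ne_bot _) this

theorem sum_conj_approx (ℓ : ℝ → ℝ) {n : ℕ} (s : Fin n → ℝ) (S : Finset (Fin n)) :
    ∀ b : ℝ, (b : EReal) < ∑ i ∈ S, fenchelConj ℓ (s i) →
      ∃ t : Fin n → ℝ, b < ∑ i ∈ S, (s i * t i - ℓ (t i)) := by
  induction S using Finset.induction_on with
  | empty => intro b hb; exact ⟨0, by simpa using hb⟩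
  | insert a S ha ih =>
    intro b hb
    rw [Finset.sum_insert ha] at hb
    have hbot := sum_conj_ne_bot ℓ s S
    obtain ⟨x, z, hx, hz, hxz⟩ : ∃ x z : ℝ, (x : EReal) < fenchelConj ℓ (s a) ∧
        (z : EReal) < ∑ i ∈ S, fenchelConj ℓ (s i) ∧ b ≤ x + z := by
      have hbot' : fenchelConj ℓ (s a) ≠ ⊥ := by
        simpa using sum_conj_ne_bot ℓ s {a}
      generalize fenchelConj ℓ (s a) = A at *
      generalize ∑ i ∈ S, fenchelConj ℓ (s i) = B at *
      induction A with
      | bot => exact absurd rfl hbot'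
      | top =>
        obtain ⟨z, -, hz⟩ := EReal.lt_iff_exists_real_btwn.1 (bot_lt_iff_ne_bot.2 hbot)
        exact ⟨b - z, z, EReal.coe_lt_top _, hz, by linarith⟩
      | coe A =>
        induction B with
        | bot => exact absurd rfl hbot
        | top => exact ⟨A - 1, b - (A - 1), by exact_mod_cast sub_one_lt A,
            EReal.coe_lt_top _, by linarith⟩
        | coe B =>
          have hb' : b < A + B := by exact_mod_cast hb
          exact ⟨A - (A + B - b) / 2, B - (A + B - b) / 2,
            by norm_cast; linarith, by norm_cast; linarith, by linarith⟩
    obtain ⟨t, ht⟩ := ih z hz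
    obtain ⟨t0, ht0⟩ := lt_iSup_iff.1 hx
    have ht0' : x < s a * t0 - ℓ t0 := by exact_mod_cast ht0
    refine ⟨Function.update t a t0, ?_⟩
    rw [Finset.sum_insert ha, Function.update_self]
    have : ∑ i ∈ S, (s i * Function.update t a t0 i - ℓ (Function.update t a t0 i))
        = ∑ i ∈ S, (s i * t i - ℓ (t i)) := by
      refine Finset.sum_congr rfl fun i hi => ?_
      rw [Function.update_of_ne (ne_of_mem_of_not_mem hi ha)]
    rw [this]; linarith

theorem lagr_eq {E : Type*} [NormedAddCommGroup E] [InnerProductSpace ℝ E]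
    {c n : ℕ} (v : Fin n → E) (y : Fin n → Fin c) (C : ℝ) (hC : 0 < C) (ℓ : ℝ → ℝ)
    (αt : Fin n → Fin c → ℝ) (w : Fin c → E) (t : Fin n → ℝ) :
    C * ∑ i, ℓ (t i) + ∑ i, ∑ j ∈ Finset.univ.erase (y i),
            αt i j * (t i + ⟪w j, v i⟫ - ⟪w (y i), v i⟫)
    = - ∑ j, ⟪w j, ∑ i, dualAlpha y αt i j • v i⟫
      - C * ∑ i, ((-(dualAlpha y αt i (y i)) / C) * t i - ℓ (t i)) := by
  have h1 : ∑ j, ⟪w j, ∑ i, dualAlpha y αt i j • v i⟫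
      = ∑ i, ∑ j, dualAlpha y αt i j * ⟪w j, v i⟫ := by
    rw [Finset.sum_comm]
    simp only [inner_sum, real_inner_smul_right]
  rw [h1, Finset.mul_sum, Finset.mul_sum, ← Finset.sum_add_distrib, ← Finset.sum_neg_distrib,
    ← Finset.sum_sub_distrib]
  refine Finset.sum_congr rfl fun i _ => ?_
  rw [← Finset.add_sum_erase _ _ (Finset.mem_univ (y i))]
  have h2 : ∑ j ∈ Finset.univ.erase (y i), dualAlpha y αt i j * ⟪w j, v i⟫
      = - ∑ j ∈ Finset.univ.erase (y i), αt i j * ⟪w j, v i⟫ := by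
    rw [← Finset.sum_neg_distrib]
    refine Finset.sum_congr rfl fun j hj => ?_
    rw [dualAlpha, if_neg (Finset.ne_of_mem_erase hj)]; ring
  have h3 : dualAlpha y αt i (y i) = ∑ j ∈ Finset.univ.erase (y i), αt i j := by
    simp [dualAlpha]
  have h4 : ∑ j ∈ Finset.univ.erase (y i), αt i j * (t i + ⟪w j, v i⟫ - ⟪w (y i), v i⟫)
      = (∑ j ∈ Finset.univ.erase (y i), αt i j) * (t i - ⟪w (y i), v i⟫)
        + ∑ j ∈ Finset.univ.erase (y i), αt i j * ⟪w j, v i⟫ := by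
    rw [Finset.sum_mul, ← Finset.sum_add_distrib]
    exact Finset.sum_congr rfl fun j _ => by ring
  rw [h2, h4, h3]
  field_simp
  ring

/-- **Complete dualization of the `ℓ_p`-norm multi-class SVM** (Problem 2): the infimum of
the Lagrangian over the primal variables `(w, t)` equals
`−(1/2)(Σ_j ‖Σ_i α_{ij} v_i‖^{p*})^{2(p−1)/p} − C Σ_i ℓ*(−α_{i y_i}/C)` in the extended reals. -/
theorem lp_svm_complete_dual {E : Type*} [NormedAddCommGroup E] [InnerProductSpace ℝ E]
    (c n : ℕ) (hc : 1 ≤ c) (hn : 1 ≤ n)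
    (p : ℝ) (hp₁ : 1 < p) (hp₂ : p ≤ 2)
    (v : Fin n → E) (y : Fin n → Fin c) (C : ℝ) (hC : 0 < C) (ℓ : ℝ → ℝ)
    (αt : Fin n → Fin c → ℝ) (hαt : ∀ i j, j ≠ y i → 0 ≤ αt i j) :
    (⨅ wt : (Fin c → E) × (Fin n → ℝ),
      (((1 / 2) * (∑ j, ‖wt.1 j‖ ^ p) ^ (2 / p) + C * ∑ i, ℓ (wt.2 i)
        + ∑ i, ∑ j ∈ Finset.univ.erase (y i),
            αt i j * (wt.2 i + ⟪wt.1 j, v i⟫ - ⟪wt.1 (y i), v i⟫) : ℝ) : EReal)) =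
    ((-(1 / 2) * (∑ j, ‖∑ i, dualAlpha y αt i j • v i‖ ^ (p / (p - 1))) ^ (2 * (p - 1) / p)
        : ℝ) : EReal)
      - ((C : ℝ) : EReal) * ∑ i, fenchelConj ℓ (-(dualAlpha y αt i (y i)) / C) := by
  have hpq : p.HolderConjugate (p / (p - 1)) := Real.HolderConjugate.conjExponent hp₁
  have hexp : 2 * (p - 1) / p = 2 / (p / (p - 1)) := by
    have : p - 1 ≠ 0 := by linarith
    field_simp
  rw [hexp]
  simp only [add_assoc, lagr_eq v y C hC ℓ αt]
  set u : Fin c → E := fun j => ∑ i, dualAlpha y αt i j • v i with hu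
  set s : Fin n → ℝ := fun i => -(dualAlpha y αt i (y i)) / C with hs
  set D : ℝ := -(1 / 2) * (∑ j, ‖u j‖ ^ (p / (p - 1))) ^ (2 / (p / (p - 1))) with hD
  change (⨅ wt : (Fin c → E) × (Fin n → ℝ),
      (((1 / 2) * (∑ j, ‖wt.1 j‖ ^ p) ^ (2 / p) + (- ∑ j, ⟪wt.1 j, u j⟫
        - C * ∑ i, (s i * wt.2 i - ℓ (wt.2 i))) : ℝ) : EReal)) =
      (D : EReal) - (C : EReal) * ∑ i, fenchelConj ℓ (s i)
  apply le_antisymm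
  · obtain ⟨w, hw⟩ := svm_attained hpq u
    refine le_of_forall_gt fun x hx => ?_
    obtain ⟨r, hr, hrx⟩ := EReal.lt_iff_exists_real_btwn.1 hx
    refine lt_of_le_of_lt ?_ hrx
    have hlt : (((D - r) / C : ℝ) : EReal) < ∑ i, fenchelConj ℓ (s i) := by
      have hb := sum_conj_ne_bot ℓ s Finset.univ
      generalize ∑ i, fenchelConj ℓ (s i) = A at *
      induction A with
      | bot => exact absurd rfl hb
      | top => exact EReal.coe_lt_top _
      | coe A =>
        have : D - C * A < r := by exact_mod_cast hr
        norm_cast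
        rw [div_lt_iff₀ hC]; linarith
    obtain ⟨t, ht⟩ := sum_conj_approx ℓ s Finset.univ _ hlt
    refine (iInf_le _ (w, t)).trans ?_
    rw [EReal.coe_le_coe_iff]
    rw [div_lt_iff₀ hC] at ht
    dsimp only
    linarith
  · refine le_iInf fun wt => ?_
    have h1 := svm_lower hpq wt.1 u
    have h2 : ((∑ i, (s i * wt.2 i - ℓ (wt.2 i)) : ℝ) : EReal)
        ≤ ∑ i, fenchelConj ℓ (s i) := by
      rw [svm_coe_sum]
      exact Finset.sum_le_sum fun i _ =>
        le_iSup (fun t : ℝ => ((s i * t - ℓ t : ℝ) : EReal)) (wt.2 i)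
    have h3 := mul_le_mul_of_nonneg_left h2 (a := (C : EReal)) (by exact_mod_cast hC.le)
    refine (EReal.sub_le_sub le_rfl h3).trans ?_
    norm_cast
    linarith
end

section
/- Let E be a real Hilbert space, c, n ≥ 1, v_1,…,v_n ∈ E, labels y_1,…,y_n ∈ {1,…,c}, C > 0, β_1,…,β_c > 0, ℓ : ℝ → ℝ any function, and nonnegative multipliers α̃_{ij} ≥ 0 for i = 1,…,n and j ∈ {1,…,c} \ {y_i}. Define α ∈ ℝ^{n×c} by α_{ij} = −α̃_{ij} for j ≠ y_i and α_{i y_i} = Σ_{j≠y_i} α̃_{ij}. Then, as an identity in the extended reals, inf over w ∈ E^c and t ∈ ℝ^n of the Lagrangian Σ_{j=1}^c ‖w_j‖²/(2β_j) + C Σ_{i=1}^n ℓ(t_i) + Σ_{i=1}^n Σ_{j≠y_i} α̃_{ij}(t_i + ⟨w_j, v_i⟩ − ⟨w_{y_i}, v_i⟩) equals −(1/2) Σ_{j=1}^c β_j ‖Σ_{i=1}^n α_{ij} v_i‖² − C Σ_{i=1}^n ℓ*(−α_{i y_i}/C), where ℓ*(s) = sup_{t∈ℝ}(s·t − ℓ(t));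 moreover, the infimum over w (for any fixed t) is attained at w_j = β_j Σ_{i=1}^n α_{ij} v_i for j = 1,…,c. -/
open RealInnerProductSpace

lemma exists_lt_sum_aux {ι : Type*} [DecidableEq ι] (g : ι → ℝ → ℝ) (s : Finset ι) :
    ∀ b : EReal, b < ∑ i ∈ s, (⨆ x : ℝ, ((g i x : ℝ) : EReal)) →
      ∃ t : ι → ℝ, b < ((∑ i ∈ s, g i (t i) : ℝ) : EReal) := by
  induction s using Finset.induction_on with
  | empty => intro b hb; exact ⟨0, by simpa using hb⟩
  | insert a s ha ih =>
    intro b hb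
    by_contra hcon
    push Not at hcon
    apply absurd hb
    rw [not_lt, Finset.sum_insert ha]
    apply EReal.add_le_of_forall_lt
    intro a' ha' b' hb'
    obtain ⟨t, ht⟩ := ih b' hb'
    obtain ⟨x, hx⟩ := lt_iSup_iff.1 ha'
    have h1 := hcon (Function.update t a x)
    rw [Finset.sum_insert ha] at h1
    have h2 : ∑ i ∈ s, g i (Function.update t a x i) = ∑ i ∈ s, g i (t i) := by
      apply Finset.sum_congr rfl
      intro i hi
      rw [Function.update_of_ne]
      rintro rfl
      exact ha hi
    rw [h2, Function.update_self, EReal.coe_add] at h1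
    exact (add_le_add hx.le ht.le).trans h1

lemma sum_iSup_aux {ι : Type*} [Fintype ι] [DecidableEq ι] (g : ι → ℝ → ℝ) :
    ∑ i, (⨆ x : ℝ, ((g i x : ℝ) : EReal)) = ⨆ t : ι → ℝ, ((∑ i, g i (t i) : ℝ) : EReal) := by
  apply le_antisymm
  · apply le_of_forall_lt
    intro b hb
    obtain ⟨t, ht⟩ := exists_lt_sum_aux g Finset.univ b hb
    exact lt_iSup_iff.2 ⟨t, ht⟩
  · apply iSup_le
    intro t
    rw [show ((∑ i, g i (t i) : ℝ) : EReal) = ∑ i, ((g i (t i) : ℝ) : EReal) from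
      map_sum (⟨⟨Real.toEReal, rfl⟩, EReal.coe_add⟩ : ℝ →+ EReal) _ _]
    exact Finset.sum_le_sum fun i _ => le_iSup (fun x : ℝ => ((g i x : ℝ) : EReal)) (t i)

lemma le_sub_mul_iff_aux (x S : EReal) (K C : ℝ) (hC : 0 < C) :
    x ≤ (K : EReal) - (C : EReal) * S ↔ S ≤ ((K : EReal) - x) / (C : EReal) := by
  rw [EReal.le_div_iff_mul_le (by exact_mod_cast hC) (EReal.coe_ne_top C), mul_comm S,
    EReal.le_sub_iff_add_le (Or.inr (EReal.coe_ne_bot K)) (Or.inr (EReal.coe_ne_top K)),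
    EReal.le_sub_iff_add_le (Or.inr (EReal.coe_ne_bot K)) (Or.inr (EReal.coe_ne_top K)), add_comm]

lemma lagrangian_aux {E : Type*} [NormedAddCommGroup E] [InnerProductSpace ℝ E]
    (c n : ℕ) (v : Fin n → E) (y : Fin n → Fin c) (C : ℝ) (hC : 0 < C)
    (β : Fin c → ℝ) (hβ : ∀ j, 0 < β j) (ℓ : ℝ → ℝ)
    (αt : Fin n → Fin c → ℝ) (w : Fin c → E) (t : Fin n → ℝ) :
    ∑ j, ‖w j‖ ^ 2 / (2 * β j) + C * ∑ i, ℓ (t i)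
        + ∑ i, ∑ j ∈ Finset.univ.erase (y i),
            αt i j * (t i + ⟪w j, v i⟫ - ⟪w (y i), v i⟫) =
    ∑ j, ‖w j - β j • ∑ i, dualAlpha y αt i j • v i‖ ^ 2 / (2 * β j)
      + (-(1 / 2) * ∑ j, β j * ‖∑ i, dualAlpha y αt i j • v i‖ ^ 2
      - C * ∑ i, (-(dualAlpha y αt i (y i)) / C * t i - ℓ (t i))) := by
  have h1 : ∀ j, ‖w j - β j • ∑ i, dualAlpha y αt i j • v i‖ ^ 2 / (2 * β j) =
      ‖w j‖ ^ 2 / (2 * β j) - ∑ i, dualAlpha y αt i j * ⟪w j, v i⟫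
        + 1 / 2 * (β j * ‖∑ i, dualAlpha y αt i j • v i‖ ^ 2) := by
    intro j
    have hb := (hβ j).ne'
    have : ∑ i, dualAlpha y αt i j * ⟪w j, v i⟫ = ⟪w j, ∑ i, dualAlpha y αt i j • v i⟫ := by
      simp [inner_sum, real_inner_smul_right]
    rw [this, norm_sub_sq_real, real_inner_smul_right, norm_smul, Real.norm_eq_abs, mul_pow,
      sq_abs]
    field_simp
  have h2 : ∀ i, ∑ j ∈ Finset.univ.erase (y i), αt i j * (t i + ⟪w j, v i⟫ - ⟪w (y i), v i⟫)
      = dualAlpha y αt i (y i) * t i - ∑ j, dualAlpha y αt i j * ⟪w j, v i⟫ := by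
    intro i
    have h3 : dualAlpha y αt i (y i) = ∑ j ∈ Finset.univ.erase (y i), αt i j := by
      simp [dualAlpha]
    have h4 : ∑ j ∈ Finset.univ.erase (y i), dualAlpha y αt i j * ⟪w j, v i⟫
        = ∑ j ∈ Finset.univ.erase (y i), -(αt i j * ⟪w j, v i⟫) := by
      apply Finset.sum_congr rfl
      intro j hj
      simp [dualAlpha, Finset.ne_of_mem_erase hj]
    rw [← Finset.add_sum_erase _ _ (Finset.mem_univ (y i)), h4, h3, Finset.sum_neg_distrib]
    simp only [mul_sub, mul_add, Finset.sum_sub_distrib, Finset.sum_add_distrib, Finset.sum_mul]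
    ring
  have h5 : ∀ i, C * (-(dualAlpha y αt i (y i)) / C * t i - ℓ (t i))
      = -(dualAlpha y αt i (y i) * t i) - C * ℓ (t i) := by
    intro i
    field_simp
  simp only [h1, h2]
  rw [Finset.mul_sum _ _ C, Finset.mul_sum _ _ C]
  simp only [h5, Finset.sum_sub_distrib, Finset.sum_add_distrib, Finset.sum_neg_distrib,
    ← Finset.mul_sum]
  rw [Finset.sum_comm (f := fun i j => dualAlpha y αt i j * ⟪w j, v i⟫)]
  ring

/-- **Partial dualization of the `ℓ_p`-norm multi-class SVM with fixed class weights `β`**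
(Problem 4): the infimum of the Lagrangian over the primal variables `(w, t)` equals
`−(1/2) Σ_j β_j ‖Σ_i α_{ij} v_i‖² − C Σ_i ℓ*(−α_{i y_i}/C)` in the extended reals; moreover,
for each fixed `t` the infimum over `w` is attained at `w_j = β_j Σ_i α_{ij} v_i`. -/
theorem lp_svm_partial_dual {E : Type*} [NormedAddCommGroup E] [InnerProductSpace ℝ E]
    (c n : ℕ) (hc : 1 ≤ c) (hn : 1 ≤ n)
    (v : Fin n → E) (y : Fin n → Fin c) (C : ℝ) (hC : 0 < C)
    (β : Fin c → ℝ) (hβ : ∀ j, 0 < β j) (ℓ : ℝ → ℝ)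
    (αt : Fin n → Fin c → ℝ) (hαt : ∀ i j, j ≠ y i → 0 ≤ αt i j) :
    ((⨅ wt : (Fin c → E) × (Fin n → ℝ),
      ((∑ j, ‖wt.1 j‖ ^ 2 / (2 * β j) + C * ∑ i, ℓ (wt.2 i)
        + ∑ i, ∑ j ∈ Finset.univ.erase (y i),
            αt i j * (wt.2 i + ⟪wt.1 j, v i⟫ - ⟪wt.1 (y i), v i⟫) : ℝ) : EReal)) =
    ((-(1 / 2) * ∑ j, β j * ‖∑ i, dualAlpha y αt i j • v i‖ ^ 2 : ℝ) : EReal)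
      - ((C : ℝ) : EReal) * ∑ i, fenchelConj ℓ (-(dualAlpha y αt i (y i)) / C)) ∧
    (∀ t : Fin n → ℝ, IsMinOn
      (fun w : Fin c → E =>
        ∑ j, ‖w j‖ ^ 2 / (2 * β j) + C * ∑ i, ℓ (t i)
          + ∑ i, ∑ j ∈ Finset.univ.erase (y i),
              αt i j * (t i + ⟪w j, v i⟫ - ⟪w (y i), v i⟫))
      Set.univ
      (fun j => β j • ∑ i, dualAlpha y αt i j • v i)) := by
  have hnn : ∀ w : Fin c → E,
      0 ≤ ∑ j, ‖w j - β j • ∑ i, dualAlpha y αt i j • v i‖ ^ 2 / (2 * β j) := fun w =>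
    Finset.sum_nonneg fun j _ => div_nonneg (sq_nonneg _) (by linarith [hβ j])
  constructor
  · simp only [lagrangian_aux c n v y C hC β hβ ℓ αt, fenchelConj]
    rw [sum_iSup_aux (fun i x => -(dualAlpha y αt i (y i)) / C * x - ℓ x)]
    apply le_antisymm
    · rw [le_sub_mul_iff_aux _ _ _ _ hC]
      apply iSup_le
      intro t
      rw [← le_sub_mul_iff_aux _ _ _ _ hC]
      refine (iInf_le _ ((fun j => β j • ∑ i, dualAlpha y αt i j • v i), t)).trans ?_
      rw [← EReal.coe_mul, ← EReal.coe_sub, EReal.coe_le_coe_iff]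
      simp
    · apply le_iInf
      rintro ⟨w, t⟩
      have h : ((-(1 / 2) * ∑ j, β j * ‖∑ i, dualAlpha y αt i j • v i‖ ^ 2
          - C * ∑ i, (-(dualAlpha y αt i (y i)) / C * t i - ℓ (t i)) : ℝ) : EReal) ≤
          ((∑ j, ‖w j - β j • ∑ i, dualAlpha y αt i j • v i‖ ^ 2 / (2 * β j)
          + (-(1 / 2) * ∑ j, β j * ‖∑ i, dualAlpha y αt i j • v i‖ ^ 2
          - C * ∑ i, (-(dualAlpha y αt i (y i)) / C * t i - ℓ (t i))) : ℝ) : EReal) := by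
        rw [EReal.coe_le_coe_iff]
        linarith [hnn w]
      refine le_trans ?_ h
      rw [EReal.coe_sub, EReal.coe_mul C]
      apply EReal.sub_le_sub le_rfl
      apply mul_le_mul_of_nonneg_left _ (by exact_mod_cast hC.le)
      exact le_iSup (fun t : Fin n → ℝ =>
        ((∑ i, (-(dualAlpha y αt i (y i)) / C * t i - ℓ (t i)) : ℝ) : EReal)) t
  · intro t w _
    simp only [Set.mem_setOf_eq, lagrangian_aux c n v y C hC β hβ ℓ αt]
    have := hnn w
    simpa using this
end

section
/- Let E be a real Hilbert space, c ≥ 1, 1 ≤ p < 2, p̄ = p/(2−p), and let w = (w_1,…,w_c) ∈ E^c with w_j ≠ 0 for every j. Then for every β = (β_1,…,β_c) with β_j > 0 for all j and Σ_{j=1}^c β_j^{p̄} ≤ 1, one has Σ_{j=1}^c ‖w_j‖²/β_j ≥ (Σ_{j=1}^c ‖w_j‖^p)^{2/p} = ‖w‖_{2,p}². Moreover, the choice β_j = ‖w_j‖^{2−p} · (Σ_{j̃=1}^c ‖w_{j̃}‖^p)^{(p−2)/p} satisfies β_j > 0 and Σ_{j=1}^c β_j^{p̄} = 1 and attains equality: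 Σ_{j=1}^c ‖w_j‖²/β_j = ‖w‖_{2,p}². -/
/-- **Analytic update of the class weights** (Proposition 5): for `1 ≤ p < 2`,
`p̄ = p/(2−p)`, and any admissible weights `β` (positive with `Σ_j β_j^p̄ ≤ 1`), one has
`Σ_j ‖w_j‖²/β_j ≥ ‖w‖_{2,p}²`; equality is attained at
`β_j = ‖w_j‖^{2−p}(Σ_{j̃} ‖w_{j̃}‖^p)^{(p−2)/p}`, which is admissible with `Σ_j β_j^p̄ = 1`. -/
theorem class_weights_update {E : Type*} [NormedAddCommGroup E]
    (c : ℕ) (hc : 1 ≤ c) (p : ℝ) (hp₁ : 1 ≤ p) (hp₂ : p < 2)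
    (w : Fin c → E) (hw : ∀ j, w j ≠ 0) :
    (∀ β : Fin c → ℝ, (∀ j, 0 < β j) → (∑ j, β j ^ (p / (2 - p))) ≤ 1 →
      (∑ j, ‖w j‖ ^ 2 / β j) ≥ ((∑ j, ‖w j‖ ^ p) ^ (1 / p)) ^ 2) ∧
    (∀ j : Fin c,
      0 < ‖w j‖ ^ (2 - p) * (∑ j', ‖w j'‖ ^ p) ^ ((p - 2) / p)) ∧
    (∑ j, (‖w j‖ ^ (2 - p) * (∑ j', ‖w j'‖ ^ p) ^ ((p - 2) / p)) ^ (p / (2 - p))) = 1 ∧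
    (∑ j, ‖w j‖ ^ 2 / (‖w j‖ ^ (2 - p) * (∑ j', ‖w j'‖ ^ p) ^ ((p - 2) / p))) =
      ((∑ j, ‖w j‖ ^ p) ^ (1 / p)) ^ 2 := by
  have hp0 : 0 < p := by linarith
  have hq0 : 0 < 2 - p := by linarith
  have hx : ∀ j, 0 < ‖w j‖ := fun j => norm_pos_iff.mpr (hw j)
  have hS : 0 < ∑ j, ‖w j‖ ^ p := by
    refine Finset.sum_pos (fun j _ => Real.rpow_pos_of_pos (hx j) _) ⟨⟨0, hc⟩, Finset.mem_univ _⟩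
  refine ⟨?_, ?_, ?_, ?_⟩
  · intro β hβ hB
    have hA : 0 ≤ ∑ j, ‖w j‖ ^ 2 / β j :=
      Finset.sum_nonneg fun j _ => div_nonneg (by positivity) (hβ j).le
    have hB0 : 0 ≤ ∑ j, β j ^ (p / (2 - p)) :=
      Finset.sum_nonneg fun j _ => Real.rpow_nonneg (hβ j).le _
    have hpq : (2 / p).HolderConjugate (2 / (2 - p)) := by
      rw [Real.holderConjugate_iff]
      refine ⟨by rw [lt_div_iff₀ hp0]; linarith, ?_⟩
      field_simp
      ring
    have key := Real.inner_le_Lp_mul_Lq_of_nonneg Finset.univ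
      (f := fun j => (‖w j‖ ^ 2 / β j) ^ (p / 2)) (g := fun j => β j ^ (p / 2)) hpq
      (fun j _ => Real.rpow_nonneg (div_nonneg (by positivity) (hβ j).le) _)
      (fun j _ => Real.rpow_nonneg (hβ j).le _)
    have e1 : ∀ j, (‖w j‖ ^ 2 / β j) ^ (p / 2) * β j ^ (p / 2) = ‖w j‖ ^ p := by
      intro j
      rw [← Real.mul_rpow (div_nonneg (by positivity) (hβ j).le) (hβ j).le,
        div_mul_cancel₀ _ (hβ j).ne', ← Real.rpow_natCast, ← Real.rpow_mul (hx j).le]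
      congr 1
      push_cast
      ring
    have e2 : ∀ j, ((‖w j‖ ^ 2 / β j) ^ (p / 2)) ^ (2 / p) = ‖w j‖ ^ 2 / β j := by
      intro j
      rw [← Real.rpow_mul (div_nonneg (by positivity) (hβ j).le)]
      rw [show p / 2 * (2 / p) = 1 by field_simp, Real.rpow_one]
    have e3 : ∀ j, (β j ^ (p / 2)) ^ (2 / (2 - p)) = β j ^ (p / (2 - p)) := by
      intro j
      rw [← Real.rpow_mul (hβ j).le]
      congr 1
      field_simp
    simp only [e1, e2, e3] at key
    have h1 : (∑ j, β j ^ (p / (2 - p))) ^ (1 / (2 / (2 - p))) ≤ 1 :=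
      Real.rpow_le_one hB0 hB (by positivity)
    have h2 : ∑ j, ‖w j‖ ^ p ≤ (∑ j, ‖w j‖ ^ 2 / β j) ^ (1 / (2 / p)) :=
      key.trans (mul_le_of_le_one_right (Real.rpow_nonneg hA _) h1)
    have h3 := Real.rpow_le_rpow hS.le h2 (z := 2 / p) (by positivity)
    rw [← Real.rpow_mul hA, show 1 / (2 / p) * (2 / p) = 1 by field_simp, Real.rpow_one] at h3
    rw [← Real.rpow_natCast, ← Real.rpow_mul hS.le]
    convert h3 using 2
    push_cast
    ring
  · intro j
    exact mul_pos (Real.rpow_pos_of_pos (hx j) _) (Real.rpow_pos_of_pos hS _)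
  · generalize hT : ∑ j, ‖w j‖ ^ p = S at hS
    have e : ∀ j, (‖w j‖ ^ (2 - p) * S ^ ((p - 2) / p)) ^ (p / (2 - p)) = ‖w j‖ ^ p * S⁻¹ := by
      intro j
      rw [Real.mul_rpow (Real.rpow_nonneg (hx j).le _) (Real.rpow_nonneg hS.le _),
        ← Real.rpow_mul (hx j).le, ← Real.rpow_mul hS.le, ← Real.rpow_neg_one S]
      congr 2
      · field_simp
      · field_simp
        ring
    simp only [e]
    rw [← Finset.sum_mul, hT, mul_inv_cancel₀ hS.ne']
  · generalize hT : ∑ j, ‖w j‖ ^ p = S at hS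
    have e : ∀ j, ‖w j‖ ^ 2 / (‖w j‖ ^ (2 - p) * S ^ ((p - 2) / p))
        = ‖w j‖ ^ p * S ^ ((2 - p) / p) := by
      intro j
      rw [div_eq_iff (mul_pos (Real.rpow_pos_of_pos (hx j) _) (Real.rpow_pos_of_pos hS _)).ne',
        mul_mul_mul_comm, ← Real.rpow_add (hx j), ← Real.rpow_add hS,
        show p + (2 - p) = ((2 : ℕ) : ℝ) by push_cast; ring,
        show (2 - p) / p + (p - 2) / p = 0 by ring, Real.rpow_zero, Real.rpow_natCast, mul_one]
    simp only [e]
    rw [← Finset.sum_mul, hT, ← Real.rpow_natCast, ← Real.rpow_mul hS.le,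
      ← Real.rpow_one_add' hS.le (by positivity)]
    congr 1
    push_cast
    field_simp
    ring
end
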